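/- arXiv:1208.0509 — 3 statements merged into one kernel-verified Lean document; each statement's English description precedes it below -/
import Mathlib

section
/- Let d ≥ 2, let r ≥ 2d+2 be a prime, and let N = (d+1)(r−1). Let f : Δ_N → ℝ^d be an affine map on the standard N-simplex whose N+1 vertices are colored with d+2 colors with color classes satisfying |C_0| = … = |C_d| = r−1 and |C_{d+1}| = 1, and suppose the N+1 image points f(v) of the vertices are in general position. Then T(f) ≥ 2^{r−2d−1}. -/
open scoped Classical

/-- A set of points in `ℝ^d` is in *general position* if for every `j < d`,
no `j + 2` of the points lie on a common `j`-dimensional affine subspace. -/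
def GenPos (d : ℕ) (P : Set (Fin d → ℝ)) : Prop :=
  ∀ j < d, ∀ S : Finset (Fin d → ℝ), ↑S ⊆ P → S.card = j + 2 →
    ¬ ∃ A : AffineSubspace ℝ (Fin d → ℝ),
        Module.finrank ℝ A.direction = j ∧ (S : Set (Fin d → ℝ)) ⊆ (A : Set (Fin d → ℝ))

/-- `tverbergCount d N r f c` is the number of unordered colored Tverberg partitions for the
affine map `f` on the standard `N`-simplex (vertex `i` being `Pi.single i 1`), whose vertices
are colored by `c` with `d + 2` colors: partitions of the `N + 1` vertices into `r` rainbow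
blocks whose images under `f` have intersecting convex hulls. -/
noncomputable def tverbergCount (d N r : ℕ) (f : (Fin (N + 1) → ℝ) →ᵃ[ℝ] (Fin d → ℝ))
    (c : Fin (N + 1) → Fin (d + 2)) : ℕ :=
  Set.ncard { P : Finset (Finset (Fin (N + 1))) |
    P.card = r ∧
    (∀ B ∈ P, ∀ B' ∈ P, B ≠ B' → Disjoint B B') ∧
    P.biUnion id = Finset.univ ∧
    (∀ B ∈ P, ∀ j : Fin (d + 2), (B.filter fun i => c i = j).card ≤ 1) ∧
    ∃ x : Fin d → ℝ, ∀ B ∈ P,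
      x ∈ convexHull ℝ ((fun i => f (Pi.single i 1)) '' (B : Set (Fin (N + 1)))) }

/-- The one-parameter counting lemma behind the cocycle identity. -/
theorem interval_count {J : Type*} (F : Finset J) (α β : J → ℝ)
    (hpos : ∃ i ∈ F, 0 < α i)
    (H : ∀ t : ℝ, 0 ≤ t → (∀ i ∈ F, 0 ≤ β i - t * α i) →
      (∀ i ∈ F, ∀ j ∈ F, β i - t * α i = 0 → β j - t * α j = 0 → i = j) ∧
      (t = 0 → ∀ i ∈ F, β i ≠ 0)) :
    (if ∀ i ∈ F, 0 < β i then (1 : ℤ) else 0) =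
      ∑ j ∈ F, if (∃ t : ℝ, 0 < t ∧ t * α j = β j ∧ ∀ i ∈ F, i ≠ j → 0 < β i - t * α i)
        then (SignType.sign (α j) : ℤ) else 0 := by
  set T : J → Prop := fun j => ∃ t : ℝ, 0 < t ∧ t * α j = β j ∧
    ∀ i ∈ F, i ≠ j → 0 < β i - t * α i with hT
  -- tight feasible times give T
  have tight : ∀ j ∈ F, ∀ t : ℝ, 0 ≤ t → (∀ i ∈ F, 0 ≤ β i - t * α i) → t * α j = β j → T j := by
    intro j hj t ht hf hj'
    obtain ⟨h1, h2⟩ := H t ht hf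
    refine ⟨t, ?_, hj', ?_⟩
    · rcases ht.lt_or_eq with h | h
      · exact h
      · exfalso
        refine h2 h.symm j hj ?_
        rw [← hj', ← h]; ring
    · intro i hi hij
      rcases (hf i hi).lt_or_eq with h | h
      · exact h
      · exact absurd (h1 i hi j hj h.symm (by rw [hj']; ring)) hij
  -- pick the minimal ratio
  have hi : ∀ t : ℝ, 0 ≤ t → (∀ i ∈ F, 0 ≤ β i - t * α i) → ∃ j ∈ F, 0 < α j ∧ T j := by
    intro t ht hf
    obtain ⟨i1, hi1, hi1'⟩ := hpos
    obtain ⟨j, hj, hmin⟩ := Finset.exists_min_image (F.filter fun i => 0 < α i)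
      (fun i => β i / α i) ⟨i1, by simp [hi1, hi1']⟩
    rw [Finset.mem_filter] at hj
    have hle : t ≤ β j / α j := by
      rw [le_div_iff₀ hj.2]; linarith [hf j hj.1]
    refine ⟨j, hj.1, hj.2, tight j hj.1 (β j / α j) (ht.trans hle) ?_ ?_⟩
    · intro i hiF
      rcases lt_or_ge 0 (α i) with h | h
      · have := hmin i (by simp [hiF, h])
        rw [le_div_iff₀ h] at this
        linarith
      · have := hf i hiF
        nlinarith
    · field_simp [hj.2.ne']
  have uniqp : ∀ j ∈ F, ∀ j' ∈ F, 0 < α j → 0 < α j' → T j → T j' → j = j' := by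
    rintro j hj j' hj' hp hp' ⟨t, ht, h1, h2⟩ ⟨t', ht', h1', h2'⟩
    by_contra hne
    have a1 := h2 j' hj' (Ne.symm hne)
    have a2 := h2' j hj hne
    rw [← h1'] at a1
    rw [← h1] at a2
    have b1 : t < t' := by by_contra hh; nlinarith
    have b2 : t' < t := by by_contra hh; nlinarith
    linarith
  have uniqn : ∀ j ∈ F, ∀ j' ∈ F, α j < 0 → α j' < 0 → T j → T j' → j = j' := by
    rintro j hj j' hj' hp hp' ⟨t, ht, h1, h2⟩ ⟨t', ht', h1', h2'⟩
    by_contra hne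
    have a1 := h2 j' hj' (Ne.symm hne)
    have a2 := h2' j hj hne
    rw [← h1'] at a1
    rw [← h1] at a2
    have b1 : t' < t := by by_contra hh; nlinarith
    have b2 : t < t' := by by_contra hh; nlinarith
    linarith
  have feas : ∀ j ∈ F, T j → ∃ t : ℝ, 0 < t ∧ t * α j = β j ∧ ∀ i ∈ F, 0 ≤ β i - t * α i := by
    rintro j hj ⟨t, ht, h1, h2⟩
    refine ⟨t, ht, h1, fun i hi' => ?_⟩
    by_cases hij : i = j
    · subst hij; rw [h1]; simp
    · exact (h2 i hi' hij).le
  have split : (∑ j ∈ F, if T j then (SignType.sign (α j) : ℤ) else 0) =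
      ((F.filter fun j => 0 < α j ∧ T j).card : ℤ) - ((F.filter fun j => α j < 0 ∧ T j).card : ℤ) := by
    rw [Finset.card_filter, Finset.card_filter]
    push_cast
    rw [← Finset.sum_sub_distrib]
    refine Finset.sum_congr rfl fun j _ => ?_
    by_cases hTj : T j
    · rcases lt_trichotomy (α j) 0 with h | h | h
      · simp [hTj, h, h.not_gt]
      · simp [hTj, h]
      · simp [hTj, h, h.not_gt]
    · simp [hTj]
  have cp : (F.filter fun j => 0 < α j ∧ T j).card = if (∃ j ∈ F, 0 < α j ∧ T j) then 1 else 0 := by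
    split_ifs with h
    · obtain ⟨j, hj, h1, h2⟩ := h
      rw [Finset.card_eq_one]
      refine ⟨j, ?_⟩
      ext i
      simp only [Finset.mem_filter, Finset.mem_singleton]
      constructor
      · rintro ⟨a, b, c⟩; exact uniqp i a j hj b h1 c h2
      · rintro rfl; exact ⟨hj, h1, h2⟩
    · rw [Finset.card_eq_zero, Finset.filter_eq_empty_iff]
      exact fun j hj hh => h ⟨j, hj, hh⟩
  have cn : (F.filter fun j => α j < 0 ∧ T j).card = if (∃ j ∈ F, α j < 0 ∧ T j) then 1 else 0 := by
    split_ifs with h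
    · obtain ⟨j, hj, h1, h2⟩ := h
      rw [Finset.card_eq_one]
      refine ⟨j, ?_⟩
      ext i
      simp only [Finset.mem_filter, Finset.mem_singleton]
      constructor
      · rintro ⟨a, b, c⟩; exact uniqn i a j hj b h1 c h2
      · rintro rfl; exact ⟨hj, h1, h2⟩
    · rw [Finset.card_eq_zero, Finset.filter_eq_empty_iff]
      exact fun j hj hh => h ⟨j, hj, hh⟩
  rw [split, cp, cn]
  by_cases hb : ∀ i ∈ F, 0 < β i
  · have h1 := hi 0 le_rfl (fun i hi' => by simpa using (hb i hi').le)
    have h2 : ¬ ∃ j ∈ F, α j < 0 ∧ T j := by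
      rintro ⟨j, hj, hn, t, ht, he, -⟩
      have := hb j hj
      nlinarith
    rw [if_pos hb, if_pos h1, if_neg h2]; rfl
  · by_cases hp : ∃ j ∈ F, 0 < α j ∧ T j
    · have hn : ∃ j ∈ F, α j < 0 ∧ T j := by
        obtain ⟨j, hj, hpj, hTj⟩ := hp
        obtain ⟨t, ht, he, hf⟩ := feas j hj hTj
        push Not at hb
        obtain ⟨i, hiF, hib⟩ := hb
        have hai : α i < 0 := by
          by_contra hcon
          push Not at hcon
          have h0 := hf i hiF
          have h3 : β i - t * α i = 0 := by nlinarith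
          have := (H t ht.le hf).1 i hiF j hj h3 (by rw [he]; ring)
          subst this
          nlinarith
        obtain ⟨l, hl, hmax⟩ := Finset.exists_max_image (F.filter fun i => α i < 0)
          (fun i => β i / α i) ⟨i, by simp [hiF, hai]⟩
        rw [Finset.mem_filter] at hl
        have hL0 : 0 ≤ β l / α l :=
          le_trans (div_nonneg_of_nonpos hib hai.le) (hmax i (by simp [hiF, hai]))
        have hLt : β l / α l ≤ t := by
          rw [div_le_iff_of_neg hl.2]; linarith [hf l hl.1]
        refine ⟨l, hl.1, hl.2, tight l hl.1 _ hL0 ?_ ?_⟩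
        · intro k hk
          rcases lt_or_ge (α k) 0 with h | h
          · have := hmax k (by simp [hk, h])
            rw [div_le_iff_of_neg h] at this
            linarith
          · have := hf k hk
            nlinarith
        · field_simp [hl.2.ne]
      simp [hb, hp, hn]
    · have hn : ¬ ∃ j ∈ F, α j < 0 ∧ T j := by
        rintro ⟨j, hj, hpj, hTj⟩
        obtain ⟨t, ht, he, hf⟩ := feas j hj hTj
        exact hp (hi t ht.le hf)
      simp [hb, hp, hn]

/-- Signed indicator of `b` lying in the open cone of the rows of `U` (rows outside `F` being
free directions). -/
noncomputable def chi {J : Type*} [Fintype J] [DecidableEq J] (F : Finset J) (b : J → ℝ)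
    (U : Matrix J J ℝ) : ℤ :=
  if ∃ l : J → ℝ, Matrix.vecMul l U = b ∧ ∀ j ∈ F, 0 < l j then (SignType.sign U.det : ℤ) else 0

/-- `b` is not on a wall of the rows of `U` together with `a`. -/
def WallFree {J : Type*} [Fintype J] (F : Finset J) (b : J → ℝ) (U : Matrix J J ℝ) (a : J → ℝ) :
    Prop :=
  ∀ (l : J → ℝ) (t : ℝ), (∀ j ∈ F, 0 ≤ l j) → 0 ≤ t → Matrix.vecMul l U + t • a = b →
    (∀ i ∈ F, ∀ j ∈ F, l i = 0 → l j = 0 → i = j) ∧ (t = 0 → ∀ i ∈ F, l i ≠ 0)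

theorem vecMul_updateRow {J : Type*} [Fintype J] [DecidableEq J] (U : Matrix J J ℝ) (a : J → ℝ)
    (l : J → ℝ) (j : J) :
    Matrix.vecMul l (U.updateRow j a) = Matrix.vecMul (Function.update l j 0) U + l j • a := by
  ext k
  simp only [Matrix.vecMul, dotProduct, Pi.add_apply, Pi.smul_apply, smul_eq_mul]
  rw [← Finset.add_sum_erase _ _ (Finset.mem_univ j),
    ← Finset.add_sum_erase _ (fun x => Function.update l j 0 x * U x k) (Finset.mem_univ j)]
  simp only [Matrix.updateRow_self, Function.update_self, zero_mul, zero_add]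
  rw [add_comm]
  congr 1
  refine Finset.sum_congr rfl fun i hi => ?_
  rw [Finset.mem_erase] at hi
  rw [Matrix.updateRow_ne hi.1, Function.update_of_ne hi.1]

theorem chi_cocycle_nonsing {J : Type*} [Fintype J] [DecidableEq J] (F : Finset J) (b : J → ℝ)
    (U : Matrix J J ℝ) (a : J → ℝ) (φ : J → ℝ) (hU : ∀ j ∈ F, 0 < U j ⬝ᵥ φ)
    (hfree : ∀ j ∉ F, U j ⬝ᵥ φ = 0) (ha : 0 < a ⬝ᵥ φ) (H : WallFree F b U a) (hdet : U.det ≠ 0) :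
    chi F b U = ∑ j ∈ F, chi F b (U.updateRow j a) := by
  have hu : IsUnit U.det := isUnit_iff_ne_zero.mpr hdet
  set α := Matrix.vecMul a U⁻¹ with hα
  set β := Matrix.vecMul b U⁻¹ with hβ
  have ea : Matrix.vecMul α U = a := by
    rw [hα, Matrix.vecMul_vecMul, Matrix.nonsing_inv_mul _ hu, Matrix.vecMul_one]
  have eb : Matrix.vecMul β U = b := by
    rw [hβ, Matrix.vecMul_vecMul, Matrix.nonsing_inv_mul _ hu, Matrix.vecMul_one]
  have inj : ∀ x y : J → ℝ, Matrix.vecMul x U = Matrix.vecMul y U → x = y := by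
    intro x y h
    have := congrArg (fun z => Matrix.vecMul z U⁻¹) h
    simpa [Matrix.vecMul_vecMul, Matrix.mul_nonsing_inv _ hu] using this
  have hdetj : ∀ j, (U.updateRow j a).det = α j * U.det := by
    intro j
    have : a = ∑ k, α k • U k := by
      rw [← ea]; ext k; simp [Matrix.vecMul, dotProduct]
    conv_lhs => rw [this]
    rw [Matrix.det_updateRow_sum, smul_eq_mul]
  have hφ : ∀ x : J → ℝ, Matrix.vecMul x U ⬝ᵥ φ = ∑ j ∈ F, x j * (U j ⬝ᵥ φ) := by
    intro x
    rw [← Matrix.dotProduct_mulVec, dotProduct]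
    rw [← Finset.sum_subset (Finset.subset_univ F)]
    · rfl
    · intro j _ hj
      have : (U.mulVec φ) j = U j ⬝ᵥ φ := rfl
      rw [this, hfree j hj, mul_zero]
  have hpos : ∃ i ∈ F, 0 < α i := by
    by_contra hcon
    push Not at hcon
    rw [← ea, hφ] at ha
    have : ∑ j ∈ F, α j * (U j ⬝ᵥ φ) ≤ 0 :=
      Finset.sum_nonpos fun j hj => mul_nonpos_of_nonpos_of_nonneg (hcon j hj) (hU j hj).le
    linarith
  have key := interval_count F α β hpos (by
    intro t ht hf
    have := H (β - t • α) t (by simpa using hf) ht (by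
      rw [Matrix.sub_vecMul, Matrix.smul_vecMul, ea, eb]; simp)
    simp only [Pi.sub_apply, Pi.smul_apply, smul_eq_mul] at this
    refine ⟨this.1, fun h0 i hi => ?_⟩
    have := this.2 h0 i hi
    simpa [h0] using this)
  have e1 : chi F b U = (if ∀ i ∈ F, 0 < β i then (1 : ℤ) else 0) * (SignType.sign U.det : ℤ) := by
    unfold chi
    have : (∃ l : J → ℝ, Matrix.vecMul l U = b ∧ ∀ j ∈ F, 0 < l j) ↔ ∀ i ∈ F, 0 < β i := by
      constructor
      · rintro ⟨l, h1, h2⟩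
        have := inj l β (h1.trans eb.symm)
        rwa [← this]
      · intro h; exact ⟨β, eb, h⟩
    simp only [this]
    split_ifs <;> simp
  have e2 : chi F b U = (∑ j ∈ F, if (∃ t : ℝ, 0 < t ∧ t * α j = β j ∧
      ∀ i ∈ F, i ≠ j → 0 < β i - t * α i) then (SignType.sign (α j) : ℤ) else 0) *
      (SignType.sign U.det : ℤ) := by
    rw [e1]
    congr 1
    convert key
  rw [e2, Finset.sum_mul]
  refine Finset.sum_congr rfl fun j hj => ?_
  unfold chi
  have : (∃ l : J → ℝ, Matrix.vecMul l (U.updateRow j a) = b ∧ ∀ j ∈ F, 0 < l j) ↔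
      (∃ t : ℝ, 0 < t ∧ t * α j = β j ∧ ∀ i ∈ F, i ≠ j → 0 < β i - t * α i) := by
    constructor
    · rintro ⟨l, h1, h2⟩
      rw [vecMul_updateRow] at h1
      have h3 := inj (Function.update l j 0 + l j • α) β (by
        rw [Matrix.add_vecMul, Matrix.smul_vecMul, ea, h1, eb])
      refine ⟨l j, h2 j hj, ?_, ?_⟩
      · have := congrFun h3 j; simpa using this
      · intro i hi hij
        have := congrFun h3 i
        simp [hij] at this
        rw [← this]; simpa using h2 i hi
    · rintro ⟨t, h1, h2, h3⟩
      refine ⟨Function.update (β - t • α) j t, ?_, ?_⟩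
      · rw [vecMul_updateRow]
        simp only [Function.update_idem, Function.update_self]
        have : Function.update (β - t • α) j 0 = β - t • α := by
          ext i
          by_cases hij : i = j
          · subst hij; simp [h2]
          · simp [hij]
        rw [this, Matrix.sub_vecMul, Matrix.smul_vecMul, ea, eb]; simp
      · intro i hi
        by_cases hij : i = j
        · subst hij; simpa using h1
        · simpa [hij] using h3 i hi hij
  simp only [this, hdetj, sign_mul]
  split_ifs <;> simp

theorem chi_permute {J : Type*} [Fintype J] [DecidableEq J] (F : Finset J) (b : J → ℝ)
    (U : Matrix J J ℝ) (i j : J) (hi : i ∈ F) (hj : j ∈ F) (hij : i ≠ j) :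
    chi F b (U.submatrix (Equiv.swap i j) id) = - chi F b U := by
  unfold chi
  have hv : ∀ l : J → ℝ, Matrix.vecMul l (U.submatrix (Equiv.swap i j) id) =
      Matrix.vecMul (l ∘ Equiv.swap i j) U := by
    intro l
    ext k
    simp only [Matrix.vecMul, dotProduct, Matrix.submatrix_apply, id, Function.comp]
    exact (Equiv.sum_comp (Equiv.swap i j) (fun x => l x * U (Equiv.swap i j x) k)).symm.trans
      (by simp)
  have hF : ∀ x ∈ F, Equiv.swap i j x ∈ F := by
    intro x hx
    rw [Equiv.swap_apply_def]; split_ifs <;> assumption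
  have : (∃ l : J → ℝ, Matrix.vecMul l (U.submatrix (Equiv.swap i j) id) = b ∧ ∀ j ∈ F, 0 < l j) ↔
      ∃ l : J → ℝ, Matrix.vecMul l U = b ∧ ∀ j ∈ F, 0 < l j := by
    constructor
    · rintro ⟨l, h1, h2⟩
      exact ⟨l ∘ Equiv.swap i j, by rw [← hv, h1], fun x hx => h2 _ (hF x hx)⟩
    · rintro ⟨l, h1, h2⟩
      refine ⟨l ∘ Equiv.swap i j, ?_, fun x hx => h2 _ (hF x hx)⟩
      rw [hv, ← h1]
      congr 1
      ext x; simp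
  simp only [this]
  have hd : (U.submatrix (Equiv.swap i j) id).det = - U.det := by
    rw [Matrix.det_permute]; simp [Equiv.Perm.sign_swap hij]
  rw [hd, Left.sign_neg]
  split_ifs <;> simp

/-- The cocycle identity. -/
theorem chi_cocycle {J : Type*} [Fintype J] [DecidableEq J] (F : Finset J) (b : J → ℝ)
    (U : Matrix J J ℝ) (a : J → ℝ) (φ : J → ℝ) (hU : ∀ j ∈ F, 0 < U j ⬝ᵥ φ)
    (hfree : ∀ j ∉ F, U j ⬝ᵥ φ = 0) (ha : 0 < a ⬝ᵥ φ) (H : WallFree F b U a) :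
    chi F b U = ∑ j ∈ F, chi F b (U.updateRow j a) := by
  by_cases hdet : U.det = 0
  swap
  · exact chi_cocycle_nonsing F b U a φ hU hfree ha H hdet
  have h0 : chi F b U = 0 := by unfold chi; simp [hdet]
  by_cases hall : ∀ j ∈ F, (U.updateRow j a).det = 0
  · rw [h0]
    refine (Finset.sum_eq_zero fun j hj => ?_).symm
    unfold chi; simp [hall j hj]
  push Not at hall
  obtain ⟨j, hj, hjd⟩ := hall
  set V := U.updateRow j a with hV
  have hVU : V.updateRow j (U j) = U := by
    rw [hV]; ext x y
    by_cases hx : x = j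
    · subst hx; simp
    · simp [Matrix.updateRow_ne hx]
  have hVrow : ∀ x, V x = if x = j then a else U x := by
    intro x
    ext y
    by_cases hx : x = j
    · subst hx; simp [hV]
    · simp [hV, Matrix.updateRow_ne hx, hx]
  have := chi_cocycle_nonsing F b V (U j) φ ?_ ?_ (hU j hj) ?_ hjd
  · rw [← Finset.add_sum_erase _ _ hj, hVU, h0, zero_add] at this
    rw [← Finset.add_sum_erase _ _ hj, ← hV, h0, this, ← Finset.sum_add_distrib]
    refine (Finset.sum_eq_zero fun i hi => ?_).symm
    rw [Finset.mem_erase] at hi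
    have e : V.updateRow i (U j) = (U.updateRow i a).submatrix (Equiv.swap i j) id := by
      ext x y
      simp only [Matrix.submatrix_apply, id]
      by_cases hxi : x = i
      · subst hxi
        simp [Matrix.updateRow_ne (Ne.symm hi.1)]
      · by_cases hxj : x = j
        · subst hxj
          simp [Matrix.updateRow_ne hxi, hV]
        · rw [Equiv.swap_apply_of_ne_of_ne hxi hxj, Matrix.updateRow_ne hxi,
            Matrix.updateRow_ne hxi, hV, Matrix.updateRow_ne hxj]
    rw [e, chi_permute F b _ i j hi.2 hj hi.1]
    ring
  · intro x hx
    rw [hVrow]; split_ifs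
    · exact ha
    · exact hU x hx
  · intro x hx
    rw [hVrow, if_neg (by rintro rfl; exact hx hj)]
    exact hfree x hx
  · intro l t hl ht he
    have h1 := H (Function.update l j t) (l j) ?_ (hl j hj) ?_
    · refine ⟨?_, ?_⟩
      · intro x hx y hy hlx hly
        by_cases hxj : x = j
        · subst hxj
          by_contra hne
          exact h1.2 hlx y hy (by simp [Ne.symm hne, hly])
        · by_cases hyj : y = j
          · subst hyj
            exact absurd (by simp [hxj, hlx]) (h1.2 hly x hx)
          · exact h1.1 x hx y hy (by simp [hxj, hlx]) (by simp [hyj, hly])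
      · intro ht0 x hx hlx
        by_cases hxj : x = j
        · subst hxj
          exact h1.2 hlx x hx (by simp [ht0])
        · exact hxj (h1.1 x hx j hj (by simp [hxj, hlx]) (by simp [ht0]))
    · intro x hx
      by_cases hxj : x = j
      · subst hxj; simpa using ht
      · simpa [hxj] using hl x hx
    · rw [← he, hV, vecMul_updateRow]
      have : Function.update l j t = Function.update l j 0 + t • Pi.single j 1 := by
        ext x
        by_cases hxj : x = j
        · subst hxj; simp
        · simp [hxj]
      rw [this, Matrix.add_vecMul, Matrix.smul_vecMul, Matrix.single_one_vecMul]
      have hr : U.row j = U j := rfl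
      rw [hr]
      abel

theorem chi_mul {J : Type*} [Fintype J] [DecidableEq J] (F : Finset J) (b : J → ℝ)
    (U G : Matrix J J ℝ) (hG : G.det ≠ 0) :
    chi F (Matrix.vecMul b G) (U * G) = chi F b U * SignType.sign G.det := by
  unfold chi
  have : (∃ l : J → ℝ, Matrix.vecMul l (U * G) = Matrix.vecMul b G ∧ ∀ j ∈ F, 0 < l j) ↔
      ∃ l : J → ℝ, Matrix.vecMul l U = b ∧ ∀ j ∈ F, 0 < l j := by
    have hu : IsUnit G.det := isUnit_iff_ne_zero.mpr hG
    refine exists_congr fun l => and_congr_left fun _ => ?_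
    rw [← Matrix.vecMul_vecMul]
    constructor
    · intro h
      have := congrArg (fun z => Matrix.vecMul z G⁻¹) h
      simpa [Matrix.vecMul_vecMul, Matrix.mul_nonsing_inv _ hu, Matrix.mul_assoc] using this
    · intro h; rw [h]
  simp only [this, Matrix.det_mul, sign_mul]
  split_ifs <;> simp

section Birch

variable {J I : Type*} [Fintype J] [DecidableEq J] [Fintype I] [DecidableEq I]

/-- Rainbow matchings of size `n` inside `Y`. -/
noncomputable def rmt (n : ℕ) (Y : J → Finset I) : Finset (Finset (J → I)) :=
  Finset.univ.filter fun S => S.card = n ∧ (∀ s ∈ S, ∀ j, s j ∈ Y j) ∧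
    ∀ s ∈ S, ∀ s' ∈ S, ∀ j, s j = s' j → s = s'

theorem mem_rmt {n : ℕ} {Y : J → Finset I} {S : Finset (J → I)} :
    S ∈ rmt n Y ↔ S.card = n ∧ (∀ s ∈ S, ∀ j, s j ∈ Y j) ∧
    ∀ s ∈ S, ∀ s' ∈ S, ∀ j, s j = s' j → s = s' := by
  simp [rmt]

/-- Weighted number of matchings. -/
noncomputable def Qw {A : Type*} [CommRing A] (w : (J → I) → A) (n : ℕ) (Y : J → Finset I) : A :=
  ∑ S ∈ rmt n Y, ∏ s ∈ S, w s

theorem Qw_congr {A : Type*} [CommRing A] (w w' : (J → I) → A) (n : ℕ) (Y : J → Finset I)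
    (h : ∀ s : J → I, (∀ j, s j ∈ Y j) → w s = w' s) : Qw w n Y = Qw w' n Y := by
  unfold Qw
  refine Finset.sum_congr rfl fun S hS => Finset.prod_congr rfl fun s hs => ?_
  exact h s ((mem_rmt.1 hS).2.1 s hs)

theorem Qw_split {A : Type*} [CommRing A] (w : (J → I) → A) (n : ℕ) (Y : J → Finset I) (j : J)
    (a : I) :
    Qw w (n + 1) Y = Qw w (n + 1) (Function.update Y j ((Y j).erase a)) +
      ∑ s ∈ (Fintype.piFinset Y).filter (fun s => s j = a),
        w s * Qw w n (fun i => (Y i).erase (s i)) := by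
  unfold Qw
  rw [← Finset.sum_filter_not_add_sum_filter (rmt (n + 1) Y) (fun S => ∃ s ∈ S, s j = a)]
  congr 1
  · refine Finset.sum_congr ?_ fun _ _ => rfl
    ext S
    simp only [Finset.mem_filter, mem_rmt]
    constructor
    · rintro ⟨⟨h1, h2, h3⟩, h4⟩
      refine ⟨h1, fun s hs i => ?_, h3⟩
      by_cases hi : i = j
      · subst hi
        simp only [Function.update_self, Finset.mem_erase]
        exact ⟨fun h => h4 ⟨s, hs, h⟩, h2 s hs i⟩
      · rw [Function.update_of_ne hi]; exact h2 s hs i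
    · rintro ⟨h1, h2, h3⟩
      refine ⟨⟨h1, fun s hs i => ?_, h3⟩, ?_⟩
      · have := h2 s hs i
        by_cases hi : i = j
        · subst hi
          simp only [Function.update_self, Finset.mem_erase] at this
          exact this.2
        · rwa [Function.update_of_ne hi] at this
      · rintro ⟨s, hs, hsa⟩
        have := h2 s hs j
        simp [hsa] at this
  · simp_rw [Finset.mul_sum]
    rw [Finset.sum_sigma']
    symm
    refine Finset.sum_bij (fun x _ => insert x.1 x.2) ?_ ?_ ?_ ?_
    · rintro ⟨s, S⟩ h
      simp only [Finset.mem_sigma, Finset.mem_filter, Fintype.mem_piFinset, mem_rmt,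
        Finset.mem_erase] at h ⊢
      obtain ⟨⟨h1, h2⟩, h3, h4, h5⟩ := h
      have hs : s ∉ S := fun hs => (h4 s hs j).1 rfl
      refine ⟨⟨by rw [Finset.card_insert_of_notMem hs, h3], ?_, ?_⟩, s, by simp, h2⟩
      · intro x hx i
        rcases Finset.mem_insert.1 hx with rfl | hx
        · exact h1 i
        · exact (h4 x hx i).2
      · intro x hx y hy i hxy
        rcases Finset.mem_insert.1 hx with hx | hx <;> rcases Finset.mem_insert.1 hy with hy | hy
        · rw [hx, hy]
        · rw [hx] at hxy; exact absurd hxy.symm (h4 y hy i).1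
        · rw [hy] at hxy; exact absurd hxy (h4 x hx i).1
        · exact h5 x hx y hy i hxy
    · rintro ⟨s, S⟩ h ⟨s', S'⟩ h' he
      simp only [Finset.mem_sigma, Finset.mem_filter, Fintype.mem_piFinset, mem_rmt,
        Finset.mem_erase] at h h' he
      have hs : s ∉ S := fun hs => (h.2.2.1 s hs j).1 rfl
      have hs' : s' ∉ S' := fun hs => (h'.2.2.1 s' hs j).1 rfl
      have e : s = s' := by
        have : s ∈ insert s' S' := by rw [← he]; simp
        rcases Finset.mem_insert.1 this with h0 | h0
        · exact h0
        · exact absurd (h.1.2.trans h'.1.2.symm) (h'.2.2.1 s h0 j).1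
      subst e
      have : S = S' := by
        rw [← Finset.erase_insert hs, he, Finset.erase_insert hs']
      rw [this]
    · intro S hS
      simp only [Finset.mem_filter, mem_rmt] at hS
      obtain ⟨⟨h1, h2, h3⟩, s, hs, hsa⟩ := hS
      refine ⟨⟨s, S.erase s⟩, ?_, ?_⟩
      · simp only [Finset.mem_sigma, Finset.mem_filter, Fintype.mem_piFinset, mem_rmt,
          Finset.mem_erase]
        refine ⟨⟨h2 s hs, hsa⟩, by rw [Finset.card_erase_of_mem hs, h1]; simp, ?_, ?_⟩
        · rintro x ⟨hx1, hx2⟩ i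
          exact ⟨fun h => hx1 (h3 x hx2 s hs i h), h2 x hx2 i⟩
        · rintro x ⟨hx1, hx2⟩ y ⟨hy1, hy2⟩ i hxy
          exact h3 x hx2 y hy2 i hxy
      · simp [Finset.insert_erase hs]
    · rintro ⟨s, S⟩ h
      simp only [Finset.mem_sigma, Finset.mem_filter, Fintype.mem_piFinset, mem_rmt,
        Finset.mem_erase] at h ⊢
      have hs : s ∉ S := fun hs => (h.2.2.1 s hs j).1 rfl
      rw [Finset.prod_insert hs]

theorem Qw_del {A : Type*} [CommRing A] (w : (J → I) → A) (n : ℕ) (Y : J → Finset I) (l : J) :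
    ∑ x ∈ Y l, Qw w n (Function.update Y l ((Y l).erase x)) =
      (((Y l).card - n : ℕ) : A) * Qw w n Y := by
  unfold Qw
  have h1 : ∀ x ∈ Y l, ∑ S ∈ rmt n (Function.update Y l ((Y l).erase x)), ∏ s ∈ S, w s =
      ∑ S ∈ rmt n Y, if x ∉ S.image (fun s => s l) then ∏ s ∈ S, w s else 0 := by
    intro x hx
    rw [← Finset.sum_filter]
    refine Finset.sum_congr ?_ fun _ _ => rfl
    ext S
    simp only [Finset.mem_filter, mem_rmt, Finset.mem_image]
    constructor
    · rintro ⟨h1, h2, h3⟩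
      refine ⟨⟨h1, fun s hs i => ?_, h3⟩, ?_⟩
      · have := h2 s hs i
        by_cases hi : i = l
        · subst hi
          simp only [Function.update_self, Finset.mem_erase] at this
          exact this.2
        · rwa [Function.update_of_ne hi] at this
      · rintro ⟨s, hs, hsa⟩
        have := h2 s hs l
        simp [hsa] at this
    · rintro ⟨⟨h1, h2, h3⟩, h4⟩
      refine ⟨h1, fun s hs i => ?_, h3⟩
      by_cases hi : i = l
      · subst hi
        simp only [Function.update_self, Finset.mem_erase]
        exact ⟨fun h => h4 ⟨s, hs, h⟩, h2 s hs i⟩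
      · rw [Function.update_of_ne hi]; exact h2 s hs i
  rw [Finset.sum_congr rfl h1, Finset.sum_comm, Finset.mul_sum]
  refine Finset.sum_congr rfl fun S hS => ?_
  rw [← Finset.sum_filter, Finset.sum_const, nsmul_eq_mul]
  congr 2
  obtain ⟨h1, h2, h3⟩ := mem_rmt.1 hS
  have : (Y l).filter (fun x => x ∉ S.image (fun s => s l)) = Y l \ S.image (fun s => s l) := by
    ext x; simp
  rw [this, Finset.card_sdiff_of_subset, Finset.card_image_of_injOn, h1]
  · intro s hs s' hs' h
    exact h3 s hs s' hs' l h
  · intro x hx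
    obtain ⟨s, hs, rfl⟩ := Finset.mem_image.1 hx
    exact h2 s hs l

/-- The matrix of a rainbow simplex. -/
def smat (p : J → I → J → ℝ) (s : J → I) : Matrix J J ℝ := fun j => p j (s j)

theorem smat_apply (p : J → I → J → ℝ) (s : J → I) (i k : J) : smat p s i k = p i (s i) k := rfl

/-- mod 2 indicator. -/
noncomputable def wt (b : J → ℝ) (p : J → I → J → ℝ) (s : J → I) : ZMod 2 :=
  ((chi Finset.univ b (smat p s) : ℤ) : ZMod 2)

theorem birch_aux (b φ : J → ℝ) (W : Set (J → ℝ)) (hφ : ∀ x ∈ W, 0 < x ⬝ᵥ φ)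
    (hW : ∀ (U : Matrix J J ℝ) (a : J → ℝ), (∀ j, U j ∈ W) → a ∈ W → WallFree Finset.univ b U a)
    (hJ : 2 ≤ Fintype.card J) (w0 : J → ℝ) (hw0 : w0 ∈ W) :
    ∀ (m n : ℕ) (Y : J → Finset I) (p : J → I → J → ℝ), (∀ j i, p j i ∈ W) →
      (∀ j, (Y j).card = n ∨ (Y j).card = n + 1) →
      (Finset.univ.filter fun j => (Y j).card = n).card = m → m + 1 ≤ n →
      Qw (wt b p) n Y = 0 := by
  intro m
  induction m using Nat.strong_induction_on with
  | _ m IH =>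
  intro n Y p hp hY hm hn
  -- moving one point
  have move : ∀ (p : J → I → J → ℝ), (∀ j i, p j i ∈ W) → ∀ (j : J) (a : I),
      Qw (wt b p) n Y = Qw (wt b (Function.update p j (Function.update (p j) a w0))) n Y := by
    intro p hp j a
    set p' := Function.update p j (Function.update (p j) a w0) with hp'
    have hw : ∀ s : J → I, s j ≠ a → wt b p s = wt b p' s := by
      intro s hs
      unfold wt
      congr 2
      funext i
      unfold smat
      rw [hp']
      by_cases hi : i = j
      · subst hi; simp [hs]
      · simp [hi]
    obtain ⟨n, rfl⟩ : ∃ n', n = n' + 1 := ⟨n - 1, by omega⟩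
    rw [Qw_split (wt b p) n Y j a, Qw_split (wt b p') n Y j a]
    have e1 : Qw (wt b p) (n + 1) (Function.update Y j ((Y j).erase a)) =
        Qw (wt b p') (n + 1) (Function.update Y j ((Y j).erase a)) := by
      refine Qw_congr _ _ _ _ fun s hs => hw s fun h => ?_
      have := hs j
      simp [h] at this
    rw [e1]
    congr 1
    rw [← sub_eq_zero, ← Finset.sum_sub_distrib]
    have e2 : ∀ s ∈ (Fintype.piFinset Y).filter (fun s => s j = a),
        wt b p s * Qw (wt b p) n (fun i => (Y i).erase (s i)) -
          wt b p' s * Qw (wt b p') n (fun i => (Y i).erase (s i)) =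
        ∑ l ∈ Finset.univ.erase j,
          ((chi Finset.univ b ((smat p s).updateRow l w0) : ℤ) : ZMod 2) *
            Qw (wt b p) n (fun i => (Y i).erase (s i)) := by
      intro s hs
      rw [Finset.mem_filter] at hs
      have e3 : Qw (wt b p') n (fun i => (Y i).erase (s i)) =
          Qw (wt b p) n (fun i => (Y i).erase (s i)) := by
        refine Qw_congr _ _ _ _ fun t ht => (hw t fun h => ?_).symm
        have := ht j
        simp [h, hs.2] at this
      rw [e3, ← sub_mul, ← Finset.sum_mul]
      congr 1
      have hc := chi_cocycle Finset.univ b (smat p s) w0 φ (fun i _ => hφ _ (hp i _))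
        (fun i hi => absurd (Finset.mem_univ i) hi) (hφ _ hw0)
        (hW _ _ (fun i => hp i _) hw0)
      have e4 : (smat p s).updateRow j w0 = smat p' s := by
        ext i k
        by_cases hi : i = j
        · subst hi
          rw [hp', Matrix.updateRow_self, smat_apply, hs.2]
          simp
        · rw [hp', Matrix.updateRow_ne hi, smat_apply, smat_apply]
          simp [hi]
      rw [← Finset.add_sum_erase _ _ (Finset.mem_univ j), e4] at hc
      unfold wt
      rw [hc]
      push_cast
      ring
    rw [Finset.sum_congr rfl e2, Finset.sum_comm]
    refine Finset.sum_eq_zero fun l hl => ?_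
    have hlj : l ≠ j := Finset.ne_of_mem_erase hl
    rw [← Finset.sum_fiberwise_of_maps_to (t := Finset.univ)
      (g := fun s : J → I => Function.update s l a) (fun _ _ => Finset.mem_univ _)]
    refine Finset.sum_eq_zero fun t _ => ?_
    by_cases ht : t l = a ∧ t j = a ∧ ∀ i, i ≠ l → t i ∈ Y i
    swap
    · refine Finset.sum_eq_zero fun s hs => ?_
      exfalso
      apply ht
      simp only [Finset.mem_filter, Fintype.mem_piFinset] at hs
      obtain ⟨⟨h1, h2⟩, rfl⟩ := hs
      refine ⟨by simp, by simp [Ne.symm hlj, h2], fun i hi => by simpa [hi] using h1 i⟩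
    obtain ⟨ht1, ht2, ht3⟩ := ht
    set Yt : J → Finset I := Function.update (fun i => (Y i).erase (t i)) l (Y l) with hYt
    have e5 : (((Fintype.piFinset Y).filter (fun s => s j = a)).filter
        (fun s => Function.update s l a = t)) = (Y l).image (fun x => Function.update t l x) := by
      ext s
      simp only [Finset.mem_filter, Fintype.mem_piFinset, Finset.mem_image]
      constructor
      · rintro ⟨⟨h1, h2⟩, rfl⟩
        exact ⟨s l, h1 l, by simp⟩
      · rintro ⟨x, hx, rfl⟩
        refine ⟨⟨fun i => ?_, by simp [Ne.symm hlj, ht2]⟩, by simp [← ht1]⟩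
        by_cases hi : i = l
        · subst hi; simpa using hx
        · simpa [hi] using ht3 i hi
    rw [e5, Finset.sum_image (by
      intro x _ y _ h
      have := congrFun h l
      simpa using this)]
    have e6 : ∀ x ∈ Y l,
        ((chi Finset.univ b ((smat p (Function.update t l x)).updateRow l w0) : ℤ) : ZMod 2) *
            Qw (wt b p) n (fun i => (Y i).erase (Function.update t l x i)) =
        ((chi Finset.univ b ((smat p t).updateRow l w0) : ℤ) : ZMod 2) *
          Qw (wt b p) n (Function.update Yt l ((Yt l).erase x)) := by
      intro x hx
      have em : (smat p (Function.update t l x)).updateRow l w0 = (smat p t).updateRow l w0 := by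
        ext i k
        by_cases hi : i = l
        · subst hi; rw [Matrix.updateRow_self, Matrix.updateRow_self]
        · rw [Matrix.updateRow_ne hi, Matrix.updateRow_ne hi, smat_apply, smat_apply]
          simp [hi]
      have ey : (fun i => (Y i).erase (Function.update t l x i)) =
          Function.update Yt l ((Yt l).erase x) := by
        funext i
        by_cases hi : i = l
        · subst hi; simp [hYt]
        · simp [hi, hYt]
      rw [em, ey]
    rw [Finset.sum_congr rfl e6, ← Finset.mul_sum]
    have hYl : Yt l = Y l := by simp [hYt]
    have e7 := Qw_del (wt b p) n Yt l
    rw [hYl] at e7 ⊢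
    rw [e7]
    rcases hY l with h | h
    · have hcard : ∀ i, i ≠ l → (Yt i).card = (Y i).card - 1 := by
        intro i hi
        rw [hYt, Function.update_of_ne hi, Finset.card_erase_of_mem (ht3 i hi)]
      have hmpos : l ∈ Finset.univ.filter fun j => (Y j).card = n + 1 := by simp [h]
      have hmp := Finset.card_pos.2 ⟨l, hmpos⟩
      rw [hm] at hmp
      have := IH (m - 1) ?_ n Yt p hp ?_ ?_ ?_
      · rw [this]; simp
      · omega
      · intro i
        by_cases hi : i = l
        · subst hi; right; rw [hYl, h]
        · rw [hcard i hi]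
          rcases hY i with h | h <;> omega
      · rw [← hm, ← Finset.card_erase_of_mem hmpos]
        congr 1
        ext i
        simp only [Finset.mem_filter, Finset.mem_univ, true_and, Finset.mem_erase]
        by_cases hi : i = l
        · subst hi; rw [hYl, h]; simp
        · rw [hcard i hi]
          have : 0 < (Y i).card := Finset.card_pos.2 ⟨_, ht3 i hi⟩
          simp only [hi, ne_eq, not_false_eq_true, true_and]
          omega
      · omega
    · rw [h]
      have : ((n + 1 + 1 - n : ℕ) : ZMod 2) = 0 := by
        rw [show n + 1 + 1 - n = 2 by omega]; rfl
      rw [this]; simp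
  -- move all the points
  have all : ∀ A : Finset (J × I), Qw (wt b p) n Y =
      Qw (wt b (fun j i => if (j, i) ∈ A then w0 else p j i)) n Y := by
    intro A
    induction A using Finset.induction_on with
    | empty => simp
    | insert v A hv ih =>
      rw [ih, move _ _ v.1 v.2]
      · congr 2
        funext j i
        by_cases hj : j = v.1
        · subst hj
          by_cases hi : i = v.2
          · subst hi; simp
          · have : (v.1, i) ≠ v := fun h => hi (by rw [← h])
            simp [hi, this]
        · have : (j, i) ≠ v := fun h => hj (by rw [← h])
          simp [hj, this]
      · intro j i
        split_ifs
        · exact hw0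
        · exact hp j i
  rw [all Finset.univ]
  unfold Qw
  refine Finset.sum_eq_zero fun S hS => ?_
  have hne : S.Nonempty := by
    rw [← Finset.card_pos, (mem_rmt.1 hS).1]; omega
  obtain ⟨s, hs⟩ := hne
  refine Finset.prod_eq_zero hs ?_
  obtain ⟨j1, j2, h12⟩ := Fintype.exists_pair_of_one_lt_card (by omega : 1 < Fintype.card J)
  unfold wt chi
  have : (smat (fun (j : J) (i : I) => if (j, i) ∈ (Finset.univ : Finset (J × I)) then w0 else p j i) s).det = 0 := by
    refine Matrix.det_zero_of_row_eq h12 ?_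
    simp [smat]
  rw [this]
  simp

/-- Matchings all of whose simplices are hit. -/
noncomputable def hm (hit : (J → I) → Prop) (n : ℕ) (Y : J → Finset I) : Finset (Finset (J → I)) :=
  (rmt n Y).filter fun S => ∀ s ∈ S, hit s

theorem hm_erase {hit : (J → I) → Prop} {n : ℕ} {Y : J → Finset I} {S : Finset (J → I)}
    (hS : S ∈ hm hit (n + 1) Y) {s : J → I} (hs : s ∈ S) :
    S.erase s ∈ hm hit n (fun j => (Y j).erase (s j)) := by
  simp only [hm, Finset.mem_filter, mem_rmt] at hS ⊢
  obtain ⟨⟨h1, h2, h3⟩, h4⟩ := hS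
  refine ⟨⟨by rw [Finset.card_erase_of_mem hs, h1]; simp, ?_, ?_⟩, ?_⟩
  · intro x hx i
    rw [Finset.mem_erase] at hx ⊢
    exact ⟨fun h => hx.1 (h3 x hx.2 s hs i h), h2 x hx.2 i⟩
  · intro x hx y hy i hxy
    exact h3 x (Finset.mem_of_mem_erase hx) y (Finset.mem_of_mem_erase hy) i hxy
  · exact fun x hx => h4 x (Finset.mem_of_mem_erase hx)

theorem hm_insert {hit : (J → I) → Prop} {n : ℕ} {Y : J → Finset I} {S : Finset (J → I)}
    {s : J → I} (hs : ∀ j, s j ∈ Y j) (hh : hit s) [Nonempty J]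
    (hS : S ∈ hm hit n (fun j => (Y j).erase (s j))) :
    s ∉ S ∧ insert s S ∈ hm hit (n + 1) Y := by
  simp only [hm, Finset.mem_filter, mem_rmt] at hS ⊢
  obtain ⟨⟨h1, h2, h3⟩, h4⟩ := hS
  have hsS : s ∉ S := fun h => by
    have := h2 s h (Classical.arbitrary J)
    simp at this
  simp only [Finset.mem_erase] at h2
  refine ⟨hsS, ⟨by rw [Finset.card_insert_of_notMem hsS, h1], ?_, ?_⟩, ?_⟩
  · intro x hx i
    rcases Finset.mem_insert.1 hx with rfl | hx
    · exact hs i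
    · exact (h2 x hx i).2
  · intro x hx y hy i hxy
    rcases Finset.mem_insert.1 hx with hx | hx <;> rcases Finset.mem_insert.1 hy with hy | hy
    · rw [hx, hy]
    · rw [hx] at hxy; exact absurd hxy.symm (h2 y hy i).1
    · rw [hy] at hxy; exact absurd hxy (h2 x hx i).1
    · exact h3 x hx y hy i hxy
  · intro x hx
    rcases Finset.mem_insert.1 hx with rfl | hx
    · exact hh
    · exact h4 x hx

theorem hm_double [Nonempty J] (hit : (J → I) → Prop) (k0 : ℕ)
    (heven : ∀ (n : ℕ) (Y : J → Finset I), k0 + 1 ≤ n → (∀ j, (Y j).card = n) →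
      Even (hm hit n Y).card) :
    ∀ (n : ℕ) (Y : J → Finset I), (∀ j, (Y j).card = n) → (hm hit n Y).Nonempty →
      2 ^ (n - k0) ≤ (hm hit n Y).card := by
  intro n
  induction n with
  | zero => intro Y hY hne; simpa using Finset.card_pos.2 hne
  | succ n ih =>
    intro Y hY hne
    by_cases hn : n + 1 ≤ k0
    · rw [Nat.sub_eq_zero_of_le hn]; simpa using Finset.card_pos.2 hne
    have hev := heven (n + 1) Y (by omega) hY
    have h2 : 1 < (hm hit (n + 1) Y).card := by
      have := Finset.card_pos.2 hne
      obtain ⟨c, hc⟩ := hev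
      omega
    obtain ⟨S, hS, S', hS', hne'⟩ := Finset.one_lt_card.1 h2
    have hSm := hS
    have hSm' := hS'
    simp only [hm, Finset.mem_filter, mem_rmt] at hSm hSm'
    have : ∃ s ∈ S, s ∉ S' := by
      by_contra hcon
      push Not at hcon
      exact hne' (Finset.eq_of_subset_of_card_le hcon (by rw [hSm.1.1, hSm'.1.1]))
    obtain ⟨s, hs, hs'⟩ := this
    let j0 : J := Classical.arbitrary J
    have himg : S'.image (fun t => t j0) = Y j0 := by
      refine Finset.eq_of_subset_of_card_le ?_ ?_
      · intro x hx
        obtain ⟨t, ht, rfl⟩ := Finset.mem_image.1 hx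
        exact hSm'.1.2.1 t ht j0
      · rw [Finset.card_image_of_injOn, hY, hSm'.1.1]
        intro x hx y hy h
        exact hSm'.1.2.2 x hx y hy j0 h
    have hmem : s j0 ∈ S'.image (fun t => t j0) := by rw [himg]; exact hSm.1.2.1 s hs j0
    obtain ⟨t, ht, hts⟩ := Finset.mem_image.1 hmem
    have hst : s ≠ t := by rintro rfl; exact hs' ht
    have hY' : ∀ u : J → I, (∀ j, u j ∈ Y j) → ∀ j, ((Y j).erase (u j)).card = n := by
      intro u hu j
      rw [Finset.card_erase_of_mem (hu j), hY]; simp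
    have c1 := ih _ (hY' s (hSm.1.2.1 s hs)) ⟨_, hm_erase hS hs⟩
    have c2 := ih _ (hY' t (hSm'.1.2.1 t ht)) ⟨_, hm_erase hS' ht⟩
    have hsub : (hm hit n (fun j => (Y j).erase (s j))).image (insert s) ∪
        (hm hit n (fun j => (Y j).erase (t j))).image (insert t) ⊆ hm hit (n + 1) Y := by
      intro X hX
      rcases Finset.mem_union.1 hX with h | h
      · obtain ⟨Z, hZ, rfl⟩ := Finset.mem_image.1 h
        exact (hm_insert (hSm.1.2.1 s hs) (hSm.2 s hs) hZ).2
      · obtain ⟨Z, hZ, rfl⟩ := Finset.mem_image.1 h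
        exact (hm_insert (hSm'.1.2.1 t ht) (hSm'.2 t ht) hZ).2
    have hdisj : Disjoint ((hm hit n (fun j => (Y j).erase (s j))).image (insert s))
        ((hm hit n (fun j => (Y j).erase (t j))).image (insert t)) := by
      rw [Finset.disjoint_left]
      intro X hX hX'
      obtain ⟨Z, hZ, rfl⟩ := Finset.mem_image.1 hX
      obtain ⟨Z', hZ', he⟩ := Finset.mem_image.1 hX'
      have hb := (hm_insert (hSm.1.2.1 s hs) (hSm.2 s hs) hZ).2
      have htm : t ∈ insert s Z := by rw [← he]; simp
      simp only [hm, Finset.mem_filter, mem_rmt] at hb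
      exact hst (hb.1.2.2 s (by simp) t htm j0 hts.symm)
    have i1 : ((hm hit n (fun j => (Y j).erase (s j))).image (insert s)).card =
        (hm hit n (fun j => (Y j).erase (s j))).card := by
      refine Finset.card_image_of_injOn fun Z hZ Z' hZ' he => ?_
      have h1 := (hm_insert (hSm.1.2.1 s hs) (hSm.2 s hs) hZ).1
      have h2 := (hm_insert (hSm.1.2.1 s hs) (hSm.2 s hs) hZ').1
      rw [← Finset.erase_insert h1, he, Finset.erase_insert h2]
    have i2 : ((hm hit n (fun j => (Y j).erase (t j))).image (insert t)).card =
        (hm hit n (fun j => (Y j).erase (t j))).card := by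
      refine Finset.card_image_of_injOn fun Z hZ Z' hZ' he => ?_
      have h1 := (hm_insert (hSm'.1.2.1 t ht) (hSm'.2 t ht) hZ).1
      have h2 := (hm_insert (hSm'.1.2.1 t ht) (hSm'.2 t ht) hZ').1
      rw [← Finset.erase_insert h1, he, Finset.erase_insert h2]
    have := Finset.card_le_card hsub
    rw [Finset.card_union_of_disjoint hdisj, i1, i2] at this
    have e : n + 1 - k0 = (n - k0) + 1 := by omega
    rw [e, pow_succ]
    omega

/-- Open form of the colored Birch count. -/
theorem birch_open (b φ : J → ℝ) (W : Set (J → ℝ)) (hφ : ∀ x ∈ W, 0 < x ⬝ᵥ φ)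
    (hW : ∀ (U : Matrix J J ℝ) (a : J → ℝ), (∀ j, U j ∈ W) → a ∈ W → WallFree Finset.univ b U a)
    (hJ : 2 ≤ Fintype.card J) (p : J → I → J → ℝ) (hp : ∀ j i, p j i ∈ W)
    (n : ℕ) (Y : J → Finset I) (hY : ∀ j, (Y j).card = n)
    (hne : (hm (fun s => chi Finset.univ b (smat p s) ≠ 0) n Y).Nonempty) :
    2 ^ (n - Fintype.card J) ≤ (hm (fun s => chi Finset.univ b (smat p s) ≠ 0) n Y).card := by
  haveI : Nonempty J := Fintype.card_pos_iff.1 (by omega)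
  refine hm_double _ (Fintype.card J) ?_ n Y hY hne
  intro n Y hn hY
  have j0 : J := Classical.arbitrary J
  have hYne : 0 < (Y j0).card := by rw [hY]; omega
  obtain ⟨i0, -⟩ := Finset.card_pos.1 hYne
  have h0 := birch_aux b φ W hφ hW hJ (p j0 i0) (hp _ _) (Fintype.card J) n Y p hp
    (fun j => Or.inl (hY j)) (by simp [hY]) hn
  rw [← ZMod.natCast_eq_zero_iff_even, ← h0]
  unfold Qw hm
  rw [Finset.card_filter]
  push_cast
  refine Finset.sum_congr rfl fun S hS => ?_
  have hw : ∀ s, wt b p s = if chi Finset.univ b (smat p s) ≠ 0 then 1 else 0 := by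
    intro s
    unfold wt chi
    split_ifs with h1 h2 h2
    · revert h2
      rcases SignType.trichotomy (SignType.sign (smat p s).det) with h | h | h <;> rw [h] <;> simp
    · push Not at h2
      rw [h2]; simp
    · simp at h2
    · simp
  simp only [hw]
  rw [Finset.prod_ite_zero]
  simp

end Birch

section Closed

open MeasureTheory Topology

theorem closed_exists {X Y : Type*} [TopologicalSpace X] [TopologicalSpace Y] {K : Set Y}
    (hK : IsCompact K) {C : Set (X × Y)} (hC : IsClosed C) :
    IsClosed {x : X | ∃ l ∈ K, (x, l) ∈ C} := by
  have : CompactSpace K := isCompact_iff_compactSpace.1 hK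
  have h1 : IsClosed {z : X × K | (z.1, (z.2 : Y)) ∈ C} :=
    hC.preimage (by fun_prop)
  have h2 := isClosedMap_fst_of_compactSpace (X := X) (Y := K) _ h1
  convert h2 using 1
  ext x
  simp only [Set.mem_ofPred_eq, Set.mem_image, Prod.exists, exists_and_right, exists_eq_right,
    Subtype.exists, exists_prop]

theorem generic_near {J ι : Type*} [Fintype J] [Finite ι] (V : ι → Submodule ℝ (J → ℝ))
    (hV : ∀ i, V i ≠ ⊤) {P : (J → ℝ) → Prop} {x : J → ℝ} (hP : ∀ᶠ y in 𝓝 x, P y) :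
    ∃ y, P y ∧ ∀ i, y ∉ V i := by
  have h1 : ∀ᵐ y ∂(volume : Measure (J → ℝ)), ∀ i, y ∉ V i := by
    have : Countable ι := Finite.to_countable
    rw [ae_all_iff]
    intro i
    exact measure_eq_zero_iff_ae_notMem.1 (Measure.addHaar_submodule volume (V i) (hV i))
  have h2 : Dense {y : J → ℝ | ∀ i, y ∉ V i} := Measure.dense_of_ae h1
  obtain ⟨y, hy1, hy2⟩ := mem_closure_iff_nhds.1 (h2 x) _ hP
  exact ⟨y, hy1, hy2⟩

theorem span_ne_top {J ι : Type*} [Fintype J] (g : ι → (J → ℝ)) (T : Finset ι)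
    (hT : T.card < Fintype.card J) : Submodule.span ℝ (g '' (T : Set ι)) ≠ ⊤ := by
  intro h
  have h1 : Module.finrank ℝ (Submodule.span ℝ (g '' (T : Set ι))) = Fintype.card J := by
    rw [h]; simp
  have h2 := finrank_span_finset_le_card (R := ℝ) (T.image g)
  rw [Finset.coe_image, Set.finrank, h1] at h2
  have := Finset.card_image_le (s := T) (f := g)
  omega

variable {J I : Type*} [Fintype J] [DecidableEq J] [Fintype I] [DecidableEq I]

theorem wallFree_of_generic (c : J → ℝ) (q : J → I → J → ℝ)
    (hc : ∀ T : Finset (J × I), T.card < Fintype.card J →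
      c ∉ Submodule.span ℝ ((fun v : J × I => q v.1 v.2) '' (T : Set (J × I))))
    (U : Matrix J J ℝ) (a : J → ℝ) (hU : ∀ j, U j ∈ Set.range fun v : J × I => q v.1 v.2)
    (ha : a ∈ Set.range fun v : J × I => q v.1 v.2) : WallFree Finset.univ c U a := by
  choose v hv using hU
  obtain ⟨w, rfl⟩ := ha
  have key : ∀ (l : J → ℝ), Matrix.vecMul l U = ∑ j, l j • U j := by
    intro l
    ext k
    simp [Matrix.vecMul, dotProduct]
  intro l t hl ht he
  rw [key] at he
  constructor
  · intro i _ j _ hi hj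
    by_contra hij
    refine hc (insert w (((Finset.univ.erase i).erase j).image v)) ?_ ?_
    · have h1 := Finset.card_insert_le w (((Finset.univ.erase i).erase j).image v)
      have h2 := Finset.card_image_le (s := (Finset.univ.erase i).erase j) (f := v)
      rw [Finset.card_erase_of_mem (by simp [Ne.symm hij]), Finset.card_erase_of_mem (by simp),
        Finset.card_univ] at h2
      have : 1 < Fintype.card J := Fintype.one_lt_card_iff.2 ⟨i, j, hij⟩
      omega
    · rw [← he]
      refine Submodule.add_mem _ (Submodule.sum_mem _ fun k _ => ?_) ?_
      · by_cases hk : k = i ∨ k = j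
        · have : l k = 0 := by rcases hk with rfl | rfl <;> assumption
          rw [this, zero_smul]; exact Submodule.zero_mem _
        · push Not at hk
          refine Submodule.smul_mem _ _ (Submodule.subset_span ⟨v k, ?_, hv k⟩)
          simp only [Finset.coe_insert, Finset.coe_image, Set.mem_insert_iff]
          right
          exact ⟨k, by simp [hk.1, hk.2], rfl⟩
      · refine Submodule.smul_mem _ _ (Submodule.subset_span ⟨w, ?_, rfl⟩)
        simp
  · intro ht0 i _ hi
    rw [ht0, zero_smul, add_zero] at he
    refine hc ((Finset.univ.erase i).image v) ?_ ?_
    · have h2 := Finset.card_image_le (s := Finset.univ.erase i) (f := v)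
      rw [Finset.card_erase_of_mem (by simp), Finset.card_univ] at h2
      have : 0 < Fintype.card J := Fintype.card_pos_iff.2 ⟨i⟩
      omega
    · rw [← he]
      refine Submodule.sum_mem _ fun k _ => ?_
      by_cases hk : k = i
      · rw [hk, hi, zero_smul]; exact Submodule.zero_mem _
      · refine Submodule.smul_mem _ _ (Submodule.subset_span ⟨v k, ?_, hv k⟩)
        simp only [Finset.coe_image]
        exact ⟨k, by simp [hk], rfl⟩

theorem mem_hm {hit : (J → I) → Prop} {n : ℕ} {Y : J → Finset I} {S : Finset (J → I)} :
    S ∈ hm hit n Y ↔ S ∈ rmt n Y ∧ ∀ s ∈ S, hit s := by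
  simp [hm]

/-- Closed form of the colored Birch count. -/
theorem birch_closed (b φ : J → ℝ) (hJ : 2 ≤ Fintype.card J) (p : J → I → J → ℝ)
    (hp : ∀ j i, p j i ⬝ᵥ φ = 1) (hb : b ⬝ᵥ φ = 1)
    (hdet : ∀ i, (smat p (fun _ => i)).det ≠ 0)
    (hhit : ∀ i, ∃ l : J → ℝ, (∀ j, 0 ≤ l j) ∧ Matrix.vecMul l (smat p (fun _ => i)) = b) :
    2 ^ (Fintype.card I - Fintype.card J) ≤
      (hm (fun s => ∃ l : J → ℝ, (∀ j, 0 ≤ l j) ∧ Matrix.vecMul l (smat p s) = b)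
        (Fintype.card I) (fun _ : J => (Finset.univ : Finset I))).card := by
  set hit : (J → I) → Prop :=
    fun s => ∃ l : J → ℝ, (∀ j, 0 ≤ l j) ∧ Matrix.vecMul l (smat p s) = b with hhd
  have : Nonempty J := Fintype.card_pos_iff.1 (by omega)
  have hJ0 : (0 : ℝ) < Fintype.card J := by exact_mod_cast (by omega : 0 < Fintype.card J)
  have sumφ : ∀ (q : J → I → J → ℝ), (∀ j i, q j i ⬝ᵥ φ = 1) → ∀ s (l c : J → ℝ),
      Matrix.vecMul l (smat q s) = c → ∑ j, l j = c ⬝ᵥ φ := by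
    intro q hq s l c h
    rw [← h, ← Matrix.dotProduct_mulVec]
    simp only [dotProduct]
    refine Finset.sum_congr rfl fun j _ => ?_
    have : (smat q s).mulVec φ j = 1 := hq j (s j)
    rw [this, mul_one]
  -- the closed sets
  set K : Set (J → ℝ) := Set.Icc 0 (fun _ => 2) with hK
  have hKc : IsCompact K := isCompact_Icc
  have hcl : ∀ s : J → I, IsClosed {z : (J → I → J → ℝ) × (J → ℝ) | ∃ l ∈ K,
      (z, l) ∈ {w : ((J → I → J → ℝ) × (J → ℝ)) × (J → ℝ) |
        Matrix.vecMul w.2 (smat w.1.1 s) = w.1.2}} := by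
    intro s
    refine closed_exists hKc (isClosed_eq ?_ (by fun_prop))
    refine Continuous.matrix_vecMul continuous_snd ?_
    unfold smat
    refine continuous_pi fun i => ?_
    fun_prop
  have hO : ∀ᶠ z : (J → I → J → ℝ) × (J → ℝ) in 𝓝 (p, b), ∀ s, ¬ hit s →
      ¬ ∃ l ∈ K, Matrix.vecMul l (smat z.1 s) = z.2 := by
    rw [Filter.eventually_all]
    intro s
    by_cases hs : hit s
    · exact Filter.Eventually.of_forall fun z h => absurd hs h
    · have : (p, b) ∉ {z : (J → I → J → ℝ) × (J → ℝ) | ∃ l ∈ K,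
      (z, l) ∈ {w : ((J → I → J → ℝ) × (J → ℝ)) × (J → ℝ) |
        Matrix.vecMul w.2 (smat w.1.1 s) = w.1.2}} := by
        rintro ⟨l, hl, he⟩
        exact hs ⟨l, hl.1, he⟩
      filter_upwards [(hcl s).isOpen_compl.mem_nhds this] with z hz _
      exact hz
  -- first perturbation
  set bary : I → J → ℝ := fun i => (Fintype.card J : ℝ)⁻¹ • ∑ j, p j i with hbary
  set q : ℝ → J → I → J → ℝ := fun ε j i => p j i + ε • (b - bary i) with hq
  have hqφ : ∀ ε j i, q ε j i ⬝ᵥ φ = 1 := by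
    intro ε j i
    have : bary i ⬝ᵥ φ = 1 := by
      rw [hbary]
      simp only [smul_dotProduct, sum_dotProduct, hp]
      simp [hJ0.ne']
    simp only [hq, add_dotProduct, smul_dotProduct, sub_dotProduct, hp, hb, this]
    simp
  have hqc : Continuous q := by
    refine continuous_pi fun j => continuous_pi fun i => ?_
    simp only [hq]
    fun_prop
  have hq0 : q 0 = p := by funext j i; simp [hq]
  have hevdet : ∀ᶠ ε in 𝓝 (0 : ℝ), ∀ i, (smat (q ε) (fun _ => i)).det ≠ 0 := by
    rw [Filter.eventually_all]
    intro i
    have hc : Continuous fun ε => (smat (q ε) (fun _ => i)).det := by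
      refine Continuous.matrix_det ?_
      unfold smat
      refine continuous_pi fun j => ?_
      exact (continuous_apply i).comp ((continuous_apply j).comp hqc)
    refine hc.continuousAt.eventually_ne ?_
    rw [hq0]; exact hdet i
  have hevO : ∀ᶠ ε in 𝓝 (0 : ℝ), ∀ᶠ c in 𝓝 b, ∀ s, ¬ hit s →
      ¬ ∃ l ∈ K, Matrix.vecMul l (smat (q ε) s) = c := by
    have h1 : ∀ᶠ z : (J → I → J → ℝ) × (J → ℝ) in 𝓝 (p, b), ∀ᶠ w in 𝓝 z, ∀ s, ¬ hit s →
      ¬ ∃ l ∈ K, Matrix.vecMul l (smat w.1 s) = w.2 := eventually_eventually_nhds.2 hO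
    have h2 : Filter.Tendsto (fun ε : ℝ => (q ε, b)) (𝓝 0) (𝓝 (p, b)) := by
      have : Continuous fun ε : ℝ => (q ε, b) := by fun_prop
      have := this.tendsto 0
      rwa [hq0] at this
    filter_upwards [h2.eventually h1] with ε hε
    have h3 : Filter.Tendsto (fun c : J → ℝ => (q ε, c)) (𝓝 b) (𝓝 (q ε, b)) := by
      have : Continuous fun c : J → ℝ => (q ε, c) := by fun_prop
      exact this.tendsto b
    exact h3.eventually hε
  obtain ⟨ε, ⟨hε1, hε2⟩, hε3⟩ : ∃ ε : ℝ, ((∀ i, (smat (q ε) (fun _ => i)).det ≠ 0) ∧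
      ∀ᶠ c in 𝓝 b, ∀ s, ¬ hit s → ¬ ∃ l ∈ K, Matrix.vecMul l (smat (q ε) s) = c) ∧
      ε ∈ Set.Ioo (0 : ℝ) 1 := by
    have h1 := (hevdet.and hevO).filter_mono (nhdsWithin_le_nhds (s := Set.Ioi 0))
    have h2 : Set.Ioo (0 : ℝ) 1 ∈ 𝓝[>] (0 : ℝ) := Ioo_mem_nhdsGT one_pos
    exact (h1.and h2).exists
  -- interior
  have h_inter : ∀ i, ∃ l : J → ℝ, (∀ j, 0 < l j) ∧
      Matrix.vecMul l (smat (q ε) (fun _ => i)) = b := by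
    intro i
    obtain ⟨l, hl, he⟩ := hhit i
    have hs := sumφ p hp _ _ _ he
    rw [hb] at hs
    refine ⟨fun j => (1 - ε) * l j + ε * (Fintype.card J : ℝ)⁻¹, fun j => ?_, ?_⟩
    · have := mul_nonneg (sub_nonneg.2 hε3.2.le) (hl j)
      have := mul_pos hε3.1 (inv_pos.2 hJ0)
      linarith
    · ext k
      have he' := congrFun he k
      simp only [Matrix.vecMul, dotProduct, smat_apply] at he' ⊢
      have hb' : bary i k = (Fintype.card J : ℝ)⁻¹ * ∑ j, p j i k := by
        simp [hbary, Finset.sum_apply]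
      have e1 : ∀ j, q ε j i k = p j i k + ε * (b k - bary i k) := fun j => by simp [hq]
      simp only [e1]
      have e2 : ∑ j, ((1 - ε) * l j + ε * (Fintype.card J : ℝ)⁻¹) *
          (p j i k + ε * (b k - bary i k)) =
          (1 - ε) * ∑ j, l j * p j i k + ε * ((Fintype.card J : ℝ)⁻¹ * ∑ j, p j i k) +
          ((1 - ε) * ∑ j, l j + ε * ((Fintype.card J : ℝ)⁻¹ * Fintype.card J)) *
            (ε * (b k - bary i k)) := by
        have : (Fintype.card J : ℝ) = ∑ _j : J, (1 : ℝ) := by simp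
        rw [this]
        generalize (∑ _j : J, (1 : ℝ))⁻¹ = y
        simp only [Finset.mul_sum, Finset.sum_mul, add_mul, ← Finset.sum_add_distrib]
        refine Finset.sum_congr rfl fun j _ => ?_
        ring
      rw [e2, he', hs, ← hb', inv_mul_cancel₀ hJ0.ne']
      ring
  -- second perturbation
  have hev2 : ∀ᶠ c in 𝓝 b, ∀ i, ∃ l : J → ℝ, (∀ j, 0 < l j) ∧
      Matrix.vecMul l (smat (q ε) (fun _ => i)) = c := by
    rw [Filter.eventually_all]
    intro i
    have hu : IsUnit (smat (q ε) (fun _ => i)).det := (hε1 i).isUnit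
    have hc : Continuous fun c : J → ℝ => Matrix.vecMul c (smat (q ε) (fun _ => i))⁻¹ :=
      Continuous.matrix_vecMul continuous_id continuous_const
    obtain ⟨l, hl, he⟩ := h_inter i
    have hlb : Matrix.vecMul b (smat (q ε) (fun _ => i))⁻¹ = l := by
      rw [← he, Matrix.vecMul_vecMul, Matrix.mul_nonsing_inv _ hu, Matrix.vecMul_one]
    have hop : ∀ᶠ c in 𝓝 b, ∀ j, 0 < Matrix.vecMul c (smat (q ε) (fun _ => i))⁻¹ j := by
      rw [Filter.eventually_all]
      intro j
      refine ((continuous_apply j).comp hc).continuousAt.eventually_const_lt ?_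
      simp only [Function.comp]
      rw [hlb]; exact hl j
    filter_upwards [hop] with c hc
    refine ⟨_, hc, ?_⟩
    rw [Matrix.vecMul_vecMul, Matrix.nonsing_inv_mul _ hu, Matrix.vecMul_one]
  have hev3 : ∀ᶠ c in 𝓝 b, c ⬝ᵥ φ < 2 := by
    have : Continuous fun c : J → ℝ => c ⬝ᵥ φ := by unfold dotProduct; fun_prop
    refine this.continuousAt.eventually_lt_const ?_
    simp only [hb]; norm_num
  obtain ⟨c, ⟨hc1, hc2, hc3⟩, hc4⟩ := generic_near
    (fun T : {T : Finset (J × I) // T.card < Fintype.card J} =>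
      Submodule.span ℝ ((fun v : J × I => q ε v.1 v.2) '' (T.1 : Set (J × I))))
    (fun T => span_ne_top _ _ T.2) (hε2.and (hev2.and hev3))
  have key := birch_open c φ (Set.range fun v : J × I => q ε v.1 v.2)
    (by rintro _ ⟨v, rfl⟩; rw [hqφ]; exact one_pos)
    (fun U a hU ha => wallFree_of_generic c (q ε) (fun T hT => hc4 ⟨T, hT⟩) U a hU ha)
    hJ (q ε) (fun j i => ⟨(j, i), rfl⟩) (Fintype.card I) (fun _ => Finset.univ) (fun _ => rfl) ?_
  · refine key.trans (Finset.card_le_card ?_)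
    intro S hS
    rw [mem_hm] at hS ⊢
    refine ⟨hS.1, fun s hs => ?_⟩
    by_contra hcon
    have h1 := hS.2 s hs
    unfold chi at h1
    split_ifs at h1 with h2
    · obtain ⟨l, he, hl⟩ := h2
      refine hc1 s hcon ⟨l, ⟨fun j => (hl j (Finset.mem_univ j)).le, fun j => ?_⟩, he⟩
      have h3 := sumφ (q ε) (hqφ ε) _ _ _ he
      have h4 := Finset.single_le_sum (f := l) (fun j _ => (hl j (Finset.mem_univ j)).le)
        (Finset.mem_univ j)
      show l j ≤ 2
      linarith
    · exact h1 rfl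
  · refine ⟨Finset.univ.image fun i : I => fun _ : J => i, ?_⟩
    rw [mem_hm, mem_rmt]
    refine ⟨⟨?_, fun _ _ _ => Finset.mem_univ _, ?_⟩, ?_⟩
    · rw [Finset.card_image_of_injective, Finset.card_univ]
      intro i i' h
      exact congrFun h (Classical.arbitrary J)
    · intro s hs s' hs' j h
      obtain ⟨i, -, rfl⟩ := Finset.mem_image.1 hs
      obtain ⟨i', -, rfl⟩ := Finset.mem_image.1 hs'
      simp only at h
      rw [h]
    · intro s hs
      obtain ⟨i, -, rfl⟩ := Finset.mem_image.1 hs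
      unfold chi
      obtain ⟨l, hl, he⟩ := hc2 i
      rw [if_pos ⟨l, he, fun j _ => hl j⟩]
      have := hε1 i
      rcases lt_or_gt_of_ne this with h | h
      · rw [sign_neg h]; simp
      · rw [sign_pos h]; simp

end Closed

section CT

variable {K R : Type*} [Fintype K] [DecidableEq K] [Fintype R] [DecidableEq R] [AddCommGroup R]

/-- Index shift. -/
def sf (i : R) : Option (K × R) → Option (K × R)
  | none => none
  | some (k, t) => some (k, t - i)

@[simp] theorem sf_none (i : R) : sf i (none : Option (K × R)) = none := rfl
@[simp] theorem sf_some (i : R) (k : K) (t : R) : sf i (some (k, t)) = some (k, t - i) := rfl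

theorem sf_sf (i j : R) (v : Option (K × R)) : sf i (sf j v) = sf (i + j) v := by
  rcases v with _ | ⟨k, t⟩
  · rfl
  · simp only [sf_some]; congr 2; abel

theorem sf_zero (v : Option (K × R)) : sf 0 v = v := by
  rcases v with _ | ⟨k, t⟩
  · rfl
  · simp

/-- Block assignment. -/
def sg (π : K → Equiv.Perm R) (m : R) : Option (K × R) → R
  | none => m
  | some (k, a) => π k a

@[simp] theorem sg_none (π : K → Equiv.Perm R) (m : R) : sg π m none = m := rfl
@[simp] theorem sg_some (π : K → Equiv.Perm R) (m : R) (k : K) (a : R) :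
    sg π m (some (k, a)) = π k a := rfl

/-- indicator of the `k`-th group of coordinates -/
def indk (k : K) : Option (K × R) → ℝ
  | none => 0
  | some (k', _) => if k' = k then 1 else 0

theorem indk_sf (k : K) (i : R) : (indk k : Option (K × R) → ℝ) ∘ sf i = indk k := by
  funext v
  rcases v with _ | ⟨k, t⟩ <;> rfl

/-- the matrix -/
def um (u : Option (K × R) → Option (K × R) → ℝ) (π : K → Equiv.Perm R) (m : R) :
    Matrix (Option (K × R)) (Option (K × R)) ℝ := fun v => u v ∘ sf (sg π m v)

theorem um_apply (u : Option (K × R) → Option (K × R) → ℝ) (π : K → Equiv.Perm R) (m : R)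
    (v w : Option (K × R)) : um u π m v w = u v (sf (sg π m v) w) := rfl

/-- non-phantom indices -/
def nph (K R : Type*) [Fintype K] [DecidableEq K] [Fintype R] [DecidableEq R] [AddCommGroup R] :
    Finset (Option (K × R)) :=
  Finset.univ.filter fun v => ∀ k, v ≠ some (k, 0)

theorem none_mem_nph : none ∈ nph K R := by simp [nph]

theorem some_mem_nph {k : K} {a : R} : some (k, a) ∈ nph K R ↔ a ≠ 0 := by
  simp [nph]

/-- target vector -/
def bv : Option (K × R) → ℝ := Pi.single none 1

/-- signed count -/
noncomputable def Dc (u : Option (K × R) → Option (K × R) → ℝ) : ℤ :=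
  ∑ π : K → Equiv.Perm R, ∑ m : R,
    (∏ k, ((Equiv.Perm.sign (π k) : ℤˣ) : ℤ)) * chi (nph K R) bv (um u π m)

/-- shift matrix -/
def shm (c : R) : Matrix (Option (K × R)) (Option (K × R)) ℝ :=
  fun v w => if sf c w = v then 1 else 0

theorem vecMul_shm (x : Option (K × R) → ℝ) (c : R) : Matrix.vecMul x (shm c) = x ∘ sf c := by
  funext w
  simp [Matrix.vecMul, dotProduct, shm]

theorem mul_shm (U : Matrix (Option (K × R)) (Option (K × R)) ℝ) (c : R)
    (v w : Option (K × R)) :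
    (U * (shm c : Matrix (Option (K × R)) (Option (K × R)) ℝ) :
      Matrix (Option (K × R)) (Option (K × R)) ℝ) v w = U v (sf c w) := by
  simp [Matrix.mul_apply, shm]

theorem shm_mul (c c' : R) : (shm c * shm c' : Matrix (Option (K × R)) (Option (K × R)) ℝ) =
    shm (c + c') := by
  ext v w
  rw [mul_shm]
  simp [shm, sf_sf]

theorem shm_det_pos (h2 : ∀ c : R, ∃ c', c = c' + c') (c : R) :
    0 < (shm c : Matrix (Option (K × R)) (Option (K × R)) ℝ).det := by
  have h0 : (shm 0 : Matrix (Option (K × R)) (Option (K × R)) ℝ) = 1 := by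
    ext v w
    simp [shm, sf_zero, Matrix.one_apply, eq_comm]
  obtain ⟨c', rfl⟩ := h2 c
  rw [← shm_mul, Matrix.det_mul]
  have : (shm c' : Matrix (Option (K × R)) (Option (K × R)) ℝ).det ≠ 0 := by
    intro h
    have h3 : ((shm c' * shm (-c') : Matrix (Option (K × R)) (Option (K × R)) ℝ)).det = 1 := by
      rw [shm_mul, add_neg_cancel, h0, Matrix.det_one]
    rw [Matrix.det_mul, h] at h3
    simp at h3
  exact mul_self_pos.2 this

theorem sign_addLeft (h2 : ∀ c : R, ∃ c', c = c' + c') (c : R) :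
    Equiv.Perm.sign (Equiv.addLeft c : Equiv.Perm R) = 1 := by
  obtain ⟨c', rfl⟩ := h2 c
  have : (Equiv.addLeft (c' + c') : Equiv.Perm R) = Equiv.addLeft c' * Equiv.addLeft c' := by
    ext x; simp [add_assoc]
  rw [this, Equiv.Perm.sign_mul]
  exact Int.units_mul_self _

theorem chi_shift (h2 : ∀ c : R, ∃ c', c = c' + c') (c : R)
    (U U' : Matrix (Option (K × R)) (Option (K × R)) ℝ) (h : ∀ v w, U' v w = U v (sf c w)) :
    chi (nph K R) bv U' = chi (nph K R) bv U := by
  have h1 : U' = U * shm c := by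
    ext v w; rw [mul_shm, h]
  have h3 : (bv : Option (K × R) → ℝ) = Matrix.vecMul bv (shm c) := by
    rw [vecMul_shm]
    funext w
    rcases w with _ | ⟨k, t⟩ <;> simp [bv]
  have h4 := shm_det_pos (K := K) h2 c
  rw [h1]
  conv_lhs => rw [h3]
  rw [chi_mul _ _ _ _ h4.ne', sign_pos h4]
  simp

theorem dc_step (h2 : ∀ c : R, ∃ c', c = c' + c')
    (u : Option (K × R) → Option (K × R) → ℝ) (hu0 : ∀ k, u (some (k, 0)) = indk k)
    (hu : ∀ v ∈ nph K R, 0 < u v none) (v0 : Option (K × R)) (hv0 : v0 ∈ nph K R)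
    (q : Option (K × R) → ℝ) (hq : 0 < q none)
    (hW : ∀ π m, WallFree (nph K R) bv (um u π m) (q ∘ sf (sg π m v0))) :
    ((Fintype.card R : ℤ) ^ 2) ∣ Dc u - Dc (Function.update u v0 q) := by
  have hco : ∀ (π : K → Equiv.Perm R) (m : R), chi (nph K R) bv (um u π m) =
      chi (nph K R) bv (um (Function.update u v0 q) π m) +
      ∑ s ∈ (nph K R).erase v0,
        chi (nph K R) bv ((um u π m).updateRow s (q ∘ sf (sg π m v0))) := by
    intro π m
    rw [chi_cocycle (nph K R) bv (um u π m) (q ∘ sf (sg π m v0)) (Pi.single none 1) ?_ ?_ ?_ (hW π m),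
      ← Finset.add_sum_erase _ _ hv0]
    · congr 2
      ext v w
      by_cases hv : v = v0
      · subst hv
        rw [Matrix.updateRow_self, um_apply, Function.update_self]; rfl
      · rw [Matrix.updateRow_ne hv, um_apply, um_apply, Function.update_of_ne hv]
    · intro v hv
      rw [dotProduct_single, mul_one, um_apply, sf_none]
      exact hu v hv
    · intro v hv
      have : ∃ k, v = some (k, 0) := by
        simpa [nph] using hv
      obtain ⟨k, rfl⟩ := this
      rw [dotProduct_single, mul_one, um_apply, sf_none, hu0]; rfl
    · rw [dotProduct_single, mul_one]; exact hq
  have hD : Dc u - Dc (Function.update u v0 q) = ∑ s ∈ (nph K R).erase v0,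
      ∑ π : K → Equiv.Perm R, ∑ m : R, (∏ k, ((Equiv.Perm.sign (π k) : ℤˣ) : ℤ)) *
        chi (nph K R) bv ((um u π m).updateRow s (q ∘ sf (sg π m v0))) := by
    unfold Dc
    rw [← Finset.sum_sub_distrib, Finset.sum_comm]
    refine Finset.sum_congr rfl fun π _ => ?_
    rw [← Finset.sum_sub_distrib, Finset.sum_comm]
    refine Finset.sum_congr rfl fun m _ => ?_
    rw [hco, ← Finset.mul_sum]
    ring
  rw [hD]
  refine Finset.dvd_sum fun s hs => ?_
  rw [Finset.mem_erase] at hs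
  rcases s with _ | ⟨l, a0⟩
  · -- `none`
    obtain ⟨k0, a0, rfl⟩ : ∃ k0 a0, v0 = some (k0, a0) := by
      rcases v0 with _ | ⟨k0, a0⟩
      · exact absurd rfl hs.1
      · exact ⟨k0, a0, rfl⟩
    set X : (K → Equiv.Perm R) → ℤ := fun π => (∏ k, ((Equiv.Perm.sign (π k) : ℤˣ) : ℤ)) *
      chi (nph K R) bv ((um u π 0).updateRow none (q ∘ sf (π k0 a0))) with hX
    have e1 : ∀ π : K → Equiv.Perm R, ∑ m : R, (∏ k, ((Equiv.Perm.sign (π k) : ℤˣ) : ℤ)) *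
        chi (nph K R) bv ((um u π m).updateRow none (q ∘ sf (sg π m (some (k0, a0))))) =
        Fintype.card R * X π := by
      intro π
      rw [Finset.sum_congr rfl (g := fun _ => X π), Finset.sum_const, Finset.card_univ, nsmul_eq_mul]
      intro m _
      rw [hX]
      simp only [sg_some]
      congr 2
      ext v w
      rcases v with _ | ⟨k, a⟩
      · rw [Matrix.updateRow_self, Matrix.updateRow_self]
      · rw [Matrix.updateRow_ne (by simp), Matrix.updateRow_ne (by simp)]; rfl
    rw [Finset.sum_congr rfl fun π _ => e1 π, ← Finset.mul_sum, pow_two]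
    refine mul_dvd_mul_left _ ?_
    have inv : ∀ (c : R) (π : K → Equiv.Perm R), X (fun k => Equiv.addLeft c * π k) = X π := by
      intro c π
      simp only [hX]
      congr 1
      · refine Finset.prod_congr rfl fun k _ => ?_
        rw [Equiv.Perm.sign_mul, sign_addLeft h2, one_mul]
      · refine chi_shift h2 c _ _ fun v w => ?_
        rcases v with _ | ⟨k, a⟩
        · rw [Matrix.updateRow_self, Matrix.updateRow_self]
          simp [sf_sf, add_comm]
        · rw [Matrix.updateRow_ne (by simp), Matrix.updateRow_ne (by simp), um_apply, um_apply]
          simp [sf_sf, add_comm]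
    rw [← Finset.sum_fiberwise_of_maps_to (t := Finset.univ)
      (g := fun π : K → Equiv.Perm R => π k0 a0) (fun _ _ => Finset.mem_univ _)]
    have e2 : ∀ y ∈ (Finset.univ : Finset R),
        ∑ π ∈ Finset.univ.filter (fun π : K → Equiv.Perm R => π k0 a0 = y), X π =
        ∑ π ∈ Finset.univ.filter (fun π : K → Equiv.Perm R => π k0 a0 = 0), X π := by
      intro y _
      symm
      refine Finset.sum_bij' (fun π _ => fun k => Equiv.addLeft y * π k)
        (fun π _ => fun k => Equiv.addLeft (-y) * π k) ?_ ?_ ?_ ?_ ?_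
      · intro π hπ; simp only [Finset.mem_filter, Finset.mem_univ, true_and] at hπ ⊢; simp [hπ]
      · intro π hπ; simp only [Finset.mem_filter, Finset.mem_univ, true_and] at hπ ⊢; simp [hπ]
      · intro π hπ; funext k; ext x; simp
      · intro π hπ; funext k; ext x; simp
      · intro π hπ; exact (inv y π).symm
    rw [Finset.sum_congr rfl e2, Finset.sum_const, Finset.card_univ, nsmul_eq_mul]
    exact dvd_mul_right _ _
  · -- `some (l, a0)`
    have ha0 : a0 ≠ 0 := some_mem_nph.1 hs.2
    rw [Finset.sum_comm]
    refine Finset.dvd_sum fun m _ => ?_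
    set X : (K → Equiv.Perm R) → ℤ := fun π => (∏ k, ((Equiv.Perm.sign (π k) : ℤˣ) : ℤ)) *
        chi (nph K R) bv ((um u π m).updateRow (some (l, a0)) (q ∘ sf (sg π m v0))) with hX
    have hneg : ∀ π, X (π * Pi.mulSingle l (Equiv.swap a0 0)) = - X π := by
      intro π
      simp only [hX]
      have es : ∏ k, ((Equiv.Perm.sign ((π * Pi.mulSingle l (Equiv.swap a0 0) : K → Equiv.Perm R) k) : ℤˣ) : ℤ)
          = - ∏ k, ((Equiv.Perm.sign (π k) : ℤˣ) : ℤ) := by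
        simp only [Pi.mul_apply, Equiv.Perm.sign_mul, Units.val_mul, Finset.prod_mul_distrib]
        rw [Finset.prod_eq_single (f := fun k => ((Equiv.Perm.sign
          ((Pi.mulSingle l (Equiv.swap a0 0) : K → Equiv.Perm R) k) : ℤˣ) : ℤ)) l]
        · rw [Pi.mulSingle_eq_same, Equiv.Perm.sign_swap ha0]; simp
        · intro k _ hk
          rw [Pi.mulSingle_eq_of_ne hk]; simp
        · intro h; exact absurd (Finset.mem_univ l) h
      rw [es, neg_mul]
      congr 2
      have hsg : ∀ v : Option (K × R), v ≠ some (l, a0) → v ≠ some (l, 0) →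
          sg (π * Pi.mulSingle l (Equiv.swap a0 0)) m v = sg π m v := by
        intro v h1 h3
        rcases v with _ | ⟨k, a⟩
        · rfl
        · simp only [sg_some, Pi.mul_apply, Equiv.Perm.mul_apply]
          by_cases hk : k = l
          · subst hk
            rw [Pi.mulSingle_eq_same, Equiv.swap_apply_of_ne_of_ne]
            · rintro rfl; exact h1 rfl
            · rintro rfl; exact h3 rfl
          · rw [Pi.mulSingle_eq_of_ne hk]; rfl
      have hv0' : v0 ≠ some (l, 0) := by
        rintro rfl
        exact (some_mem_nph.1 hv0) rfl
      congr 1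
      ext v w
      by_cases hv : v = some (l, a0)
      · subst hv
        rw [Matrix.updateRow_self, Matrix.updateRow_self, hsg v0 (Ne.symm hs.1) hv0']
      · rw [Matrix.updateRow_ne hv, Matrix.updateRow_ne hv]
        by_cases hv' : v = some (l, 0)
        · subst hv'
          have hh : ∀ π' : K → Equiv.Perm R, um u π' m (some (l, 0)) = indk l := by
            intro π'
            unfold um
            rw [hu0, indk_sf]
          rw [hh, hh]
        · rw [um_apply, um_apply, hsg v hv hv']
    have hz : ∑ π, X π = - ∑ π, X π := by
      conv_lhs => rw [← Equiv.sum_comp (Equiv.mulRight (Pi.mulSingle l (Equiv.swap a0 0)))]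
      rw [← Finset.sum_neg_distrib]
      exact Finset.sum_congr rfl fun π _ => hneg π
    have : ∑ π, X π = 0 := by omega
    rw [this]
    exact dvd_zero _

end CT

section CT2

variable {K R : Type*} [Fintype K] [DecidableEq K] [Fintype R] [DecidableEq R] [AddCommGroup R]

/-- The standard configuration. -/
def stdu : Option (K × R) → Option (K × R) → ℝ
  | none => fun w => match w with
    | none => 1
    | some (_, t) => if t = 0 then 1 else 0
  | some (k, a) => fun w => match w with
    | none => if a = 0 then 0 else 1
    | some (k', t) => if k' = k ∧ (a = 0 ∨ t = 0) then 1 else 0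

theorem stdu_zero (k : K) : (stdu (some (k, (0 : R))) : Option (K × R) → ℝ) = indk k := by
  funext w
  rcases w with _ | ⟨k', t⟩ <;> simp [stdu, indk]

theorem stdu_none (v : Option (K × R)) (hv : v ∈ nph K R) : stdu v none = 1 := by
  rcases v with _ | ⟨k, a⟩
  · rfl
  · have := some_mem_nph.1 hv
    simp [stdu, this]

theorem vm_apply (l : Option (K × R) → ℝ) (u : Option (K × R) → Option (K × R) → ℝ)
    (π : K → Equiv.Perm R) (m : R) (w : Option (K × R)) :
    Matrix.vecMul l (um u π m) w = ∑ v, l v * u v (sf (sg π m v) w) := rfl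

theorem std_coord_none (l : Option (K × R) → ℝ) (π : K → Equiv.Perm R) (m : R) :
    Matrix.vecMul l (um stdu π m) none = ∑ v ∈ nph K R, l v := by
  rw [vm_apply, nph, Finset.sum_filter]
  refine Finset.sum_congr rfl fun v _ => ?_
  rcases v with _ | ⟨k, a⟩
  · simp [stdu]
  · simp [stdu]

theorem std_coord_some (l : Option (K × R) → ℝ) (π : K → Equiv.Perm R) (m : R) (k : K) (a : R) :
    Matrix.vecMul l (um stdu π m) (some (k, π k a)) =
      (if a = 0 then 0 else l (some (k, a))) + l (some (k, 0)) +
        (if π k a = m then l none else 0) := by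
  rw [vm_apply, Fintype.sum_option, Fintype.sum_prod_type, Finset.sum_eq_single k]
  · have h1 : ∀ x : R, l (some (k, x)) * stdu (some (k, x)) (sf (sg π m (some (k, x)))
        (some (k, π k a))) = (if x = a then (if a = 0 then 0 else l (some (k, a))) else 0) +
          (if x = 0 then l (some (k, 0)) else 0) := by
      intro x
      simp only [sg_some, sf_some, stdu, true_and, sub_eq_zero, EmbeddingLike.apply_eq_iff_eq]
      by_cases hx : x = 0
      · subst hx
        by_cases ha : a = 0
        · subst ha; simp
        · simp [ha, Ne.symm ha]
      · by_cases hxa : x = a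
        · subst hxa; simp [hx]
        · simp [hx, hxa, Ne.symm hxa]
    rw [Finset.sum_congr rfl fun x _ => h1 x, Finset.sum_add_distrib]
    simp only [Finset.sum_ite_eq', Finset.mem_univ, if_true]
    simp only [sg_none, sf_some, stdu, sub_eq_zero]
    rw [add_comm]
    simp
  · intro k' _ hk'
    refine Finset.sum_eq_zero fun x _ => ?_
    simp [stdu, Ne.symm hk']
  · intro h; exact absurd (Finset.mem_univ _) h

theorem bv_none : (bv : Option (K × R) → ℝ) none = 1 := by simp [bv]
theorem bv_some (x : K × R) : (bv : Option (K × R) → ℝ) (some x) = 0 := by simp [bv]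

theorem std_sol (l : Option (K × R) → ℝ) (π : K → Equiv.Perm R) (m : R) (hπ : ∀ k, π k 0 = m)
    (c : ℝ) (h : Matrix.vecMul l (um stdu π m) = c • bv) :
    (∀ v ∈ nph K R, l v = l none) ∧ (∀ k, l (some (k, 0)) = - l none) ∧
      ((nph K R).card : ℝ) * l none = c := by
  have hy : ∀ k, l (some (k, 0)) = - l none := by
    intro k
    have := std_coord_some l π m k 0
    rw [h, Pi.smul_apply, bv_some] at this
    simp [hπ] at this
    linarith
  have hv : ∀ v ∈ nph K R, l v = l none := by
    intro v hv
    rcases v with _ | ⟨k, a⟩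
    · rfl
    · have ha := some_mem_nph.1 hv
      have := std_coord_some l π m k a
      rw [h, Pi.smul_apply, bv_some] at this
      have h3 : π k a ≠ m := by
        rw [← hπ k]
        exact fun h => ha ((π k).injective h)
      simp [h3, ha, hy] at this
      linarith
  refine ⟨hv, hy, ?_⟩
  have := std_coord_none l π m
  rw [h, Pi.smul_apply, bv_none, Finset.sum_congr rfl hv, Finset.sum_const, nsmul_eq_mul] at this
  simpa using this.symm

theorem std_nonneg (l : Option (K × R) → ℝ) (π : K → Equiv.Perm R) (m : R)
    (hl : ∀ v ∈ nph K R, 0 ≤ l v) (h : Matrix.vecMul l (um stdu π m) = bv) :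
    ∀ k, π k 0 = m := by
  by_contra hcon
  push Not at hcon
  obtain ⟨k, hk⟩ := hcon
  have h0 := hl none none_mem_nph
  have c1 := std_coord_some l π m k 0
  rw [h, bv_some] at c1
  simp [hk] at c1
  have c2 := std_coord_some l π m k ((π k).symm m)
  have ha : (π k).symm m ≠ 0 := by
    intro h
    rw [← h] at hk
    simp at hk
  have h1 := hl _ (some_mem_nph.2 ha : some (k, (π k).symm m) ∈ nph K R)
  rw [h, bv_some] at c2
  simp [ha, ← c1] at c2
  have hn : l none = 0 := by linarith
  have c3 := std_coord_none l π m
  rw [h, bv_none, Finset.sum_eq_zero] at c3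
  · norm_num at c3
  · intro v hv
    rcases v with _ | ⟨k', a⟩
    · exact hn
    · have ha := some_mem_nph.1 hv
      have c4 := std_coord_some l π m k' 0
      have c5 := std_coord_some l π m k' a
      rw [h, bv_some] at c4 c5
      simp [hn] at c4
      simp [hn, ha, ← c4] at c5
      exact c5.symm

theorem card_nph_pos : 0 < (nph K R).card := Finset.card_pos.2 ⟨none, none_mem_nph⟩

/-- reference matrix -/
def vmat (m : R) : Matrix (Option (K × R)) (Option (K × R)) ℝ
  | none => fun w => match w with
    | none => 1
    | some (_, t) => if t = m then 1 else 0
  | some (k, a) => fun w => match w with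
    | none => if a = m then 0 else 1
    | some (k', t) => if k' = k ∧ (a = m ∨ t = a) then 1 else 0

theorem std_det (π : K → Equiv.Perm R) (m : R) (hπ : ∀ k, π k 0 = m) :
    (um stdu π m).det = (∏ k, ((Equiv.Perm.sign (π k) : ℤˣ) : ℝ)) * (vmat (K := K) m).det := by
  have h1 : um stdu π m = (vmat (K := K) m).submatrix
      (Equiv.optionCongr (Equiv.prodCongrRight π : Equiv.Perm (K × R)) : Equiv.Perm _) id := by
    ext v w
    have ha : ∀ k a, π k a = m ↔ a = 0 := by
      intro k a
      rw [← hπ k]; exact (π k).injective.eq_iff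
    rcases v with _ | ⟨k, a⟩ <;> rcases w with _ | ⟨k', t⟩
    · rfl
    · simp [um_apply, stdu, vmat, sub_eq_zero]
    · simp [um_apply, stdu, vmat, ha]
    · simp [um_apply, stdu, vmat, ha, sub_eq_zero]
  rw [h1, Matrix.det_permute]
  congr 1
  have h2 : Equiv.Perm.sign (Equiv.optionCongr (Equiv.prodCongrRight π : Equiv.Perm (K × R)) :
      Equiv.Perm (Option (K × R))) = ∏ k, Equiv.Perm.sign (π k) := by
    rw [Equiv.optionCongr_sign, Equiv.Perm.sign_prodCongrRight]
  rw [h2]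
  push_cast
  rfl

theorem std_det_ne (π : K → Equiv.Perm R) (m : R) (hπ : ∀ k, π k 0 = m) :
    (um stdu π m).det ≠ 0 := by
  intro h
  obtain ⟨l, hl, he⟩ := Matrix.exists_vecMul_eq_zero_iff.2 h
  apply hl
  obtain ⟨h1, h3, h4⟩ := std_sol l π m hπ 0 (by rw [he, zero_smul])
  have hp : ((nph K R).card : ℝ) ≠ 0 := by exact_mod_cast card_nph_pos.ne'
  have hn : l none = 0 := by
    rcases mul_eq_zero.1 h4 with h | h
    · exact absurd h hp
    · exact h
  funext v
  by_cases hv : v ∈ nph K R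
  · rw [h1 v hv, hn]; rfl
  · have : ∃ k, v = some (k, 0) := by simpa [nph] using hv
    obtain ⟨k, rfl⟩ := this
    rw [h3, hn]; simp

theorem sign_prod_units {ι : Type*} (s : Finset ι) (f : ι → ℤˣ) (x : ℝ) :
    (∏ k ∈ s, ((f k : ℤˣ) : ℤ)) * (SignType.sign ((∏ k ∈ s, ((f k : ℤˣ) : ℝ)) * x) : ℤ) =
      (SignType.sign x : ℤ) := by
  have : (∏ k ∈ s, f k) = 1 ∨ (∏ k ∈ s, f k) = -1 := Int.units_eq_one_or _
  have e1 : (∏ k ∈ s, ((f k : ℤˣ) : ℤ)) = ((∏ k ∈ s, f k : ℤˣ) : ℤ) := by simp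
  have e2 : (∏ k ∈ s, ((f k : ℤˣ) : ℝ)) = (((∏ k ∈ s, f k : ℤˣ) : ℤ) : ℝ) := by simp
  rw [e1, e2]
  rcases this with h | h <;> rw [h]
  · simp
  · simp [Left.sign_neg]

theorem std_chi (π : K → Equiv.Perm R) (m : R) :
    (∏ k, ((Equiv.Perm.sign (π k) : ℤˣ) : ℤ)) * chi (nph K R) bv (um stdu π m) =
      if ∀ k, π k 0 = m then (SignType.sign (vmat (K := K) m).det : ℤ) else 0 := by
  split_ifs with hπ
  · have hd := std_det_ne π m hπ
    have : ∃ l, Matrix.vecMul l (um stdu π m) = bv ∧ ∀ j ∈ nph K R, 0 < l j := by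
      refine ⟨Matrix.vecMul bv (um stdu π m)⁻¹, ?_, ?_⟩
      · rw [Matrix.vecMul_vecMul, Matrix.nonsing_inv_mul _ hd.isUnit, Matrix.vecMul_one]
      · obtain ⟨h1, h3, h4⟩ := std_sol (Matrix.vecMul bv (um stdu π m)⁻¹) π m hπ 1 (by
          rw [Matrix.vecMul_vecMul, Matrix.nonsing_inv_mul _ hd.isUnit, Matrix.vecMul_one, one_smul])
        intro v hv
        rw [h1 v hv]
        have hp : (0 : ℝ) < ((nph K R).card : ℝ) := by exact_mod_cast card_nph_pos
        by_contra hcon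
        push Not at hcon
        have := mul_nonpos_of_nonneg_of_nonpos hp.le hcon
        linarith
    unfold chi
    rw [if_pos this, std_det π m hπ, sign_prod_units]
  · unfold chi
    rw [if_neg, mul_zero]
    rintro ⟨l, he, hl⟩
    exact hπ (std_nonneg l π m (fun v hv => (hl v hv).le) he)

theorem card_fix (m : R) :
    (Finset.univ.filter fun p : Equiv.Perm R => p 0 = m).card = (Fintype.card R - 1).factorial := by
  have h1 : ∀ m : R, (Finset.univ.filter fun p : Equiv.Perm R => p 0 = m).card =
      (Finset.univ.filter fun p : Equiv.Perm R => p 0 = 0).card := by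
    intro m
    symm
    refine Finset.card_bij' (fun p _ => Equiv.addLeft m * p) (fun p _ => Equiv.addLeft (-m) * p)
      ?_ ?_ ?_ ?_
    · intro π hπ; simp only [Finset.mem_filter, Finset.mem_univ, true_and] at hπ ⊢; simp [hπ]
    · intro π hπ; simp only [Finset.mem_filter, Finset.mem_univ, true_and] at hπ ⊢; simp [hπ]
    · intro π hπ; ext x; simp
    · intro π hπ; ext x; simp
  have h2 := Finset.card_eq_sum_card_fiberwise (s := (Finset.univ : Finset (Equiv.Perm R)))
    (t := (Finset.univ : Finset R)) (f := fun p => p 0) (fun _ _ => Finset.mem_coe.2 (Finset.mem_univ _))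
  rw [Finset.sum_congr rfl fun m _ => h1 m, Finset.sum_const, Finset.card_univ, Finset.card_univ,
    Fintype.card_perm, smul_eq_mul] at h2
  have hpos : 0 < Fintype.card R := Fintype.card_pos_iff.2 ⟨0⟩
  rw [h1 m]
  rw [← Nat.mul_factorial_pred hpos.ne'] at h2
  exact (Nat.eq_of_mul_eq_mul_left hpos h2).symm

theorem std_dc (hr : (Fintype.card R).Prime) (h2 : Fintype.card R ≠ 2) :
    ¬ ((Fintype.card R : ℤ) ^ 2) ∣ Dc (stdu : Option (K × R) → Option (K × R) → ℝ) := by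
  set r := Fintype.card R with hrd
  set S : ℤ := ∑ m : R, (SignType.sign (vmat (K := K) m).det : ℤ) with hS
  have hD : Dc (stdu : Option (K × R) → Option (K × R) → ℝ) =
      (((r - 1).factorial ^ Fintype.card K : ℕ) : ℤ) * S := by
    unfold Dc
    rw [Finset.sum_comm, hS, Finset.mul_sum]
    refine Finset.sum_congr rfl fun m _ => ?_
    rw [Finset.sum_congr rfl fun π _ => std_chi π m, ← Finset.sum_filter, Finset.sum_const,
      nsmul_eq_mul]
    congr 2
    have : (Finset.univ.filter fun π : K → Equiv.Perm R => ∀ k, π k 0 = m) =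
        Fintype.piFinset fun _ : K => Finset.univ.filter fun p : Equiv.Perm R => p 0 = m := by
      ext π; simp
    rw [this, Fintype.card_piFinset]
    simp [card_fix, hrd]
  have hs1 : ∀ m : R, (SignType.sign (vmat (K := K) m).det : ℤ) = 1 ∨
      (SignType.sign (vmat (K := K) m).det : ℤ) = -1 := by
    intro m
    have hne : (vmat (K := K) m).det ≠ 0 := by
      have h1 := std_det_ne (K := K) (fun _ => Equiv.addLeft m) m (fun _ => by simp)
      rw [std_det (K := K) (fun _ => Equiv.addLeft m) m (fun _ => by simp)] at h1
      exact right_ne_zero_of_mul h1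
    rcases lt_or_gt_of_ne hne with h | h
    · right; rw [sign_neg h]; rfl
    · left; rw [sign_pos h]; rfl
  have hodd : Odd S := by
    have : (S : ZMod 2) = 1 := by
      rw [hS]
      push_cast
      rw [Finset.sum_congr rfl (g := fun _ => (1 : ZMod 2))]
      · rw [Finset.sum_const, Finset.card_univ, nsmul_eq_mul, mul_one]
        have := hr.odd_of_ne_two h2
        exact ZMod.natCast_eq_one_iff_odd.2 this
      · intro m _
        have := hs1 m
        rcases this with h | h
        · have h' := congrArg (Int.cast : ℤ → ZMod 2) h
          push_cast at h'
          exact h'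
        · have h' := congrArg (Int.cast : ℤ → ZMod 2) h
          push_cast at h'
          rw [h']; rfl
    exact (ZMod.intCast_eq_one_iff_odd).1 this
  have hle : |S| ≤ r := by
    rw [hS]
    refine (Finset.abs_sum_le_sum_abs _ _).trans ?_
    rw [Finset.sum_congr rfl (g := fun _ => (1 : ℤ))]
    · simp [hrd]
    · intro m _
      rcases hs1 m with h | h <;> rw [h] <;> simp
  intro hdvd
  rw [hD] at hdvd
  have hcop : IsCoprime ((r : ℤ) ^ 2) (((r - 1).factorial ^ Fintype.card K : ℕ) : ℤ) := by
    rw [show ((r : ℤ) ^ 2) = ((r ^ 2 : ℕ) : ℤ) by push_cast; rfl, Nat.isCoprime_iff_coprime]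
    refine Nat.Coprime.pow _ _ ?_
    exact (Nat.coprime_factorial_iff hr.ne_one).2 (by
      rw [hr.minFac_eq]; have := hr.pos; omega)
  have h3 := hcop.dvd_of_dvd_mul_left hdvd
  have hS0 : S ≠ 0 := by
    rintro h
    rw [h] at hodd
    simp at hodd
  have h4 := Int.le_of_dvd (abs_pos.2 hS0) ((dvd_abs _ _).2 h3)
  have h5 : (2 : ℤ) ≤ r := by exact_mod_cast hr.two_le
  nlinarith

end CT2

section CT3

open Topology

variable {K R : Type*} [Fintype K] [DecidableEq K] [Fintype R] [DecidableEq R] [AddCommGroup R]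

/-- genericity -/
def gen1 (A : Finset (Option (K × R))) (u : Option (K × R) → Option (K × R) → ℝ) : Prop :=
  ∀ (σ : Option (K × R) → R) (x y : Option (K × R) → ℝ) (z : K → ℝ), (∀ v ∉ A, x v = 0) →
    ∑ v, x v • (u v ∘ sf (σ v)) + ∑ v, y v • (stdu v ∘ sf (σ v)) + ∑ k, z k • indk k = bv →
    (Finset.univ.filter fun v => x v ≠ 0).card + (Finset.univ.filter fun v => y v ≠ 0).card <
      (nph K R).card → x = 0

theorem card_nph_add : (nph K R).card + Fintype.card K = Fintype.card (Option (K × R)) := by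
  have h1 : Finset.univ.filter (fun v : Option (K × R) => ¬ ∀ k, v ≠ some (k, 0)) =
      Finset.univ.image fun k : K => some (k, (0 : R)) := by
    ext v; simp [eq_comm]
  have h2 := Finset.card_filter_add_card_filter_not (s := (Finset.univ : Finset (Option (K × R))))
    (fun v => ∀ k, v ≠ some (k, 0))
  rw [h1, Finset.card_image_of_injective, Finset.card_univ, Finset.card_univ] at h2
  · exact h2
  · intro k k' h
    simpa using h

/-- generating vectors -/
def gvec (u : Option (K × R) → Option (K × R) → ℝ) (σ : Option (K × R) → R) :
    Option K ⊕ (Option (K × R) ⊕ Option (K × R)) → Option (K × R) → ℝ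
  | .inl none => bv
  | .inl (some k) => indk k
  | .inr (.inl v) => u v ∘ sf (σ v)
  | .inr (.inr v) => stdu v ∘ sf (σ v)

theorem exists_generic (u0 : Option (K × R) → Option (K × R) → ℝ)
    (O : Set (Option (K × R) → Option (K × R) → ℝ)) (hO : IsOpen O) (h0 : u0 ∈ O)
    (A : Finset (Option (K × R))) :
    ∃ u ∈ O, gen1 A u ∧ ∀ v ∉ A, u v = u0 v := by
  induction A using Finset.induction_on with
  | empty =>
    refine ⟨u0, h0, ?_, fun _ _ => rfl⟩
    intro σ x y z hx _ _
    funext v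
    exact hx v (by simp)
  | insert v1 A hv1 ih =>
    obtain ⟨u, huO, hug, hu0⟩ := ih
    have hcont : Continuous fun y : Option (K × R) → ℝ => Function.update u v1 y :=
      continuous_const.update v1 continuous_id
    have hev : ∀ᶠ y in 𝓝 (u v1), Function.update u v1 y ∈ O := by
      refine hcont.continuousAt.eventually_mem (hO.mem_nhds ?_)
      simpa using huO
    obtain ⟨w, hw1, hw2⟩ := generic_near
      (fun X : {X : (Option (K × R) → R) × Finset (Option (K × R)) × Finset (Option (K × R)) //
          X.2.1.card + X.2.2.card + Fintype.card K + 1 < Fintype.card (Option (K × R))} =>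
        Submodule.comap (LinearMap.funLeft ℝ ℝ (sf (K := K) (X.1.1 v1)))
          (Submodule.span ℝ (gvec u X.1.1 ''
            (((Finset.univ : Finset (Option K)).disjSum (X.1.2.1.disjSum X.1.2.2) :
              Finset (Option K ⊕ (Option (K × R) ⊕ Option (K × R)))) :
                Set (Option K ⊕ (Option (K × R) ⊕ Option (K × R)))))))
      (by
        intro X h
        refine span_ne_top (gvec u X.1.1)
          ((Finset.univ : Finset (Option K)).disjSum (X.1.2.1.disjSum X.1.2.2)) ?_ ?_
        · rw [Finset.card_disjSum, Finset.card_disjSum, Finset.card_univ, Fintype.card_option]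
          have := X.2
          omega
        · rw [eq_top_iff]
          intro x _
          have hx : (x ∘ sf (- X.1.1 v1)) ∈ (⊤ : Submodule ℝ (Option (K × R) → ℝ)) := trivial
          rw [← h, Submodule.mem_comap] at hx
          convert hx using 1
          funext v
          simp [LinearMap.funLeft_apply, sf_sf, sf_zero]) hev
    refine ⟨Function.update u v1 w, hw1, ?_, ?_⟩
    · intro σ x y z hx he hcard
      have hrest : ∀ v, v ≠ v1 → Function.update u v1 w v = u v :=
        fun v hv => Function.update_of_ne hv _ _
      by_cases hx1 : x v1 = 0
      · refine hug σ x y z ?_ ?_ hcard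
        · intro v hv
          by_cases hvv : v = v1
          · rw [hvv, hx1]
          · exact hx v (by simp [hv, hvv])
        · rw [← he]
          congr 2
          refine Finset.sum_congr rfl fun v _ => ?_
          by_cases hvv : v = v1
          · rw [hvv, hx1, zero_smul, zero_smul]
          · rw [hrest v hvv]
      · exfalso
        set T := (Finset.univ.filter fun v => x v ≠ 0).erase v1 with hT
        set T' := Finset.univ.filter fun v => y v ≠ 0 with hT'
        have hmem : v1 ∈ Finset.univ.filter fun v => x v ≠ 0 := by simp [hx1]
        have hc1 : T.card + 1 = (Finset.univ.filter fun v => x v ≠ 0).card :=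
          Finset.card_erase_add_one hmem
        have hc2 := card_nph_add (K := K) (R := R)
        refine hw2 ⟨(σ, T, T'), by simp only; omega⟩ ?_
        rw [Submodule.mem_comap]
        show w ∘ sf (σ v1) ∈ _
        have e1 : w ∘ sf (σ v1) = (x v1)⁻¹ • (bv - (∑ v ∈ Finset.univ.erase v1, x v • (u v ∘ sf (σ v)) +
            ∑ v, y v • (stdu v ∘ sf (σ v)) + ∑ k, z k • indk k)) := by
          rw [eq_inv_smul_iff₀ hx1, ← he, ← Finset.add_sum_erase _ _ (Finset.mem_univ v1),
            Function.update_self]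
          rw [Finset.sum_congr rfl (g := fun v => x v • (u v ∘ sf (σ v)))]
          · abel
          · intro v hv
            rw [hrest v (Finset.ne_of_mem_erase hv)]
        rw [e1]
        refine Submodule.smul_mem _ _ (Submodule.sub_mem _ ?_ (Submodule.add_mem _
          (Submodule.add_mem _ ?_ ?_) ?_))
        · exact Submodule.subset_span ⟨.inl none, by simp, rfl⟩
        · refine Submodule.sum_mem _ fun v hv => ?_
          by_cases hxv : x v = 0
          · rw [hxv, zero_smul]; exact Submodule.zero_mem _
          · refine Submodule.smul_mem _ _ (Submodule.subset_span ⟨.inr (.inl v), ?_, rfl⟩)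
            simp [hT, hxv, Finset.ne_of_mem_erase hv]
        · refine Submodule.sum_mem _ fun v hv => ?_
          by_cases hxv : y v = 0
          · rw [hxv, zero_smul]; exact Submodule.zero_mem _
          · refine Submodule.smul_mem _ _ (Submodule.subset_span ⟨.inr (.inr v), ?_, rfl⟩)
            simp [hT', hxv]
        · refine Submodule.sum_mem _ fun k _ => ?_
          exact Submodule.smul_mem _ _ (Submodule.subset_span ⟨.inl (some k), by simp, rfl⟩)
    · intro v hv
      rw [Finset.mem_insert, not_or] at hv
      rw [Function.update_of_ne hv.1]
      exact hu0 v hv.2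

/-- mixed configuration -/
noncomputable def mixu (A : Finset (Option (K × R))) (u : Option (K × R) → Option (K × R) → ℝ) :
    Option (K × R) → Option (K × R) → ℝ := fun v => if v ∈ A then stdu v else u v

theorem sum_split_nph {M : Type*} [AddCommMonoid M] (f : Option (K × R) → M) :
    ∑ v, f v = ∑ v ∈ nph K R, f v + ∑ k, f (some (k, 0)) := by
  rw [← Finset.sum_filter_add_sum_filter_not Finset.univ (fun v => v ∈ nph K R)]
  congr 1
  · refine Finset.sum_congr ?_ fun _ _ => rfl
    ext v; simp
  · have h1 : Finset.univ.filter (fun v : Option (K × R) => ¬ v ∈ nph K R) =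
        Finset.univ.image fun k : K => some (k, (0 : R)) := by
      ext v; simp [nph, eq_comm]
    rw [h1, Finset.sum_image]
    intro k _ k' _ h
    simpa using h

theorem mix_wallFree (u : Option (K × R) → Option (K × R) → ℝ)
    (hu0 : ∀ k, u (some (k, 0)) = indk k) (hg : gen1 (nph K R) u)
    (A : Finset (Option (K × R))) (hA : A ⊆ nph K R) (v0 : Option (K × R)) (hv0 : v0 ∈ nph K R)
    (hv0A : v0 ∉ A) (π : K → Equiv.Perm R) (m : R) :
    WallFree (nph K R) bv (um (mixu A u) π m) (stdu v0 ∘ sf (sg π m v0)) := by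
  intro l t hl ht he
  -- the zero pattern forces a contradiction
  set x : Option (K × R) → ℝ := fun v => if v ∈ nph K R ∧ v ∉ A then l v else 0 with hx
  set y : Option (K × R) → ℝ := fun v => if v ∈ A then l v else if v = v0 then t else 0 with hy
  have key : ∑ v, x v • (u v ∘ sf (sg π m v)) + ∑ v, y v • (stdu v ∘ sf (sg π m v)) +
      ∑ k, l (some (k, 0)) • indk k = bv := by
    rw [← he]
    have h1 : Matrix.vecMul l (um (mixu A u) π m) =
        ∑ v, l v • (mixu A u v ∘ sf (sg π m v)) := by
      funext w
      simp [vm_apply]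
    have hphA : ∀ k, some (k, (0 : R)) ∉ A := fun k h => (some_mem_nph.1 (hA h)) rfl
    have hph : ∀ k, some (k, (0 : R)) ∉ nph K R := fun k h => (some_mem_nph.1 h) rfl
    have h2 : ∑ v, y v • (stdu v ∘ sf (sg π m v)) =
        ∑ v, (if v ∈ A then l v else 0) • (stdu v ∘ sf (sg π m v)) +
          t • (stdu v0 ∘ sf (sg π m v0)) := by
      have : t • (stdu v0 ∘ sf (sg π m v0)) =
          ∑ v, (if v = v0 then t else 0) • (stdu v ∘ sf (sg π m v)) := by
        rw [Finset.sum_eq_single v0]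
        · simp
        · intro v _ hv; simp [hv]
        · simp
      rw [this, ← Finset.sum_add_distrib]
      refine Finset.sum_congr rfl fun v _ => ?_
      rw [← add_smul]
      congr 1
      simp only [hy]
      by_cases hvA : v ∈ A
      · have : v ≠ v0 := by rintro rfl; exact hv0A hvA
        simp [hvA, this]
      · simp [hvA]
    rw [h1, h2, sum_split_nph (fun v => l v • (mixu A u v ∘ sf (sg π m v))),
      sum_split_nph (fun v => x v • (u v ∘ sf (sg π m v))),
      sum_split_nph (fun v => (if v ∈ A then l v else 0) • (stdu v ∘ sf (sg π m v)))]
    have e1 : ∀ k, l (some (k, 0)) • (mixu A u (some (k, 0)) ∘ sf (sg π m (some (k, 0)))) =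
        l (some (k, 0)) • indk k := by
      intro k
      rw [mixu, if_neg (hphA k), hu0, indk_sf]
    have e2 : ∀ k, x (some (k, 0)) • (u (some (k, 0)) ∘ sf (sg π m (some (k, 0)))) = 0 := by
      intro k
      simp [hx, hph]
    have e3 : ∀ k, (if some (k, (0 : R)) ∈ A then l (some (k, 0)) else 0) •
        (stdu (some (k, 0)) ∘ sf (sg π m (some (k, 0)))) = 0 := by
      intro k
      simp [hphA]
    rw [Finset.sum_congr rfl fun k _ => e1 k, Finset.sum_congr rfl fun k _ => e2 k,
      Finset.sum_congr rfl fun k _ => e3 k]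
    have e4 : ∑ v ∈ nph K R, l v • (mixu A u v ∘ sf (sg π m v)) =
        ∑ v ∈ nph K R, x v • (u v ∘ sf (sg π m v)) +
        ∑ v ∈ nph K R, (if v ∈ A then l v else 0) • (stdu v ∘ sf (sg π m v)) := by
      rw [← Finset.sum_add_distrib]
      refine Finset.sum_congr rfl fun v hv => ?_
      by_cases hvA : v ∈ A
      · simp [hx, mixu, hvA]
      · simp [hx, mixu, hvA, hv]
    rw [e4]
    simp only [Finset.sum_const_zero, add_zero]
    abel
  have main : (Finset.univ.filter fun v => x v ≠ 0).card +
      (Finset.univ.filter fun v => y v ≠ 0).card < (nph K R).card → False := by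
    intro hlt
    have hx0 := hg (sg π m) x y _ (by
      intro v hv
      simp [hx, hv]) key hlt
    rw [hx0] at key
    simp only [Pi.zero_apply, zero_smul, Finset.sum_const_zero, zero_add] at key
    -- a standard solution
    set l' : Option (K × R) → ℝ := fun v => if v ∈ nph K R then y v else l v with hl'
    have hyA : ∀ k, y (some (k, 0)) = 0 := by
      intro k
      have h1 : some (k, (0 : R)) ∉ A := fun h => (some_mem_nph.1 (hA h)) rfl
      have h2 : some (k, (0 : R)) ≠ v0 := by
        rintro rfl; exact (some_mem_nph.1 hv0) rfl
      simp [hy, h1, h2]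
    have hph : ∀ k, some (k, (0 : R)) ∉ nph K R := fun k h => (some_mem_nph.1 h) rfl
    have hsol : Matrix.vecMul l' (um stdu π m) = bv := by
      have h1 : Matrix.vecMul l' (um stdu π m) = ∑ v, l' v • (stdu v ∘ sf (sg π m v)) := by
        funext w
        simp [vm_apply]
      rw [h1, ← key, sum_split_nph, sum_split_nph (fun v => y v • (stdu v ∘ sf (sg π m v)))]
      have e1 : ∀ k, l' (some (k, 0)) • (stdu (some (k, 0)) ∘ sf (sg π m (some (k, 0)))) =
          l (some (k, 0)) • indk k := by
        intro k
        rw [stdu_zero, indk_sf, hl']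
        simp [hph]
      have e2 : ∀ k, y (some (k, 0)) • (stdu (some (k, 0)) ∘ sf (sg π m (some (k, 0)))) = 0 := by
        intro k
        rw [hyA, zero_smul]
      rw [Finset.sum_congr rfl fun k _ => e1 k, Finset.sum_congr rfl fun k _ => e2 k,
        Finset.sum_const_zero, add_zero]
      congr 1
      refine Finset.sum_congr rfl fun v hv => ?_
      simp [hl', hv]
    have hnn : ∀ v ∈ nph K R, 0 ≤ l' v := by
      intro v hv
      simp only [hl', hv, if_true, hy]
      split_ifs
      · exact hl v hv
      · exact ht
      · exact le_rfl
    have hπ := std_nonneg l' π m hnn hsol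
    obtain ⟨h1, -, h3⟩ := std_sol l' π m hπ 1 (by rw [hsol, one_smul])
    have hne : ∀ v ∈ nph K R, y v ≠ 0 := by
      intro v hv h
      have h4 : l' v = 0 := by simp [hl', hv, h]
      rw [← h1 v hv, h4] at h3
      norm_num at h3
    have : (nph K R).card ≤ (Finset.univ.filter fun v => y v ≠ 0).card :=
      Finset.card_le_card fun v hv => by simp [hne v hv]
    omega
  -- supports
  have hsx : (Finset.univ.filter fun v => x v ≠ 0) =
      ((nph K R) \ A).filter fun v => l v ≠ 0 := by
    ext v
    simp only [hx, Finset.mem_filter, Finset.mem_univ, true_and, Finset.mem_sdiff]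
    by_cases h : v ∈ nph K R ∧ v ∉ A
    · simp [h]
    · rw [if_neg h]; simp only [ne_eq, not_true_eq_false, h, false_and]
  have hsy : (Finset.univ.filter fun v => y v ≠ 0) ⊆
      (A.filter fun v => l v ≠ 0) ∪ (if t = 0 then ∅ else {v0}) := by
    intro v hv
    simp only [hy, Finset.mem_filter, Finset.mem_univ, true_and] at hv
    by_cases hvA : v ∈ A
    · simp only [hvA, if_true] at hv
      simp [hvA, hv]
    · simp only [hvA, if_false] at hv
      by_cases hvv : v = v0
      · simp only [hvv, if_true] at hv
        simp [hvv, hv]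
      · simp [hvv] at hv
  have hcard : (Finset.univ.filter fun v => x v ≠ 0).card +
      (Finset.univ.filter fun v => y v ≠ 0).card ≤
      ((nph K R).filter fun v => l v ≠ 0).card + (if t = 0 then 0 else 1) := by
    have h1 := (Finset.card_le_card hsy).trans (Finset.card_union_le _ _)
    have h2 : (((nph K R) \ A).filter fun v => l v ≠ 0).card + (A.filter fun v => l v ≠ 0).card =
        ((nph K R).filter fun v => l v ≠ 0).card := by
      rw [← Finset.card_union_of_disjoint, ← Finset.filter_union, Finset.sdiff_union_of_subset hA]
      exact Finset.disjoint_filter_filter Finset.sdiff_disjoint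
    have h3 : (if t = 0 then (∅ : Finset (Option (K × R))) else {v0}).card =
        (if t = 0 then 0 else 1) := by split_ifs <;> simp
    rw [hsx]
    rw [h3] at h1
    omega
  constructor
  · intro i hi j hj hli hlj
    by_contra hij
    apply main
    refine lt_of_le_of_lt hcard ?_
    have : ((nph K R).filter fun v => l v ≠ 0).card ≤ (((nph K R).erase i).erase j).card := by
      refine Finset.card_le_card fun v hv => ?_
      simp only [Finset.mem_filter, Finset.mem_erase] at hv ⊢
      exact ⟨fun h => hv.2 (h ▸ hlj), fun h => hv.2 (h ▸ hli), hv.1⟩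
    rw [Finset.card_erase_of_mem (by simp [Ne.symm hij, hj]), Finset.card_erase_of_mem hi] at this
    have h2 : 1 < (nph K R).card := Finset.one_lt_card.2 ⟨i, hi, j, hj, hij⟩
    split_ifs <;> omega
  · intro ht0 i hi hli
    apply main
    refine lt_of_le_of_lt hcard ?_
    rw [if_pos ht0, add_zero]
    refine Finset.card_lt_card ⟨Finset.filter_subset _ _, fun h => ?_⟩
    have := h hi
    simp [hli] at this

theorem mix_dc (h2 : ∀ c : R, ∃ c', c = c' + c') (u : Option (K × R) → Option (K × R) → ℝ)
    (hu0 : ∀ k, u (some (k, 0)) = indk k) (hu : ∀ v ∈ nph K R, 0 < u v none)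
    (hg : gen1 (nph K R) u) (A : Finset (Option (K × R))) (hA : A ⊆ nph K R) :
    ((Fintype.card R : ℤ) ^ 2) ∣ Dc u - Dc (mixu A u) := by
  induction A using Finset.induction_on with
  | empty =>
    have : mixu ∅ u = u := by funext v; simp [mixu]
    rw [this]; simp
  | insert v0 A hv0 ih =>
    have hA' : A ⊆ nph K R := fun v hv => hA (Finset.mem_insert_of_mem hv)
    have hv0' : v0 ∈ nph K R := hA (Finset.mem_insert_self _ _)
    have h1 := ih hA'
    have h3 := dc_step h2 (mixu A u) (fun k => by
        rw [mixu, if_neg (fun h => (some_mem_nph.1 (hA' h)) rfl), hu0])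
      (fun v hv => by
        unfold mixu
        split_ifs
        · rw [stdu_none v hv]; exact one_pos
        · exact hu v hv) v0 hv0' (stdu v0) (by rw [stdu_none v0 hv0']; exact one_pos)
      (fun π m => mix_wallFree u hu0 hg A hA' v0 hv0' hv0 π m)
    have e : Function.update (mixu A u) v0 (stdu v0) = mixu (insert v0 A) u := by
      funext v
      by_cases hv : v = v0
      · subst hv; simp [mixu]
      · simp [mixu, hv]
    rw [e] at h3
    have := dvd_add h1 h3
    rwa [sub_add_sub_cancel] at this

theorem ct_generic (h2 : ∀ c : R, ∃ c', c = c' + c') (hr : (Fintype.card R).Prime)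
    (hr2 : Fintype.card R ≠ 2) (u : Option (K × R) → Option (K × R) → ℝ)
    (hu0 : ∀ k, u (some (k, 0)) = indk k) (hu : ∀ v ∈ nph K R, 0 < u v none)
    (hg : gen1 (nph K R) u) :
    ∃ π m, ∃ l, Matrix.vecMul l (um u π m) = bv ∧ ∀ v ∈ nph K R, 0 < l v := by
  by_contra hcon
  push Not at hcon
  have hD : Dc u = 0 := by
    unfold Dc
    refine Finset.sum_eq_zero fun π _ => Finset.sum_eq_zero fun m _ => ?_
    unfold chi
    rw [if_neg, mul_zero]
    rintro ⟨l, h1, h3⟩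
    obtain ⟨v, hv, hv'⟩ := hcon π m l h1
    exact absurd (h3 v hv) (not_lt.2 hv')
  have h1 := mix_dc h2 u hu0 hu hg (nph K R) (Finset.Subset.refl _)
  have e : mixu (nph K R) u = stdu := by
    funext v
    unfold mixu
    split_ifs with hv
    · rfl
    · have : ∃ k, v = some (k, 0) := by simpa [nph] using hv
      obtain ⟨k, rfl⟩ := this
      rw [hu0, stdu_zero]
  rw [hD, e, zero_sub, dvd_neg] at h1
  exact std_dc hr hr2 h1

/-- Optimal colored Tverberg theorem, in vector form. -/
theorem ct_closed (h2 : ∀ c : R, ∃ c', c = c' + c') (hr : (Fintype.card R).Prime)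
    (hr2 : Fintype.card R ≠ 2) (P : Option (K × R) → K → ℝ) :
    ∃ (π : K → Equiv.Perm R) (m : R) (l : Option (K × R) → ℝ), (∀ v, 0 ≤ l v) ∧
      ∑ v ∈ nph K R, l v = 1 ∧
      ∀ k t, ∑ v ∈ nph K R, (if sg π m v = t then l v * P v k else 0) =
        ∑ v ∈ nph K R, (if sg π m v = 0 then l v * P v k else 0) := by
  set u0 : Option (K × R) → Option (K × R) → ℝ := fun v w =>
    if v ∈ nph K R then (match w with
      | none => 1
      | some (k, t) => if t = 0 then P v k else 0) else stdu v w with hu0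
  set C : (K → Equiv.Perm R) → R →
      Set ((Option (K × R) → Option (K × R) → ℝ) × (Option (K × R) → ℝ)) := fun π m =>
    {z | ∑ v ∈ nph K R, z.2 v * z.1 v none = 1 ∧ ∀ k t,
      ∑ v ∈ nph K R, z.2 v * z.1 v (sf (sg π m v) (some (k, t))) =
      ∑ v ∈ nph K R, z.2 v * z.1 v (sf (sg π m v) (some (k, 0)))} with hC
  have hCc : ∀ π m, IsClosed (C π m) := by
    intro π m
    have : C π m = {z | ∑ v ∈ nph K R, z.2 v * z.1 v none = 1} ∩ ⋂ k, ⋂ t,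
      {z : (Option (K × R) → Option (K × R) → ℝ) × (Option (K × R) → ℝ) |
        ∑ v ∈ nph K R, z.2 v * z.1 v (sf (sg π m v) (some (k, t))) =
        ∑ v ∈ nph K R, z.2 v * z.1 v (sf (sg π m v) (some (k, 0)))} := by
      ext z; simp [hC]
    rw [this]
    refine IsClosed.inter (isClosed_eq (by fun_prop) (by fun_prop))
      (isClosed_iInter fun k => isClosed_iInter fun t => isClosed_eq (by fun_prop) (by fun_prop))
  set Kc : Set (Option (K × R) → ℝ) := Set.Icc 0 (fun _ => 2) with hK
  have hKc : IsCompact Kc := isCompact_Icc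
  have hcl : IsClosed (⋃ x : (K → Equiv.Perm R) × R, {u | ∃ l ∈ Kc, (u, l) ∈ C x.1 x.2}) :=
    isClosed_iUnion_of_finite fun x => closed_exists hKc (hCc x.1 x.2)
  have hmem : u0 ∈ (⋃ x : (K → Equiv.Perm R) × R, {u | ∃ l ∈ Kc, (u, l) ∈ C x.1 x.2}) := by
    by_contra hnot
    have hO2 : IsOpen {u : Option (K × R) → Option (K × R) → ℝ | ∀ v ∈ nph K R, 1 / 2 < u v none} := by
      have : {u : Option (K × R) → Option (K × R) → ℝ | ∀ v ∈ nph K R, 1 / 2 < u v none} =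
          ⋂ v ∈ nph K R, {u : Option (K × R) → Option (K × R) → ℝ | 1 / 2 < u v none} := by
        ext u; simp
      rw [this]
      exact isOpen_biInter_finset fun v _ => isOpen_lt (by fun_prop) (by fun_prop)
    obtain ⟨u, ⟨huO, hun⟩, hug, hus⟩ := exists_generic u0 _ (hcl.isOpen_compl.inter hO2)
      ⟨hnot, fun v hv => by simp only [hu0, hv, if_true]; norm_num⟩ (nph K R)
    obtain ⟨π, m, l, hl1, hl2⟩ := ct_generic h2 hr hr2 u (fun k => by
        have hk : some (k, (0 : R)) ∉ nph K R := fun h => (some_mem_nph.1 h) rfl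
        rw [hus _ hk]
        funext w
        simp only [hu0, hk, if_false, stdu_zero]) (fun v hv => by
        have := hun v hv; linarith) hug
    apply huO
    rw [Set.mem_iUnion]
    have hk : ∀ k, some (k, (0 : R)) ∉ nph K R := fun k h => (some_mem_nph.1 h) rfl
    have huk : ∀ k, u (some (k, 0)) = indk k := fun k => by
        rw [hus _ (hk k)]
        funext w
        simp only [hu0, hk k, if_false, stdu_zero]
    have hsum1 : ∑ v ∈ nph K R, l v * u v none = 1 := by
      have h := congrFun hl1 none
      rw [vm_apply, sum_split_nph, bv_none] at h
      simp only [sf_none, huk, indk, mul_zero, Finset.sum_const_zero, add_zero] at h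
      exact h
    refine ⟨(π, m), fun v => if v ∈ nph K R then l v else 0, ⟨fun v => ?_, fun v => ?_⟩, ?_, ?_⟩
    · show 0 ≤ if v ∈ nph K R then l v else 0
      split_ifs with hv
      · exact (hl2 v hv).le
      · exact le_rfl
    · show (if v ∈ nph K R then l v else 0) ≤ 2
      split_ifs with hv
      · have h3 := Finset.single_le_sum (f := fun v => l v * u v none) (fun w hw =>
          mul_nonneg (hl2 w hw).le (by have := hun w hw; linarith)) hv
        rw [hsum1] at h3
        have h4 := hun v hv
        have h5 := hl2 v hv
        nlinarith
      · norm_num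
    · rw [← hsum1]
      refine Finset.sum_congr rfl fun v hv => ?_
      simp [hv]
    · intro k t
      have hh : ∀ t, ∑ v ∈ nph K R, (if v ∈ nph K R then l v else 0) *
          u v (sf (sg π m v) (some (k, t))) = - l (some (k, 0)) := by
        intro t
        have h := congrFun hl1 (some (k, t))
        rw [vm_apply, sum_split_nph, bv_some] at h
        simp only [huk] at h
        rw [Finset.sum_eq_single k (f := fun x => l (some (x, 0)) * indk x (sf (sg π m (some (x, 0)))
          (some (k, t))))] at h
        · have e : (indk k (sf (sg π m (some (k, 0))) (some (k, t))) : ℝ) = 1 := by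
            simp [indk]
          rw [e, mul_one] at h
          rw [Finset.sum_congr rfl (g := fun v => l v * u v (sf (sg π m v) (some (k, t))))]
          · linarith
          · intro v hv; simp [hv]
        · intro k' _ hk'
          simp [indk, Ne.symm hk']
        · simp
      show _ = _
      simp only
      rw [hh t, hh 0]
  rw [Set.mem_iUnion] at hmem
  obtain ⟨⟨π, m⟩, l, hlK, hl1, hl2⟩ := hmem
  refine ⟨π, m, l, hlK.1, ?_, fun k t => ?_⟩
  · rw [← hl1]
    refine Finset.sum_congr rfl fun v hv => ?_
    simp [hu0, hv]
  · have hh : ∀ t, ∑ v ∈ nph K R, (if sg π m v = t then l v * P v k else 0) =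
        ∑ v ∈ nph K R, l v * u0 v (sf (sg π m v) (some (k, t))) := by
      intro t
      refine Finset.sum_congr rfl fun v hv => ?_
      simp only [hu0, hv, if_true, sf_some, sub_eq_zero, mul_ite, mul_zero]
      simp only [eq_comm]
    rw [hh t, hh 0]
    exact hl2 k t

end CT3

section AS1

theorem ex_tau (d r N : ℕ) (hrp : Nat.Prime r) (hr2 : r ≠ 2)
    (pts : Fin (N + 1) → Fin d → ℝ)
    (c : Fin (N + 1) → Fin (d + 2))
    (hc : ∀ j : Fin (d + 2),
      (Finset.univ.filter fun i => c i = j).card = if (j : ℕ) = d + 1 then 1 else r - 1) :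
    ∃ τ : Fin (N + 1) → ZMod r, (∀ v w, c v = c w → τ v = τ w → v = w) ∧
      ∃ x : Fin d → ℝ, ∀ i, x ∈ convexHull ℝ (pts '' {v | τ v = i}) := by
  haveI : Fact r.Prime := ⟨hrp⟩
  -- enumeration of the colour classes
  have hlast : ∃ vs, Finset.univ.filter (fun i => c i = Fin.last (d + 1)) = {vs} := by
    rw [← Finset.card_eq_one, hc]; simp
  obtain ⟨vs, hvs⟩ := hlast
  have hvsc : ∀ v, c v = Fin.last (d + 1) ↔ v = vs := by
    intro v
    have : v ∈ Finset.univ.filter (fun i => c i = Fin.last (d + 1)) ↔ v ∈ ({vs} : Finset _) := by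
      rw [hvs]
    simpa using this
  have he : ∀ k : Fin (d + 1), Nonempty ({a : ZMod r // a ≠ 0} ≃ {v // c v = Fin.castSucc k}) := by
    intro k
    rw [← Fintype.card_eq]
    have h1 := hc (Fin.castSucc k)
    rw [if_neg (by simp; omega)] at h1
    have h2 : Fintype.card {v // c v = Fin.castSucc k} = r - 1 := by
      rw [Fintype.card_subtype]; exact h1
    have h3 : Fintype.card {a : ZMod r // a ≠ 0} = r - 1 := by
      rw [Fintype.card_subtype_compl, ZMod.card]; simp
    rw [h2, ← h3]
  have e := fun k => (he k).some
  let g : Option (Fin (d + 1) × ZMod r) → Fin (N + 1) := fun w => match w with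
    | none => vs
    | some (k, a) => if h : a ≠ 0 then (e k ⟨a, h⟩ : Fin (N + 1)) else vs
  have hg0 : g none = vs := rfl
  have hg1 : ∀ k a (h : a ≠ 0), g (some (k, a)) = e k ⟨a, h⟩ := fun k a h => by
    show (if h : a ≠ 0 then (e k ⟨a, h⟩ : Fin (N + 1)) else vs) = _
    rw [dif_pos h]
  have hcg1 : ∀ k a (h : a ≠ 0), c (g (some (k, a))) = Fin.castSucc k := fun k a h => by
    rw [hg1 k a h]; exact (e k ⟨a, h⟩).2
  have hcg0 : c (g none) = Fin.last (d + 1) := (hvsc _).2 hg0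
  have hsurj : ∀ v, ∃ w ∈ nph (Fin (d + 1)) (ZMod r), g w = v := by
    intro v
    rcases Fin.eq_castSucc_or_eq_last (c v) with ⟨k, hk⟩ | hk
    · refine ⟨some (k, ((e k).symm ⟨v, hk⟩).1), some_mem_nph.2 ((e k).symm ⟨v, hk⟩).2, ?_⟩
      rw [hg1 _ _ ((e k).symm ⟨v, hk⟩).2]
      simp
    · exact ⟨none, none_mem_nph, by rw [hg0, (hvsc v).1 hk]⟩
  have hkey : ∀ w ∈ nph (Fin (d + 1)) (ZMod r), ∀ w' ∈ nph (Fin (d + 1)) (ZMod r),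
      c (g w) = c (g w') → (w = none ∧ w' = none) ∨
        ∃ k a a', a ≠ 0 ∧ a' ≠ 0 ∧ w = some (k, a) ∧ w' = some (k, a') := by
    intro w hw w' hw' h
    rcases w with _ | ⟨k, a⟩ <;> rcases w' with _ | ⟨k', a'⟩
    · simp
    · rw [hcg0, hcg1 _ _ (some_mem_nph.1 hw')] at h
      exact absurd h.symm (Fin.castSucc_ne_last _)
    · rw [hcg0, hcg1 _ _ (some_mem_nph.1 hw)] at h
      exact absurd h (Fin.castSucc_ne_last _)
    · rw [hcg1 _ _ (some_mem_nph.1 hw'), hcg1 _ _ (some_mem_nph.1 hw)] at h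
      obtain rfl := Fin.castSucc_injective _ h
      exact Or.inr ⟨k, a, a', some_mem_nph.1 hw, some_mem_nph.1 hw', rfl, rfl⟩
  have hginj : ∀ w ∈ nph (Fin (d + 1)) (ZMod r), ∀ w' ∈ nph (Fin (d + 1)) (ZMod r),
      g w = g w' → w = w' := by
    intro w hw w' hw' h
    rcases hkey w hw w' hw' (by rw [h]) with ⟨rfl, rfl⟩ | ⟨k, a, a', ha, ha', rfl, rfl⟩
    · rfl
    · rw [hg1 _ _ ha, hg1 _ _ ha'] at h
      have := (e k).injective (Subtype.ext h)
      rw [Subtype.mk.injEq] at this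
      rw [this]
  choose q hq hgq using hsurj
  have hqg : ∀ w ∈ nph (Fin (d + 1)) (ZMod r), q (g w) = w := fun w hw =>
    hginj _ (hq _) _ hw (hgq _)
  have hsum : ∀ F : Option (Fin (d + 1) × ZMod r) → ℝ,
      ∑ w ∈ nph (Fin (d + 1)) (ZMod r), F w = ∑ v, F (q v) := by
    intro F
    refine Finset.sum_nbij' g q (by simp) (fun v _ => hq v) hqg (fun v _ => hgq v) ?_
    intro w hw
    rw [hqg w hw]
  have h2 : ∀ c : ZMod r, ∃ c', c = c' + c' := by
    intro c
    have h20 : (2 : ZMod r) ≠ 0 := by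
      intro h
      have h' : ((2 : ℕ) : ZMod r) = 0 := by exact_mod_cast h
      rw [ZMod.natCast_eq_zero_iff] at h'
      exact hr2 ((Nat.prime_dvd_prime_iff_eq hrp Nat.prime_two).1 h')
    refine ⟨c * 2⁻¹, ?_⟩
    rw [← mul_add, ← two_mul, mul_inv_cancel₀ h20, mul_one]
  obtain ⟨π, m, l, hl0, hl1, hl2⟩ := ct_closed (K := Fin (d + 1)) h2
    (by rw [ZMod.card]; exact hrp) (by rw [ZMod.card]; exact hr2)
    (fun w => Fin.snoc (α := fun _ => ℝ) (pts (g w)) 1)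
  have hr0 : (r : ℝ) ≠ 0 := by exact_mod_cast hrp.ne_zero
  refine ⟨fun v => sg π m (q v), ?_, ?_⟩
  · intro v w hcv hτ
    have := hkey (q v) (hq v) (q w) (hq w) (by rw [hgq, hgq, hcv])
    rcases this with ⟨h1, h2⟩ | ⟨k, a, a', ha, ha', h1, h2⟩
    · rw [← hgq v, ← hgq w, h1, h2]
    · simp only [h1, h2, sg_some] at hτ
      rw [← hgq v, ← hgq w, h1, h2, (π k).injective hτ]
  · have hw : ∀ t, ∑ v, (if sg π m (q v) = t then l (q v) else 0) =
        ∑ v, (if sg π m (q v) = 0 then l (q v) else 0) := by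
      intro t
      have := hl2 (Fin.last d) t
      rw [hsum, hsum] at this
      simpa using this
    have hw1 : ∀ t, (r : ℝ) * ∑ v, (if sg π m (q v) = t then l (q v) else 0) = 1 := by
      intro t
      have h3 : ∑ t : ZMod r, ∑ v, (if sg π m (q v) = t then l (q v) else 0) = 1 := by
        rw [Finset.sum_comm, ← hl1, hsum]
        simp
      rw [Finset.sum_congr rfl fun t _ => hw t] at h3
      rw [hw t]
      simpa [ZMod.card] using h3
    refine ⟨fun k => r * ∑ v, (if sg π m (q v) = 0 then l (q v) * pts v k else 0), fun t => ?_⟩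
    have hx : ∀ k, ∑ v, (if sg π m (q v) = t then l (q v) * pts v k else 0) =
        ∑ v, (if sg π m (q v) = 0 then l (q v) * pts v k else 0) := by
      intro k
      have := hl2 (Fin.castSucc k) t
      rw [hsum, hsum] at this
      simpa [hgq] using this
    have := (convex_convexHull ℝ (pts '' {v | sg π m (q v) = t})).sum_mem
      (t := Finset.univ.filter fun v => sg π m (q v) = t) (w := fun v => r * l (q v)) (z := pts)
      (fun v _ => mul_nonneg (Nat.cast_nonneg _) (hl0 _))
      (by rw [← Finset.mul_sum, Finset.sum_filter]; exact hw1 t)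
      (fun v hv => subset_convexHull ℝ _ ⟨v, by simpa using hv, rfl⟩)
    convert this using 1
    funext k
    rw [← hx k, Finset.sum_apply, Finset.mul_sum, Finset.sum_filter]
    refine Finset.sum_congr rfl fun v _ => ?_
    split_ifs
    · simp [mul_assoc]
    · simp

end AS1

section AS2

theorem drop_vertex {ι : Type*} [Fintype ι] {d : ℕ} (pts : ι → Fin d → ℝ)
    (hinj : Function.Injective pts) (B : Finset ι) (hB : d + 2 ≤ B.card) (x : Fin d → ℝ)
    (hx : x ∈ convexHull ℝ (pts '' (B : Set ι))) :
    ∃ w ∈ B, x ∈ convexHull ℝ (pts '' {v | v ∈ B ∧ v ≠ w}) := by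
  rw [convexHull_eq_union] at hx
  simp only [Set.mem_iUnion] at hx
  obtain ⟨t, hts, hti, hxt⟩ := hx
  have hcard : t.card ≤ d + 1 := by
    have := hti.card_le_finrank_succ
    have h2 := Submodule.finrank_le (vectorSpan ℝ (Set.range ((↑) : t → Fin d → ℝ)))
    rw [Module.finrank_fin_fun] at h2
    rw [Fintype.card_coe] at this
    omega
  have : ∃ y ∈ B.image pts, y ∉ t := by
    by_contra! h
    have := Finset.card_le_card (show B.image pts ⊆ t from fun y hy => h y hy)
    rw [Finset.card_image_of_injective _ hinj] at this
    omega
  obtain ⟨y, hy, hyt⟩ := this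
  obtain ⟨w, hw, rfl⟩ := Finset.mem_image.1 hy
  refine ⟨w, hw, convexHull_mono ?_ hxt⟩
  intro z hz
  obtain ⟨v, hv, rfl⟩ := hts hz
  exact ⟨v, ⟨hv, fun h => hyt (h ▸ hz)⟩, rfl⟩

theorem ex_tau2 (d r N : ℕ) (hrp : Nat.Prime r) (hr2 : r ≠ 2)
    (pts : Fin (N + 1) → Fin d → ℝ) (hinj : Function.Injective pts)
    (c : Fin (N + 1) → Fin (d + 2))
    (hc : ∀ j : Fin (d + 2),
      (Finset.univ.filter fun i => c i = j).card = if (j : ℕ) = d + 1 then 1 else r - 1) :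
    ∃ τ : Fin (N + 1) → ZMod r, (∀ v w, c v = c w → τ v = τ w → v = w) ∧
      (∃ x : Fin d → ℝ, ∀ i, x ∈ convexHull ℝ (pts '' {v | τ v = i})) ∧
      ∃ vs, (∀ v, c v = Fin.last (d + 1) ↔ v = vs) ∧
        ∃ k0 : Fin (d + 1), ∀ v, c v = Fin.castSucc k0 → τ v ≠ τ vs := by
  haveI : Fact r.Prime := ⟨hrp⟩
  have hlast : ∃ vs, Finset.univ.filter (fun i => c i = Fin.last (d + 1)) = {vs} := by
    rw [← Finset.card_eq_one, hc]; simp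
  obtain ⟨vs, hvs⟩ := hlast
  have hvsc : ∀ v, c v = Fin.last (d + 1) ↔ v = vs := by
    intro v
    have : v ∈ Finset.univ.filter (fun i => c i = Fin.last (d + 1)) ↔ v ∈ ({vs} : Finset _) := by
      rw [hvs]
    simpa using this
  obtain ⟨τ, hτ, x, hx⟩ := ex_tau d r N hrp hr2 pts c hc
  by_cases hk : ∃ k0 : Fin (d + 1), ∀ v, c v = Fin.castSucc k0 → τ v ≠ τ vs
  · exact ⟨τ, hτ, ⟨x, hx⟩, vs, hvsc, hk⟩
  push Not at hk
  choose u huc hu using hk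
  have hlack : ∀ k : Fin (d + 1), ∃ i, ∀ v, c v = Fin.castSucc k → τ v ≠ i := by
    intro k
    by_contra! h
    have h1 : (Finset.univ : Finset (ZMod r)) ⊆
        (Finset.univ.filter fun v => c v = Fin.castSucc k).image τ := by
      intro i _
      obtain ⟨v, hv, hi⟩ := h i
      exact Finset.mem_image.2 ⟨v, by simpa using hv, hi⟩
    have h2 := (Finset.card_le_card h1).trans Finset.card_image_le
    have h3 := hc (Fin.castSucc k)
    rw [if_neg (by simp; omega)] at h3
    rw [h3, Finset.card_univ, ZMod.card] at h2
    have := hrp.pos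
    omega
  have hcvs : c vs = Fin.last (d + 1) := (hvsc vs).2 rfl
  obtain ⟨w, hwB, hwx⟩ := drop_vertex pts hinj (Finset.univ.filter fun v => τ v = τ vs) (by
    let U : Option (Fin (d + 1)) → Fin (N + 1) := fun o => o.elim vs u
    have hU : ∀ o, U o ∈ Finset.univ.filter fun v => τ v = τ vs := by
      rintro (_ | k)
      · simp [U]
      · simpa [U] using hu k
    have hUi : Function.Injective U := by
      have : Function.Injective (c ∘ U) := by
        rintro (_ | k) (_ | k') h
        · rfl
        · simp only [U, Function.comp, Option.elim, hcvs, huc] at h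
          exact absurd h.symm (Fin.castSucc_ne_last _)
        · simp only [U, Function.comp, Option.elim, hcvs, huc] at h
          exact absurd h (Fin.castSucc_ne_last _)
        · simp only [U, Function.comp, Option.elim, huc] at h
          rw [Fin.castSucc_injective _ h]
      exact this.of_comp
    have := Finset.card_le_card (show Finset.univ.image U ⊆ Finset.univ.filter fun v => τ v = τ vs from by
      intro v hv
      obtain ⟨o, _, rfl⟩ := Finset.mem_image.1 hv
      exact hU o)
    rw [Finset.card_image_of_injective _ hUi] at this
    rw [Finset.card_univ, Fintype.card_option, Fintype.card_fin] at this
    exact this) x (by simpa using hx (τ vs))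
  have hwτ : τ w = τ vs := by simpa using hwB
  obtain ⟨k, hkw⟩ : ∃ k : Fin (d + 1), c w = Fin.castSucc k ∨ w = vs := by
    rcases Fin.eq_castSucc_or_eq_last (c w) with ⟨k, hk⟩ | hk
    · exact ⟨k, Or.inl hk⟩
    · exact ⟨0, Or.inr ((hvsc w).1 hk)⟩
  obtain ⟨i', hi'⟩ := hlack k
  have hi'' : i' ≠ τ vs := fun h => hi' (u k) (huc k) (by rw [hu, h])
  have hnew : ∀ v, c v = c w → v ≠ w → τ v ≠ i' := by
    intro v hv hvw
    rcases hkw with h | h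
    · exact hi' v (by rw [hv, h])
    · rw [h, hcvs, hvsc] at hv
      exact absurd (hv.trans h.symm) hvw
  refine ⟨Function.update τ w i', ?_, ⟨x, fun i => ?_⟩, vs, hvsc, k, ?_⟩
  · intro v v' hcv hv
    by_cases h1 : v = w <;> by_cases h2 : v' = w
    · rw [h1, h2]
    · subst h1
      rw [Function.update_self, Function.update_of_ne h2] at hv
      exact absurd hv.symm (hnew v' hcv.symm h2)
    · subst h2
      rw [Function.update_self, Function.update_of_ne h1] at hv
      exact absurd hv (hnew v hcv h1)
    · rw [Function.update_of_ne h2, Function.update_of_ne h1] at hv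
      exact hτ v v' hcv hv
  · by_cases hi : i = τ vs
    · refine convexHull_mono (Set.image_mono ?_) hwx
      rintro v ⟨hv, hvw⟩
      show Function.update τ w i' v = i
      rw [Function.update_of_ne hvw, hi]
      simpa using hv
    · refine convexHull_mono (Set.image_mono ?_) (hx i)
      intro v hv
      have hv' : τ v = i := hv
      show Function.update τ w i' v = i
      rw [Function.update_of_ne, hv']
      rintro rfl
      exact hi (hv'.symm.trans hwτ)
  · intro v hv
    have hvvs : v ≠ vs := by
      rintro rfl
      rw [hcvs] at hv
      exact Fin.castSucc_ne_last _ hv.symm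
    rcases hkw with h | h
    · have hwvs : vs ≠ w := by
        rintro rfl
        rw [hcvs] at h
        exact Fin.castSucc_ne_last _ h.symm
      rw [Function.update_of_ne hwvs]
      by_cases hvw : v = w
      · rw [hvw, Function.update_self]; exact hi''
      · rw [Function.update_of_ne hvw]
        intro h3
        exact hvw (hτ v w (by rw [hv, h]) (by rw [h3, hwτ]))
    · subst h
      rw [Function.update_self, Function.update_of_ne hvvs]
      exact hi' v hv

end AS2

section AS3

theorem det_ne_zero_of_genPos {ι : Type*} {d : ℕ} (hd : 1 ≤ d) (pts : ι → Fin d → ℝ)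
    (hinj : Function.Injective pts) (hgen : GenPos d (Set.range pts))
    (u : Fin (d + 1) → ι) (hu : Function.Injective u) (M : Matrix (Fin (d + 1)) (Fin (d + 1)) ℝ)
    (hM : ∀ k, M k = Fin.snoc (α := fun _ => ℝ) (pts (u k)) 1) : M.det ≠ 0 := by
  intro h
  obtain ⟨v, hv0, hv⟩ := Matrix.exists_mulVec_eq_zero_iff.2 h
  have hk : ∀ k, (∑ j : Fin d, pts (u k) j * v (Fin.castSucc j)) + v (Fin.last d) = 0 := by
    intro k
    have := congrFun hv k
    simpa [Matrix.mulVec, dotProduct, hM, Fin.sum_univ_castSucc] using this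
  let φ : Module.Dual ℝ (Fin d → ℝ) :=
    ∑ j : Fin d, v (Fin.castSucc j) • LinearMap.proj j
  have hφ : ∀ y, φ y = ∑ j : Fin d, y j * v (Fin.castSucc j) := by
    intro y
    simp [φ, LinearMap.sum_apply, mul_comm]
  have hφ0 : φ ≠ 0 := by
    intro h0
    have hj : ∀ j, v (Fin.castSucc j) = 0 := by
      intro j
      have := hφ (Pi.single j 1)
      rw [h0] at this
      simpa [Pi.single_apply] using this.symm
    apply hv0
    funext k
    refine Fin.lastCases ?_ (fun j => hj j) k
    have := hk 0
    simpa [hj] using this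
  refine hgen (d - 1) (by omega) (Finset.univ.image fun k => pts (u k)) ?_ ?_
    ⟨AffineSubspace.mk' (pts (u 0)) (LinearMap.ker φ), ?_, ?_⟩
  · intro y hy
    obtain ⟨k, _, rfl⟩ := Finset.mem_image.1 (Finset.mem_coe.1 hy)
    exact ⟨_, rfl⟩
  · rw [Finset.card_image_of_injective (f := fun k => pts (u k)) _ (hinj.comp hu), Finset.card_univ, Fintype.card_fin]
    omega
  · rw [AffineSubspace.direction_mk']
    have := Module.Dual.finrank_ker_add_one_of_ne_zero hφ0
    rw [Module.finrank_fin_fun] at this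
    omega
  · intro y hy
    obtain ⟨k, _, rfl⟩ := Finset.mem_image.1 (Finset.mem_coe.1 hy)
    rw [SetLike.mem_coe, AffineSubspace.mem_mk', LinearMap.mem_ker, vsub_eq_sub, map_sub, hφ, hφ]
    linarith [hk k, hk 0]

theorem convexHull_coords {d : ℕ} (q : Fin (d + 1) → Fin d → ℝ) (x : Fin d → ℝ)
    (M : Matrix (Fin (d + 1)) (Fin (d + 1)) ℝ)
    (hM : ∀ k, M k = Fin.snoc (α := fun _ => ℝ) (q k) 1) :
    x ∈ convexHull ℝ (Set.range q) ↔ ∃ l : Fin (d + 1) → ℝ, (∀ j, 0 ≤ l j) ∧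
      Matrix.vecMul l M = Fin.snoc (α := fun _ => ℝ) x 1 := by
  have key : ∀ l : Fin (d + 1) → ℝ, Matrix.vecMul l M = Fin.snoc (α := fun _ => ℝ) x 1 ↔
      (∑ k, l k = 1 ∧ ∑ k, l k • q k = x) := by
    intro l
    constructor
    · intro h
      constructor
      · have := congrFun h (Fin.last d)
        simpa [Matrix.vecMul, dotProduct, hM] using this
      · funext j
        have := congrFun h (Fin.castSucc j)
        simpa [Matrix.vecMul, dotProduct, hM] using this
    · rintro ⟨h1, h2⟩
      funext k
      refine Fin.lastCases ?_ (fun j => ?_) k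
      · simpa [Matrix.vecMul, dotProduct, hM] using h1
      · have := congrFun h2 j
        simpa [Matrix.vecMul, dotProduct, hM] using this
  simp only [key]
  constructor
  · intro hx
    have hsub : convexHull ℝ (Set.range q) ⊆
        (Fintype.linearCombination ℝ q) '' stdSimplex ℝ (Fin (d + 1)) := by
      refine convexHull_min ?_ ((convex_stdSimplex ℝ (Fin (d + 1))).linear_image _)
      rintro _ ⟨k, rfl⟩
      exact ⟨Pi.single k 1, single_mem_stdSimplex ℝ k, by simp⟩
    obtain ⟨l, hl, rfl⟩ := hsub hx
    exact ⟨l, hl.1, hl.2, by rw [Fintype.linearCombination_apply]⟩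
  · rintro ⟨l, hl0, hl1, hl2⟩
    exact mem_convexHull_of_exists_fintype l q hl0 hl1 (fun k => ⟨k, rfl⟩) hl2

end AS3

section AS4

theorem final_core (d r N : ℕ) (hd : 2 ≤ d) (hr : 2 * d + 2 ≤ r)
    (hrp : Nat.Prime r) (hN : N = (d + 1) * (r - 1))
    (pts : Fin (N + 1) → Fin d → ℝ)
    (hinj : Function.Injective pts) (hgen : GenPos d (Set.range pts))
    (c' : Fin (N + 1) → Fin (d + 1)) (τ : Fin (N + 1) → ZMod r)
    (hcτ : ∀ v w, c' v = c' w → τ v = τ w → v = w) (x : Fin d → ℝ)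
    (hx : ∀ i, x ∈ convexHull ℝ (pts '' {v | τ v = i})) :
    2 ^ (r - 2 * d - 1) ≤ Set.ncard { P : Finset (Finset (Fin (N + 1))) |
      P.card = r ∧
      (∀ B ∈ P, ∀ B' ∈ P, B ≠ B' → Disjoint B B') ∧
      P.biUnion id = Finset.univ ∧
      (∀ B ∈ P, ∀ v ∈ B, ∀ w ∈ B, c' v = c' w → v = w) ∧
      ∀ B ∈ P, x ∈ convexHull ℝ (pts '' (B : Set (Fin (N + 1)))) } := by
  haveI : Fact r.Prime := ⟨hrp⟩
  set C : Finset (ZMod r) := Finset.univ.filter fun i => ∀ k, ∃ v, c' v = k ∧ τ v = i with hC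
  have hCmem : ∀ i, i ∈ C ↔ ∀ k, ∃ v, c' v = k ∧ τ v = i := fun i => by simp [hC]
  have hCcard : r ≤ C.card + d := by
    let Mi : Finset (Fin (d + 1) × ZMod r) := (Finset.univ.image fun v => (c' v, τ v))ᶜ
    have hMi : Mi.card = d := by
      have hi : Function.Injective fun v => (c' v, τ v) := fun v w h => by
        rw [Prod.mk.injEq] at h
        exact hcτ v w h.1 h.2
      rw [Finset.card_compl, Finset.card_image_of_injective _ hi, Finset.card_univ,
        Fintype.card_prod, ZMod.card, Fintype.card_fin, Fintype.card_fin, hN]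
      obtain ⟨r', rfl⟩ : ∃ r', r = r' + 1 := ⟨r - 1, by omega⟩
      rw [Nat.add_sub_cancel, Nat.mul_succ]
      omega
    have hsub : Cᶜ ⊆ Mi.image Prod.snd := by
      intro i hi
      rw [Finset.mem_compl, hCmem] at hi
      push Not at hi
      obtain ⟨k, hk⟩ := hi
      refine Finset.mem_image.2 ⟨(k, i), ?_, rfl⟩
      rw [Finset.mem_compl, Finset.mem_image]
      rintro ⟨v, _, hv⟩
      rw [Prod.mk.injEq] at hv
      exact hk v hv.1 hv.2
    have h1 := (Finset.card_le_card hsub).trans Finset.card_image_le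
    rw [hMi, Finset.card_compl, ZMod.card] at h1
    omega
  have hpt : ∀ (k : Fin (d + 1)) (i : {i // i ∈ C}), ∃ v, c' v = k ∧ τ v = i := fun k i =>
    (hCmem i).1 i.2 k
  choose pt hptc hptτ using hpt
  have hpt_eq : ∀ v (h : τ v ∈ C), pt (c' v) ⟨τ v, h⟩ = v := fun v h =>
    hcτ _ _ (hptc _ _) (hptτ _ _)
  have hpt_inj : ∀ k i k' i', pt k i = pt k' i' → k = k' ∧ i = i' := by
    intro k i k' i' h
    refine ⟨?_, Subtype.ext ?_⟩
    · rw [← hptc k i, h, hptc]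
    · rw [← hptτ k i, h, hptτ]
  let b : Fin (d + 1) → ℝ := Fin.snoc (α := fun _ => ℝ) x 1
  let p : Fin (d + 1) → {i // i ∈ C} → Fin (d + 1) → ℝ := fun k i =>
    Fin.snoc (α := fun _ => ℝ) (pts (pt k i)) 1
  have hsm : ∀ (s : Fin (d + 1) → {i // i ∈ C}) k,
      smat p s k = Fin.snoc (α := fun _ => ℝ) (pts (pt k (s k))) 1 := fun s k => by
    funext l; rw [smat_apply]
  have hhull : ∀ s : Fin (d + 1) → {i // i ∈ C},
      x ∈ convexHull ℝ (Set.range fun k => pts (pt k (s k))) ↔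
      ∃ l : Fin (d + 1) → ℝ, (∀ j, 0 ≤ l j) ∧ Matrix.vecMul l (smat p s) = b := fun s =>
    convexHull_coords (fun k => pts (pt k (s k))) x (smat p s) (hsm s)
  have hmain := birch_closed b (Pi.single (Fin.last d) 1) (by rw [Fintype.card_fin]; omega) p
    (fun k i => by simp [p]) (by simp [b])
    (fun i => det_ne_zero_of_genPos (by omega) pts hinj hgen (fun k => pt k i)
      (fun k k' h => (hpt_inj _ _ _ _ h).1) _ (hsm _))
    (fun i => by
      rw [← hhull]
      refine convexHull_mono ?_ (hx i)
      rintro _ ⟨v, hv, rfl⟩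
      have hv' : τ v = i := hv
      refine ⟨c' v, ?_⟩
      have h1 : τ v ∈ C := by rw [hv']; exact i.2
      have h2 := hpt_eq v h1
      have h3 : (⟨τ v, h1⟩ : {i // i ∈ C}) = i := Subtype.ext hv'
      rw [h3] at h2
      show pts (pt (c' v) i) = pts v
      rw [h2])
  refine le_trans ?_ (hmain.trans ?_)
  · refine Nat.pow_le_pow_right (by norm_num) ?_
    rw [Fintype.card_coe, Fintype.card_fin]
    omega
  let blk : (Fin (d + 1) → {i // i ∈ C}) → Finset (Fin (N + 1)) := fun s =>
    Finset.univ.image fun k => pt k (s k)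
  have hblk : ∀ s v, v ∈ blk s ↔ ∃ k, pt k (s k) = v := fun s v => by simp [blk]
  let F : ZMod r ⊕ (Fin (d + 1) → {i // i ∈ C}) → Finset (Fin (N + 1)) :=
    Sum.elim (fun i => Finset.univ.filter fun v => τ v = i) blk
  have hFl : ∀ i v, v ∈ F (Sum.inl i) ↔ τ v = i := fun i v => by simp [F]
  have hFr : ∀ s v, v ∈ F (Sum.inr s) ↔ ∃ k, pt k (s k) = v := fun s v => by
    show v ∈ blk s ↔ _
    exact hblk s v
  have hFn : ∀ a, (F a).Nonempty := by
    rintro (i | s)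
    · have : (pts '' {v | τ v = i}).Nonempty := convexHull_nonempty_iff.1 ⟨x, hx i⟩
      obtain ⟨_, v, hv, _⟩ := this
      exact ⟨v, (hFl i v).2 hv⟩
    · exact ⟨pt 0 (s 0), (hFr s _).2 ⟨0, rfl⟩⟩
  have hlr : ∀ i ∉ C, ∀ s, ∀ v, v ∈ F (Sum.inl i) → v ∈ F (Sum.inr s) → False := by
    intro i hi s v h1 h2
    rw [hFl] at h1
    obtain ⟨k, rfl⟩ := (hFr _ _).1 h2
    rw [hptτ] at h1
    exact hi (h1 ▸ (s k).2)
  let Q : Finset (Fin (d + 1) → {i // i ∈ C}) → Finset (Finset (Fin (N + 1))) := fun S =>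
    (Cᶜ.disjSum S).image F
  set H := hm (fun s => ∃ l : Fin (d + 1) → ℝ, (∀ j, 0 ≤ l j) ∧ Matrix.vecMul l (smat p s) = b)
    (Fintype.card {i // i ∈ C}) (fun _ : Fin (d + 1) => (Finset.univ : Finset {i // i ∈ C})) with hH
  have hQinj : Set.InjOn Q H := by
    have hsub : ∀ S S', Q S = Q S' → S ⊆ S' := by
      intro S S' h s hs
      have h1 : F (Sum.inr s) ∈ Q S' := by
        rw [← h]
        exact Finset.mem_image_of_mem _ (Finset.inr_mem_disjSum.2 hs)
      obtain ⟨a, ha, hae⟩ := Finset.mem_image.1 h1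
      rcases a with i | s'
      · obtain ⟨v, hv⟩ := hFn (Sum.inr s)
        exact (hlr i (by simpa using ha) s v (hae ▸ hv) hv).elim
      · have hs' : s' = s := by
          funext k
          have : pt k (s' k) ∈ F (Sum.inr s) := by
            rw [← hae]; exact (hFr _ _).2 ⟨k, rfl⟩
          obtain ⟨k', hk'⟩ := (hFr _ _).1 this
          obtain ⟨rfl, h3⟩ := hpt_inj _ _ _ _ hk'
          exact h3.symm
        rw [← hs']
        simpa using ha
    intro S _ S' _ h
    exact Finset.Subset.antisymm (hsub _ _ h) (hsub _ _ h.symm)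
  rw [← Finset.card_image_of_injOn hQinj, ← Set.ncard_coe_finset]
  refine Set.ncard_le_ncard ?_ (Set.toFinite _)
  intro P hP
  obtain ⟨S, hS, rfl⟩ := Finset.mem_image.1 (Finset.mem_coe.1 hP)
  rw [hH, mem_hm, mem_rmt] at hS
  obtain ⟨⟨hS1, _, hS2⟩, hS3⟩ := hS
  have hdisj : ∀ a ∈ Cᶜ.disjSum S, ∀ a' ∈ Cᶜ.disjSum S, ∀ v, v ∈ F a → v ∈ F a' → a = a' := by
    rintro (i | s) ha (i' | s') ha' v hv hv'
    · rw [hFl] at hv hv'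
      rw [← hv, hv']
    · exact (hlr i (by simpa using ha) s' v hv hv').elim
    · exact (hlr i' (by simpa using ha') s v hv' hv).elim
    · obtain ⟨k, rfl⟩ := (hFr _ _).1 hv
      obtain ⟨k', hk'⟩ := (hFr _ _).1 hv'
      obtain ⟨rfl, h3⟩ := hpt_inj _ _ _ _ hk'
      rw [hS2 s (by simpa using ha) s' (by simpa using ha') k' h3.symm]
  refine ⟨?_, ?_, ?_, ?_, ?_⟩
  · have hFi : Set.InjOn F (Cᶜ.disjSum S : Finset _) := by
      intro a ha a' ha' h
      obtain ⟨v, hv⟩ := hFn a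
      exact hdisj a ha a' ha' v hv (h ▸ hv)
    rw [Finset.card_image_of_injOn hFi, Finset.card_disjSum, hS1, Fintype.card_coe,
      Finset.card_compl, ZMod.card]
    have : C.card ≤ r := by
      have := Finset.card_le_univ C
      rwa [ZMod.card] at this
    omega
  · intro B hB B' hB' hne
    obtain ⟨a, ha, rfl⟩ := Finset.mem_image.1 hB
    obtain ⟨a', ha', rfl⟩ := Finset.mem_image.1 hB'
    rw [Finset.disjoint_left]
    intro v hv hv'
    exact hne (by rw [hdisj a ha a' ha' v hv hv'])
  · rw [Finset.eq_univ_iff_forall]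
    intro v
    rw [Finset.mem_biUnion]
    by_cases hv : τ v ∈ C
    · have hsurj : S.image (fun s => s (c' v)) = Finset.univ := by
        apply Finset.eq_univ_of_card
        rw [Finset.card_image_of_injOn, hS1]
        intro s hs s' hs' h
        exact hS2 s hs s' hs' _ h
      have h1 : (⟨τ v, hv⟩ : {i // i ∈ C}) ∈ S.image (fun s => s (c' v)) := by
        rw [hsurj]; exact Finset.mem_univ _
      obtain ⟨s, hs, h2⟩ := Finset.mem_image.1 h1
      refine ⟨F (Sum.inr s), Finset.mem_image_of_mem _ (Finset.inr_mem_disjSum.2 hs), ?_⟩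
      refine (hFr s v).2 ⟨c' v, ?_⟩
      rw [h2, hpt_eq]
    · exact ⟨F (Sum.inl (τ v)), Finset.mem_image_of_mem _
        (Finset.inl_mem_disjSum.2 (by simpa using hv)), (hFl _ _).2 rfl⟩
  · intro B hB v hv w hw hvw
    obtain ⟨a, ha, rfl⟩ := Finset.mem_image.1 hB
    rcases a with i | s
    · rw [hFl] at hv hw
      exact hcτ v w hvw (hv.trans hw.symm)
    · obtain ⟨k, rfl⟩ := (hFr _ _).1 hv
      obtain ⟨k', rfl⟩ := (hFr _ _).1 hw
      rw [hptc, hptc] at hvw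
      rw [hvw]
  · intro B hB
    obtain ⟨a, ha, rfl⟩ := Finset.mem_image.1 hB
    rcases a with i | s
    · refine convexHull_mono (Set.image_mono ?_) (hx i)
      intro v hv
      exact Finset.mem_coe.2 ((hFl i v).2 hv)
    · have := (hhull s).2 (hS3 s (by simpa using ha))
      refine convexHull_mono ?_ this
      rintro _ ⟨k, rfl⟩
      exact ⟨pt k (s k), Finset.mem_coe.2 ((hFr s _).2 ⟨k, rfl⟩), rfl⟩

end AS4

/-- For `d ≥ 2` and a prime `r ≥ 2d + 2`, with `N = (d+1)(r-1)`: for any affine map `f`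
on the standard `N`-simplex whose vertices are colored with `d + 2` colors with color
classes `|C_0| = … = |C_d| = r - 1`, `|C_{d+1}| = 1`, and whose `N + 1` vertex images are
in general position, the number of unordered colored Tverberg partitions satisfies
`T(f) ≥ 2^(r - 2d - 1)`. -/
theorem tverbergCount_lower_bound (d r N : ℕ) (hd : 2 ≤ d) (hr : 2 * d + 2 ≤ r)
    (hrp : Nat.Prime r) (hN : N = (d + 1) * (r - 1))
    (f : (Fin (N + 1) → ℝ) →ᵃ[ℝ] (Fin d → ℝ))
    (c : Fin (N + 1) → Fin (d + 2))
    (hc : ∀ j : Fin (d + 2),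
      (Finset.univ.filter fun i => c i = j).card = if (j : ℕ) = d + 1 then 1 else r - 1)
    (hinj : Function.Injective fun i : Fin (N + 1) => f (Pi.single i 1))
    (hgen : GenPos d (Set.range fun i : Fin (N + 1) => f (Pi.single i 1))) :
    2 ^ (r - 2 * d - 1) ≤ tverbergCount d N r f c := by
  obtain ⟨τ, hτ, ⟨x, hx⟩, vs, hvs, k0, hk0⟩ := ex_tau2 d r N hrp (by omega)
    (fun i => f (Pi.single i 1)) hinj c hc
  have hex : ∀ v, ∃ k : Fin (d + 1), (v = vs ∧ k = k0) ∨ (v ≠ vs ∧ c v = Fin.castSucc k) := by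
    intro v
    by_cases hv : v = vs
    · exact ⟨k0, Or.inl ⟨hv, rfl⟩⟩
    · rcases Fin.eq_castSucc_or_eq_last (c v) with ⟨k, hk⟩ | hk
      · exact ⟨k, Or.inr ⟨hv, hk⟩⟩
      · exact absurd ((hvs v).1 hk) hv
  choose c' hc' using hex
  have hcc : ∀ v w, c v = c w → c' v = c' w := by
    intro v w h
    rcases hc' v with ⟨h1, h2⟩ | ⟨h1, h2⟩ <;> rcases hc' w with ⟨h3, h4⟩ | ⟨h3, h4⟩
    · rw [h2, h4]
    · exact absurd ((hvs w).1 (by rw [← h, (hvs v).2 h1])) h3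
    · exact absurd ((hvs v).1 (by rw [h, (hvs w).2 h3])) h1
    · exact Fin.castSucc_injective _ (by rw [← h2, ← h4, h])
  have hcτ : ∀ v w, c' v = c' w → τ v = τ w → v = w := by
    intro v w h ht
    rcases hc' v with ⟨h1, h2⟩ | ⟨h1, h2⟩ <;> rcases hc' w with ⟨h3, h4⟩ | ⟨h3, h4⟩
    · rw [h1, h3]
    · exact absurd (by rw [← ht, h1]) (hk0 w (by rw [h4, ← h, h2]))
    · exact absurd (by rw [ht, h3]) (hk0 v (by rw [h2, h, h4]))
    · exact hτ v w (by rw [h2, h4, h]) ht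
  refine (final_core d r N hd hr hrp hN (fun i => f (Pi.single i 1)) hinj hgen c' τ hcτ x hx).trans ?_
  refine Set.ncard_le_ncard ?_ (Set.toFinite _)
  rintro P ⟨h1, h2, h3, h4, h5⟩
  refine ⟨h1, h2, h3, fun B hB j => ?_, x, h5⟩
  rw [Finset.card_le_one]
  intro v hv w hw
  rw [Finset.mem_filter] at hv hw
  exact h4 B hB v hv.1 w hw.1 (hcc v w (hv.2.trans hw.2.symm))
end

section
/- Let d ≥ 2 and let X be a set of 2(d+1) points in ℝ^d partitioned into d+1 color classes C_0, …, C_d of exactly 2 points each, with X ∪ {0} in general position. Then the number of rainbow (d+1)-element subsets of X whose convex hull contains the origin is even. -/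
open scoped Classical

lemma comb_odd {ι : Type} [Fintype ι] [Nonempty ι] (t c : ι → ℝ) (ht : Function.Injective t)
    (hc : ∀ i, c i ≠ 0) :
    ((Finset.univ.filter (fun i => ∀ j, 0 ≤ (t j - t i) * c j)).card : ZMod 2) =
      if (∀ i, 0 < c i) ∨ (∀ i, c i < 0) then 1 else 0 := by
  by_cases hp : ∀ i, 0 < c i
  · obtain ⟨a, -, ha⟩ := Finset.exists_min_image Finset.univ t Finset.univ_nonempty
    have : Finset.univ.filter (fun i => ∀ j, 0 ≤ (t j - t i) * c j) = {a} := by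
      ext i
      simp only [Finset.mem_filter, Finset.mem_univ, true_and, Finset.mem_singleton]
      constructor
      · intro h
        have h1 := nonneg_of_mul_nonneg_left (h a) (hp a)
        exact ht (le_antisymm (by linarith) (ha i (Finset.mem_univ _)))
      · rintro rfl j
        exact mul_nonneg (sub_nonneg.2 (ha j (Finset.mem_univ _))) (hp j).le
    rw [this, if_pos (Or.inl hp)]; simp
  by_cases hn : ∀ i, c i < 0
  · obtain ⟨a, -, ha⟩ := Finset.exists_max_image Finset.univ t Finset.univ_nonempty
    have : Finset.univ.filter (fun i => ∀ j, 0 ≤ (t j - t i) * c j) = {a} := by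
      ext i
      simp only [Finset.mem_filter, Finset.mem_univ, true_and, Finset.mem_singleton]
      constructor
      · intro h
        have h1 : t a - t i ≤ 0 := by
          by_contra hh
          have := mul_neg_of_pos_of_neg (not_le.1 hh) (hn a)
          linarith [h a]
        exact ht (le_antisymm (ha i (Finset.mem_univ _)) (by linarith))
      · rintro rfl j
        exact mul_nonneg_of_nonpos_of_nonpos (sub_nonpos.2 (ha j (Finset.mem_univ _))) (hn j).le
    rw [this, if_pos (Or.inr hn)]; simp
  rw [if_neg (by tauto)]
  push Not at hp hn
  obtain ⟨n0, hn0⟩ := hp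
  obtain ⟨p0, hp0⟩ := hn
  obtain ⟨a, ha, hamin⟩ := Finset.exists_min_image (Finset.univ.filter (fun i => 0 < c i)) t
    ⟨p0, by simpa using lt_of_le_of_ne hp0 (hc p0).symm⟩
  obtain ⟨b, hb, hbmax⟩ := Finset.exists_max_image (Finset.univ.filter (fun i => c i < 0)) t
    ⟨n0, by simpa using lt_of_le_of_ne hn0 (hc n0)⟩
  simp only [Finset.mem_filter, Finset.mem_univ, true_and] at ha hb hamin hbmax
  have key : ∀ i, (∀ j, 0 ≤ (t j - t i) * c j) ↔ (t i ≤ t a ∧ t b ≤ t i) := by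
    intro i
    constructor
    · intro h
      refine ⟨?_, ?_⟩
      · have h1 := nonneg_of_mul_nonneg_left (h a) ha
        linarith
      · by_contra hh
        have := mul_neg_of_pos_of_neg (sub_pos.2 (not_le.1 hh)) hb
        linarith [h b]
    · rintro ⟨h1, h2⟩ j
      rcases lt_or_gt_of_ne (hc j) with hj | hj
      · exact mul_nonneg_of_nonpos_of_nonpos (by linarith [hbmax j hj]) hj.le
      · exact mul_nonneg (by linarith [hamin j hj]) hj.le
  have hab : a ≠ b := by rintro rfl; linarith
  simp only [key]
  by_cases hlt : t b ≤ t a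
  · have : Finset.univ.filter (fun i => t i ≤ t a ∧ t b ≤ t i) = {a, b} := by
      ext i
      simp only [Finset.mem_filter, Finset.mem_univ, true_and, Finset.mem_singleton,
        Finset.mem_insert]
      constructor
      · rintro ⟨h1, h2⟩
        rcases lt_or_gt_of_ne (hc i) with hj | hj
        · right; exact ht (le_antisymm (hbmax i hj) h2)
        · left; exact ht (le_antisymm h1 (hamin i hj))
      · rintro (rfl | rfl)
        · exact ⟨le_rfl, hlt⟩
        · exact ⟨hlt, le_rfl⟩
    rw [this, Finset.card_pair hab]; rfl
  · have : Finset.univ.filter (fun i => t i ≤ t a ∧ t b ≤ t i) = ∅ := by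
      ext i
      simp only [Finset.mem_filter, Finset.mem_univ, true_and, Finset.notMem_empty, iff_false]
      rintro ⟨h1, h2⟩
      exact hlt (h2.trans h1)
    rw [this]; simp

/-- `v` lies in the cone of the vectors `p j`, `j ≠ i`. -/
def Door {d : ℕ} (v : Fin d → ℝ) (p : Fin (d + 1) → Fin d → ℝ) (i : Fin (d + 1)) : Prop :=
  ∃ l : Fin (d + 1) → ℝ, l i = 0 ∧ (∀ j, 0 ≤ l j) ∧ ∑ j, l j • p j = v

lemma core {d : ℕ} (v : Fin d → ℝ) (p : Fin (d + 1) → Fin d → ℝ)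
    (hind : ∀ c : Fin (d + 1) → ℝ, ∑ j, c j • p j = 0 → ∀ i, c i = 0 → c = 0)
    (hv : ∀ c : Fin (d + 1) → ℝ, ∀ i j, i ≠ j → c i = 0 → c j = 0 → ∑ j, c j • p j ≠ v) :
    ((Finset.univ.filter (fun i => Door v p i)).card : ZMod 2) =
      if (0 : Fin d → ℝ) ∈ convexHull ℝ (Set.range p) then 1 else 0 := by
  obtain ⟨c, hc0, hcne⟩ : ∃ c : Fin (d + 1) → ℝ, ∑ j, c j • p j = 0 ∧ c ≠ 0 := by
    have := LinearMap.ker_ne_bot_of_finrank_lt (f := Fintype.linearCombination ℝ p) (by simp)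
    obtain ⟨c, hc, hne⟩ := (Submodule.ne_bot_iff _).1 this
    exact ⟨c, by simpa [Fintype.linearCombination_apply] using hc, hne⟩
  have hc : ∀ i, c i ≠ 0 := fun i hi => hcne (hind c hc0 i hi)
  obtain ⟨m, hm⟩ : ∃ m : Fin (d + 1) → ℝ, ∑ j, m j • p j = v := by
    have hinj : Function.Injective
        (Fintype.linearCombination ℝ (fun j : Fin d => p j.succ)) := by
      rw [← LinearMap.ker_eq_bot, LinearMap.ker_eq_bot']
      intro l hl
      rw [Fintype.linearCombination_apply] at hl
      have := hind (Fin.cons 0 l) (by simpa [Fin.sum_univ_succ] using hl) 0 (by simp)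
      ext j
      simpa using congrFun this j.succ
    obtain ⟨l, hl⟩ := (LinearMap.injective_iff_surjective.1 hinj) v
    rw [Fintype.linearCombination_apply] at hl
    exact ⟨Fin.cons 0 l, by simpa [Fin.sum_univ_succ] using hl⟩
  -- uniqueness of relations
  have huniq : ∀ w : Fin (d + 1) → ℝ, ∑ j, w j • p j = 0 → ∀ i j, w j = w i / c i * c j := by
    intro w hw i j
    have := hind (fun j => w j - w i / c i * c j) (by
      simp only [sub_smul, Finset.sum_sub_distrib, mul_smul, ← Finset.smul_sum, hc0, hw]
      simp) i (by field_simp [hc i]; simp)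
    have := congrFun this j
    simp only [Pi.zero_apply] at this
    linarith
  have hsol : ∀ s : ℝ, ∑ j, (m j - s * c j) • p j = v := by
    intro s
    simp only [sub_smul, Finset.sum_sub_distrib, mul_smul, ← Finset.smul_sum, hc0, hm]
    simp
  have hdoor : ∀ i, Door v p i ↔ ∀ j, 0 ≤ (m j / c j - m i / c i) * c j := by
    intro i
    have e : ∀ j, (m j / c j - m i / c i) * c j = m j - m i / c i * c j := by
      intro j
      rw [sub_mul, div_mul_cancel₀ _ (hc j)]
    simp only [e]
    constructor
    · rintro ⟨l, hl, hl0, hlv⟩ j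
      have := huniq (fun j => m j - l j) (by
        simp only [sub_smul, Finset.sum_sub_distrib, hm, hlv, sub_self]) i j
      simp only [hl, sub_zero] at this
      linarith [hl0 j]
    · intro h
      exact ⟨fun j => m j - m i / c i * c j, by simp [div_mul_cancel₀ _ (hc i)], h, hsol _⟩
  have ht : Function.Injective (fun i => m i / c i) := by
    intro i j hij
    by_contra hne
    refine hv (fun k => m k - m i / c i * c k) i j hne (by simp [div_mul_cancel₀ _ (hc i)]) ?_
      (hsol _)
    simp only at hij
    simp [hij, div_mul_cancel₀ _ (hc j)]
  have hconv : (0 : Fin d → ℝ) ∈ convexHull ℝ (Set.range p) ↔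
      (∀ i, 0 < c i) ∨ (∀ i, c i < 0) := by
    have pos : ∀ w : Fin (d + 1) → ℝ, ∑ j, w j • p j = 0 → (∀ i, 0 < w i) →
        (0 : Fin d → ℝ) ∈ convexHull ℝ (Set.range p) := by
      intro w hw hpos
      have := Finset.centerMass_mem_convexHull (R := ℝ) (Finset.univ) (w := w) (z := p)
        (s := Set.range p) (fun i _ => (hpos i).le)
        (Finset.sum_pos (fun i _ => hpos i) Finset.univ_nonempty) (fun i _ => ⟨i, rfl⟩)
      rwa [Finset.centerMass, hw, smul_zero] at this
    constructor
    · intro h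
      rw [convexHull_range_eq_exists_affineCombination] at h
      obtain ⟨s, w, hw0, hw1, hws⟩ := h
      rw [Finset.affineCombination_eq_linear_combination _ _ _ hw1] at hws
      set w' : Fin (d + 1) → ℝ := fun i => if i ∈ s then w i else 0 with hw'
      have h1 : ∑ i, w' i • p i = 0 := by
        simp only [hw', ite_smul, zero_smul, Finset.sum_ite_mem, Finset.univ_inter, hws]
      have h2 : ∑ i, w' i = 1 := by
        simp only [hw', Finset.sum_ite_mem, Finset.univ_inter, hw1]
      have h3 : ∀ i, 0 ≤ w' i := by
        intro i
        simp only [hw']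
        split_ifs with hi
        · exact hw0 i hi
        · exact le_rfl
      have h4 : ∀ i, 0 < w' i := by
        intro i
        refine lt_of_le_of_ne (h3 i) fun hi => ?_
        have := hind w' h1 i hi.symm
        simp [this] at h2
      have h5 := fun j => huniq w' h1 0 j
      rcases lt_or_gt_of_ne (hc 0) with h | h
      · right
        intro j
        by_contra hj
        have := mul_nonpos_of_nonpos_of_nonneg (div_neg_of_pos_of_neg (h4 0) h).le (not_lt.1 hj)
        linarith [h5 j, h4 j]
      · left
        intro j
        by_contra hj
        have := mul_nonpos_of_nonneg_of_nonpos (div_pos (h4 0) h).le (not_lt.1 hj)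
        linarith [h5 j, h4 j]
    · rintro (h | h)
      · exact pos c hc0 h
      · exact pos (fun i => - c i) (by simp [hc0]) (fun i => by simpa using h i)
  have := comb_odd (fun i => m i / c i) c ht hc
  simp only [hdoor, hconv]
  convert this

lemma finrank_W {d : ℕ} (p : Fin (d + 1) → Fin d → ℝ) (i j : Fin (d + 1)) (hij : i ≠ j)
    (hd : 2 ≤ d) :
    Module.finrank ℝ (Submodule.span ℝ
      (((((Finset.univ.erase i).erase j).image p : Finset (Fin d → ℝ)) :
        Set (Fin d → ℝ)))) ≤ d - 1 := by
  refine (finrank_span_finset_le_card _).trans (Finset.card_image_le.trans ?_)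
  rw [Finset.card_erase_of_mem (by simp [hij.symm]), Finset.card_erase_of_mem (by simp)]
  simp

lemma W_ne_top {d : ℕ} (hd : 2 ≤ d) (W : Submodule ℝ (Fin d → ℝ))
    (h : Module.finrank ℝ W ≤ d - 1) : W ≠ ⊤ := by
  rintro rfl
  simp at h
  omega

lemma exists_hyper {d : ℕ} (hd : 2 ≤ d) (W : Submodule ℝ (Fin d → ℝ))
    (h : Module.finrank ℝ W ≤ d - 1) :
    ∃ W' : Submodule ℝ (Fin d → ℝ), W ≤ W' ∧ Module.finrank ℝ W' = d - 1 := by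
  obtain ⟨f, hf, hW⟩ := Submodule.exists_le_ker_of_lt_top W (W_ne_top hd W h).lt_top
  refine ⟨LinearMap.ker f, hW, ?_⟩
  have := f.finrank_range_add_finrank_ker
  rw [LinearMap.range_eq_top.2 (LinearMap.surjective hf)] at this
  simp at this
  omega

lemma mem_W {d : ℕ} (p : Fin (d + 1) → Fin d → ℝ) (i k : Fin (d + 1))
    (c : Fin (d + 1) → ℝ) (hi : c i = 0) (hk : c k = 0) :
    ∑ j, c j • p j ∈ Submodule.span ℝ
      (((((Finset.univ.erase i).erase k).image p : Finset (Fin d → ℝ)) :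
        Set (Fin d → ℝ))) := by
  refine Submodule.sum_mem _ fun j _ => ?_
  by_cases h1 : j = i
  · simp [h1, hi]
  by_cases h2 : j = k
  · simp [h2, hk]
  refine Submodule.smul_mem _ _ (Submodule.subset_span ?_)
  simp only [Finset.coe_image]
  exact ⟨j, by simp [h1, h2], rfl⟩

lemma ind_of_gen {d : ℕ} (hd : 2 ≤ d) (P : Set (Fin d → ℝ)) (hgen : GenPos d P)
    (h0 : (0 : Fin d → ℝ) ∈ P) (p : Fin (d + 1) → Fin d → ℝ) (hp : ∀ i, p i ∈ P)
    (hp0 : ∀ i, p i ≠ 0) (hinj : Function.Injective p) (c : Fin (d + 1) → ℝ)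
    (hc : ∑ j, c j • p j = 0) (i : Fin (d + 1)) (hi : c i = 0) : c = 0 := by
  by_contra hne
  obtain ⟨k, hk⟩ := Function.ne_iff.1 hne
  simp only [Pi.zero_apply] at hk
  have hik : i ≠ k := by rintro rfl; exact hk hi
  obtain ⟨W', hW, hfr⟩ := exists_hyper hd _ (finrank_W p i k hik hd)
  refine hgen (d - 1) (by omega) (insert 0 ((Finset.univ.erase i).image p)) ?_ ?_
    ⟨W'.toAffineSubspace, ?_, ?_⟩
  · intro x hx
    simp only [Finset.coe_insert, Finset.coe_image, Set.mem_insert_iff, Set.mem_image] at hx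
    rcases hx with rfl | ⟨j, -, rfl⟩
    · exact h0
    · exact hp j
  · rw [Finset.card_insert_of_notMem (by simp [hp0]), Finset.card_image_of_injective _ hinj,
      Finset.card_erase_of_mem (by simp)]
    simp
    omega
  · rw [Submodule.toAffineSubspace_direction]; exact hfr
  · intro x hx
    simp only [Finset.coe_insert, Finset.coe_image, Set.mem_insert_iff, Set.mem_image] at hx
    simp only [SetLike.mem_coe, Submodule.mem_toAffineSubspace]
    rcases hx with rfl | ⟨j, hj, rfl⟩
    · exact W'.zero_mem
    · have hji : j ≠ i := by simpa using hj
      apply hW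
      by_cases hjk : j = k
      · subst hjk
        have h1 := mem_W p i j (fun l => if l = j then 0 else - (c l / c j)) (by simp [hi]) (by simp)
        convert h1
        have h2 : ∑ l, (if l = j then 0 else - (c l / c j)) • p l
            = ∑ l, ((if l = j then p l else 0) - (c j)⁻¹ • (c l • p l)) := by
          refine Finset.sum_congr rfl fun l _ => ?_
          split_ifs with h
          · subst h
            rw [smul_smul, inv_mul_cancel₀ hk]; simp
          · rw [smul_smul, neg_smul, zero_sub, div_eq_inv_mul]
        rw [h2, Finset.sum_sub_distrib, ← Finset.smul_sum, hc]
        simp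
      · apply Submodule.subset_span
        simp only [Finset.coe_image]
        exact ⟨j, by simp [hji, hjk], rfl⟩

theorem even_rainbow_simplices (d : ℕ) (hd : 2 ≤ d)
    (X : Finset (Fin d → ℝ)) (C : Fin (d + 1) → Finset (Fin d → ℝ))
    (hXcard : X.card = 2 * (d + 1))
    (hccard : ∀ i : Fin (d + 1), (C i).card = 2)
    (hcdisj : ∀ i j : Fin (d + 1), i ≠ j → Disjoint (C i) (C j))
    (hX : X = Finset.univ.biUnion C)
    (h0X : (0 : Fin d → ℝ) ∉ X)
    (hgen : GenPos d (↑X ∪ {0})) :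
    Even (Set.ncard { B : Finset (Fin d → ℝ) | B ⊆ X ∧ B.card = d + 1 ∧
      (∀ i : Fin (d + 1), (B ∩ C i).card ≤ 1) ∧
      (0 : Fin d → ℝ) ∈ convexHull ℝ (B : Set (Fin d → ℝ)) }) := by
  have hq : ∀ i, ∃ q : Bool → (Fin d → ℝ), Function.Injective q ∧
      ∀ x, x ∈ C i ↔ ∃ b, q b = x := by
    intro i
    obtain ⟨x, y, hxy, h⟩ := Finset.card_eq_two.1 (hccard i)
    refine ⟨fun b => if b then x else y, ?_, ?_⟩
    · intro a b
      cases a <;> cases b <;> simp [hxy, hxy.symm]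
    · intro z
      rw [h]
      simp [eq_comm, or_comm]
  choose q hqinj hqC using hq
  have hqmem : ∀ i b, q i b ∈ C i := fun i b => (hqC i _).2 ⟨b, rfl⟩
  have hCX : ∀ i, C i ⊆ X := by
    intro i; rw [hX]; exact Finset.subset_biUnion_of_mem C (Finset.mem_univ i)
  have hqi : ∀ i j x, x ∈ C i → x ∈ C j → i = j := by
    intro i j x h1 h2
    by_contra h
    exact Finset.disjoint_left.1 (hcdisj i j h) h1 h2
  let P : (Fin (d + 1) → Bool) → Fin (d + 1) → (Fin d → ℝ) := fun f i => q i (f i)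
  have hPinj : ∀ f, Function.Injective (P f) := by
    intro f i j h
    exact hqi i j (P f i) (hqmem _ _) (h ▸ hqmem _ _)
  have hind : ∀ f, ∀ c : Fin (d + 1) → ℝ, ∑ j, c j • P f j = 0 → ∀ i, c i = 0 → c = 0 := by
    intro f c hc i hi
    refine ind_of_gen hd _ hgen (by simp) (P f) (fun i => Or.inl (hCX i (hqmem _ _))) ?_
      (hPinj f) c hc i hi
    intro i h
    exact h0X (h ▸ hCX i (hqmem i (f i)))
  obtain ⟨v, hv⟩ : ∃ v : Fin d → ℝ, ∀ f, ∀ c : Fin (d + 1) → ℝ, ∀ i j, i ≠ j → c i = 0 → c j = 0 →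
      ∑ j, c j • P f j ≠ v := by
    let W : {x : (Fin (d + 1) → Bool) × Fin (d + 1) × Fin (d + 1) // x.2.1 ≠ x.2.2} →
        Submodule ℝ (Fin d → ℝ) := fun x => Submodule.span ℝ
      (((((Finset.univ.erase x.1.2.1).erase x.1.2.2).image (P x.1.1) : Finset (Fin d → ℝ)) :
        Set (Fin d → ℝ)))
    have hU : (⋃ x, (W x : Set (Fin d → ℝ))) ≠ Set.univ := by
      intro h
      obtain ⟨x, hx⟩ := Subspace.exists_eq_top_of_iUnion_eq_univ h
      exact W_ne_top hd _ (finrank_W _ _ _ x.2 hd) hx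
    obtain ⟨v, hv⟩ := (Set.ne_univ_iff_exists_notMem _).1 hU
    refine ⟨v, fun f c i j hij hi hj h => hv ?_⟩
    rw [Set.mem_iUnion]
    refine ⟨⟨(f, i, j), hij⟩, ?_⟩
    rw [← h]
    exact mem_W (P f) i j c hi hj
  have hcore := fun f => core v (P f) (hind f) (hv f)
  -- bijection
  let G : Finset (Fin (d + 1) → Bool) :=
    Finset.univ.filter fun f => (0 : Fin d → ℝ) ∈ convexHull ℝ (Set.range (P f))
  have hset : { B : Finset (Fin d → ℝ) | B ⊆ X ∧ B.card = d + 1 ∧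
      (∀ i : Fin (d + 1), (B ∩ C i).card ≤ 1) ∧
      (0 : Fin d → ℝ) ∈ convexHull ℝ (B : Set (Fin d → ℝ)) } =
      (fun f => Finset.univ.image (P f)) '' (G : Set (Fin (d + 1) → Bool)) := by
    ext B
    simp only [Set.mem_setOf_eq, Set.mem_image, Finset.mem_coe, G, Finset.mem_filter,
      Finset.mem_univ, true_and]
    constructor
    · rintro ⟨hBX, hBc, hBi, hB0⟩
      have hBu : B = Finset.univ.biUnion fun i => B ∩ C i := by
        rw [← Finset.inter_biUnion, ← hX, Finset.inter_eq_left.2 hBX]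
      have hsum : ∑ i, (B ∩ C i).card = ∑ i : Fin (d + 1), 1 := by
        apply le_antisymm (Finset.sum_le_sum fun i _ => hBi i)
        calc ∑ i : Fin (d + 1), 1 = B.card := by simp [hBc]
          _ ≤ _ := by
            conv_lhs => rw [hBu]
            exact Finset.card_biUnion_le
      have hone := (Finset.sum_eq_sum_iff_of_le fun i _ => hBi i).1 hsum
      have : ∀ i, ∃ b, q i b ∈ B := by
        intro i
        have h1 : (B ∩ C i).Nonempty := by
          rw [← Finset.card_pos, hone i (Finset.mem_univ _)]; norm_num
        obtain ⟨x, hx⟩ := h1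
        rw [Finset.mem_inter] at hx
        obtain ⟨b, rfl⟩ := (hqC i x).1 hx.2
        exact ⟨b, hx.1⟩
      choose f hf using this
      have hfB : Finset.univ.image (P f) = B := by
        apply Finset.eq_of_subset_of_card_le
        · intro x hx
          obtain ⟨i, -, rfl⟩ := Finset.mem_image.1 hx
          exact hf i
        · rw [Finset.card_image_of_injective _ (hPinj f), hBc]; simp
      refine ⟨f, ?_, hfB⟩
      rw [← hfB] at hB0
      simpa using hB0
    · rintro ⟨f, hf, rfl⟩
      refine ⟨?_, ?_, ?_, by simpa using hf⟩
      · intro x hx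
        obtain ⟨i, -, rfl⟩ := Finset.mem_image.1 hx
        exact hCX i (hqmem _ _)
      · rw [Finset.card_image_of_injective _ (hPinj f)]; simp
      · intro i
        rw [Finset.card_le_one]
        intro x hx y hy
        simp only [Finset.mem_inter, Finset.mem_image, Finset.mem_univ, true_and] at hx hy
        obtain ⟨⟨j, rfl⟩, hj⟩ := hx
        obtain ⟨⟨k, rfl⟩, hk⟩ := hy
        rw [hqi _ _ _ (hqmem j (f j)) hj, hqi _ _ _ (hqmem k (f k)) hk]
  have hinj : Function.Injective (fun f => Finset.univ.image (P f)) := by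
    intro f g h
    funext i
    have h1 : P f i ∈ Finset.univ.image (P g) := by
      have h' : Finset.univ.image (P f) = Finset.univ.image (P g) := h
      rw [← h']; exact Finset.mem_image_of_mem _ (Finset.mem_univ _)
    obtain ⟨j, -, hj⟩ := Finset.mem_image.1 h1
    have hji : j = i := hqi j i (P g j) (hqmem _ _) (hj ▸ hqmem _ _)
    subst hji
    exact (hqinj j hj).symm
  rw [hset, Set.ncard_image_of_injective _ hinj, Set.ncard_coe_finset]
  rw [← ZMod.natCast_eq_zero_iff_even]
  have h1 : (G.card : ZMod 2) = ∑ f, ∑ i, if Door v (P f) i then (1 : ZMod 2) else 0 := by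
    simp only [G, Finset.card_filter, Nat.cast_sum, Nat.cast_ite, Nat.cast_one, Nat.cast_zero]
    refine Finset.sum_congr rfl fun f _ => ?_
    rw [← hcore f]
    simp
  rw [h1, Finset.sum_comm]
  refine Finset.sum_eq_zero fun i _ => ?_
  have hup : ∀ f : Fin (d + 1) → Bool,
      Door v (P (Function.update f i (!f i))) i ↔ Door v (P f) i := by
    intro f
    unfold Door
    refine exists_congr fun l => and_congr_right fun hl => and_congr_right fun _ => ?_
    have : ∑ j, l j • P (Function.update f i (!f i)) j = ∑ j, l j • P f j := by
      refine Finset.sum_congr rfl fun j _ => ?_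
      by_cases hj : j = i
      · subst hj; simp [hl]
      · simp [P, Function.update_of_ne hj]
    rw [this]
  refine Finset.sum_involution (fun f _ => Function.update f i (!f i)) ?_ ?_ ?_ ?_
  · intro f _
    simp only [hup]
    exact CharTwo.add_self_eq_zero _
  · intro f _ _ h
    have := congrFun h i
    simp at this
  · intro f _; exact Finset.mem_univ _
  · intro f _
    simp
end

section
/- Let d ≥ 1, let S be a set of d points in ℝ^d, and let q ∈ ℝ^d be a point such that the set S ∪ {q} ∪ {0} (of d+2 points) is in general position. Then the origin 0 lies in the convex hull of S ∪ {q} if and only if −q lies in the convex cone generated by S (the set of all nonnegative linear combinations of points of S). -/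
open scoped Classical

/-- For `d ≥ 1`, a set `S` of `d` points in `ℝ^d` and a point `q` such that the `d + 2`
points of `S ∪ {q} ∪ {0}` are in general position: the origin lies in the convex hull of
`S ∪ {q}` if and only if `-q` lies in the convex cone generated by `S`. -/
theorem origin_mem_convexHull_iff_neg_mem_cone (d : ℕ) (hd : 1 ≤ d)
    (S : Finset (Fin d → ℝ)) (hS : S.card = d)
    (q : Fin d → ℝ) (hqS : q ∉ S) (h0S : (0 : Fin d → ℝ) ∉ S) (hq0 : q ≠ 0)
    (hgen : GenPos d ((↑S ∪ {q}) ∪ {0})) :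
    (0 : Fin d → ℝ) ∈ convexHull ℝ (↑S ∪ {q} : Set (Fin d → ℝ)) ↔
      ∃ lam : (Fin d → ℝ) → ℝ, (∀ s ∈ S, 0 ≤ lam s) ∧ -q = ∑ s ∈ S, lam s • s := by
  have hset : (↑S ∪ {q} : Set (Fin d → ℝ)) = ((insert q S : Finset (Fin d → ℝ)) : Set (Fin d → ℝ)) := by
    ext x; simp [or_comm]
  rw [hset, Finset.mem_convexHull']
  simp only [Finset.sum_insert hqS]
  constructor
  · rintro ⟨w, hw, hw1, hw0⟩
    have hwq : 0 ≤ w q := hw q (Finset.mem_insert_self _ _)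
    have hwS : ∀ s ∈ S, 0 ≤ w s := fun s hs => hw s (Finset.mem_insert_of_mem hs)
    have hne : w q ≠ 0 := by
      intro h0
      rw [h0, zero_add] at hw1
      rw [h0, zero_smul, zero_add] at hw0
      have hlt : Submodule.span ℝ (S : Set (Fin d → ℝ)) < ⊤ := by
        rw [lt_top_iff_ne_top]
        intro htop
        have hli : LinearIndependent ℝ (fun x : S => (x : Fin d → ℝ)) := by
          apply linearIndependent_of_top_le_span_of_card_eq_finrank
          · have : Set.range (fun x : S => (x : Fin d → ℝ)) = (S : Set (Fin d → ℝ)) := by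
              ext x; simp
            rw [this, htop]
          · simp [hS]
        have hz := Fintype.linearIndependent_iff.1 hli (fun x => w x) (by
          rw [← hw0]
          exact Finset.sum_coe_sort S (fun x => w x • x))
        have : ∑ s ∈ S, w s = 0 := Finset.sum_eq_zero fun s hs => hz ⟨s, hs⟩
        rw [this] at hw1
        exact zero_ne_one hw1
      obtain ⟨f, hf, hle⟩ := Submodule.exists_le_ker_of_lt_top _ hlt
      have hk := Module.Dual.finrank_ker_add_one_of_ne_zero hf
      rw [Module.finrank_fin_fun] at hk
      refine hgen (d - 1) (by omega) (insert 0 S) ?_ ?_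
        ⟨(LinearMap.ker f).toAffineSubspace, ?_, ?_⟩
      · intro x hx
        simp at hx ⊢
        tauto
      · rw [Finset.card_insert_of_notMem h0S]; omega
      · rw [Submodule.toAffineSubspace_direction]; omega
      · intro x hx
        rcases Finset.mem_insert.1 (Finset.mem_coe.1 hx) with rfl | hx
        · simp
        · exact hle (Submodule.subset_span hx)
    refine ⟨fun s => (w q)⁻¹ * w s, fun s hs => mul_nonneg (inv_nonneg.2 hwq) (hwS s hs), ?_⟩
    simp only [mul_smul]
    rw [← Finset.smul_sum, ← neg_eq_of_add_eq_zero_right hw0, smul_neg, smul_smul,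
      inv_mul_cancel₀ hne, one_smul]
  · rintro ⟨l, hl, hlq⟩
    have hs0 : 0 ≤ ∑ s ∈ S, l s := Finset.sum_nonneg hl
    have hpos : 0 < 1 + ∑ s ∈ S, l s := by linarith
    have hcong : ∀ s ∈ S, (if s = q then (1 : ℝ) else l s) = l s := fun s hs =>
      if_neg (fun h : s = q => hqS (h ▸ hs))
    refine ⟨fun s => (1 + ∑ s ∈ S, l s)⁻¹ * (if s = q then 1 else l s), ?_, ?_, ?_⟩
    · intro y hy
      refine mul_nonneg (inv_nonneg.2 hpos.le) ?_
      split_ifs with h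
      · exact zero_le_one
      · exact hl y ((Finset.mem_insert.1 hy).resolve_left h)
    · rw [← Finset.mul_sum, Finset.sum_congr rfl hcong]
      simp only [if_true]
      rw [← mul_add, mul_one_add, ← mul_one_add, inv_mul_cancel₀ hpos.ne']
    · have hc2 : ∑ s ∈ S, (if s = q then (1 : ℝ) else l s) • s = ∑ s ∈ S, l s • s :=
        Finset.sum_congr rfl (fun s hs => by rw [hcong s hs])
      simp only [mul_smul]
      rw [← Finset.smul_sum, hc2, ← hlq]
      simp
end
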